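/- arXiv:2006.13867 — 2 statements merged into one kernel-verified Lean document; each statement's English description precedes it below -/
import Mathlib

section
/- Assume that S_ξ ⊆ Ω for every ξ ∈ K. Then ū^K : ℝⁿ → ℝ is a convex function of class C^{1,1} satisfying ∇ū^K(ℝⁿ) = ∇ū^K(Ω) = K. Moreover, for every x ∈ ℝⁿ the set H(x, ∇ū^K(x), K) is nonempty, and for every matrix H_x ∈ H(x, ∇ū^K(x), K) one has, as x' → x, ū^K(x') ≤ ū^K(x) + ∇ū^K(x)·(x'−x) + (1/2)(x'−x)ᵀ H_x (x'−x) + o(|x'−x|²). -/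
open MeasureTheory Metric Set Asymptotics
open scoped RealInnerProductSpace Topology

noncomputable section

abbrev Euc (n : ℕ) := EuclideanSpace ℝ (Fin n)

/-- The `K`-envelope of `u`. -/
def KEnv {n : ℕ} (K Ω : Set (Euc n)) (u : Euc n → ℝ) (x : Euc n) : ℝ :=
  sSup {z : ℝ | ∃ a : ℝ, ∃ ξ ∈ K, (∀ y ∈ closure Ω, a + ⟪ξ, y⟫ ≤ u y) ∧ z = a + ⟪ξ, x⟫}

/-- The set of minimizers `S_ξ = argmin_{x ∈ cl Ω} (u x − ξ·x)`. -/
def Sset {n : ℕ} (Ω : Set (Euc n)) (u : Euc n → ℝ) (ξ : Euc n) : Set (Euc n) :=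
  {x ∈ closure Ω | ∀ y ∈ closure Ω, u x - ⟪ξ, x⟫ ≤ u y - ⟪ξ, y⟫}

/-- The normal cone of `K` at `ξ`. -/
def normalCone {n : ℕ} (K : Set (Euc n)) (ξ : Euc n) : Set (Euc n) :=
  {v | ∀ ξ' ∈ K, ⟪v, ξ' - ξ⟫ ≤ 0}

/-- The family of "touching Hessians" `H(x, ξ, K)`: convex combinations of at most `n+1`
Hessians of `u` at contact points, allowing a shift by a normal vector of `K` at `ξ`. -/
def Hset {n : ℕ} (Ω : Set (Euc n)) (u : Euc n → ℝ) (K : Set (Euc n)) (x ξ : Euc n) :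
    Set (Euc n →L[ℝ] Euc n →L[ℝ] ℝ) :=
  {H | ∃ m : ℕ, 1 ≤ m ∧ m ≤ n + 1 ∧ ∃ lam : Fin m → ℝ, ∃ s : Fin m → Euc n,
    (∀ i, 0 ≤ lam i) ∧ (∑ i, lam i) = 1 ∧ (∀ i, s i ∈ Sset Ω u ξ ∩ Ω) ∧
    (x - ∑ i, lam i • s i) ∈ normalCone K ξ ∧
    H = ∑ i, lam i • fderiv ℝ (fderiv ℝ u) (s i)}

/-- Second order Taylor expansion. -/
lemma taylor2 {n : ℕ} {Ω : Set (Euc n)} {u : Euc n → ℝ} (hΩo : IsOpen Ω)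
    (hu2 : ContDiffOn ℝ 2 u Ω) {s : Euc n} (hs : s ∈ Ω) :
    (fun z => u z - u s - fderiv ℝ u s (z - s)
      - (1 / 2) * fderiv ℝ (fderiv ℝ u) s (z - s) (z - s)) =o[𝓝 s] (fun z => ‖z - s‖ ^ 2) := by
  obtain ⟨r, hr, hball⟩ := Metric.isOpen_iff.1 hΩo s hs
  have hcd : ContDiffAt ℝ 2 u s := (hu2 s hs).contDiffAt (hΩo.mem_nhds hs)
  have hsymm : IsSymmSndFDerivAt ℝ u s := hcd.isSymmSndFDerivAt (by simp)
  set B := fderiv ℝ (fderiv ℝ u) s with hB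
  have hd2 : HasFDerivAt (fderiv ℝ u) B s := by
    have : ContDiffAt ℝ 1 (fderiv ℝ u) s := hcd.fderiv_right (by norm_num)
    exact (this.differentiableAt (by simp)).hasFDerivAt
  let f : Euc n → ℝ := fun z => u z - u s - fderiv ℝ u s (z - s) - (1 / 2) * B (z - s) (z - s)
  let f' : Euc n → (Euc n →L[ℝ] ℝ) := fun z => fderiv ℝ u z - fderiv ℝ u s - B (z - s)
  have hff' : ∀ z ∈ ball s r, HasFDerivWithinAt f (f' z) (ball s r) z := by
    intro z hz
    apply HasFDerivAt.hasFDerivWithinAt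
    have h1 : HasFDerivAt u (fderiv ℝ u z) z :=
      (((hu2 z (hball hz)).contDiffAt (hΩo.mem_nhds (hball hz))).differentiableAt
        (by norm_num)).hasFDerivAt
    have hid : HasFDerivAt (fun z : Euc n => z - s) (ContinuousLinearMap.id ℝ (Euc n)) z :=
      (hasFDerivAt_id z).sub_const s
    have h2 : HasFDerivAt (fun z => fderiv ℝ u s (z - s)) (fderiv ℝ u s) z := by
      exact ((fderiv ℝ u s).hasFDerivAt (x := z - s)).comp z hid
    have h3 : HasFDerivAt (fun z => B (z - s)) B z := by
      exact (B.hasFDerivAt (x := z - s)).comp z hid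
    have h4 := (h3.clm_apply hid).const_mul (1 / 2 : ℝ)
    have h5 := ((h1.sub_const (u s)).sub h2).sub h4
    refine h5.congr_fderiv ?_
    ext v
    have := hsymm (z - s) v
    rw [← hB] at this
    have e : (1 / 2 : ℝ) * (B (z - s) v + B v (z - s)) = B (z - s) v := by rw [← this]; ring
    change fderiv ℝ u z v - fderiv ℝ u s v - (1 / 2 : ℝ) * (B (z - s) v + B v (z - s)) =
      fderiv ℝ u z v - fderiv ℝ u s v - B (z - s) v
    rw [e]
  have hf' : f' =o[𝓝[ball s r] s] fun z => ‖z - s‖ ^ 1 := by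
    have := hd2.isLittleO
    simp only [pow_one]
    exact (this.norm_right).mono nhdsWithin_le_nhds
  have := (convex_ball s r).isLittleO_pow_succ (mem_ball_self hr) hff' hf'
  rw [nhdsWithin_eq_nhds.2 (ball_mem_nhds s hr)] at this
  simpa [f] using this

/-- Uniform quadratic upper bound near a compact subset. -/
lemma unif_quad {n : ℕ} {Ω S : Set (Euc n)} {u : Euc n → ℝ} (hΩo : IsOpen Ω)
    (hu2 : ContDiffOn ℝ 2 u Ω) (hS : IsCompact S) (hSΩ : S ⊆ Ω) :
    ∃ δ > 0, ∃ C ≥ 0, ∀ s ∈ S, ∀ h : Euc n, ‖h‖ ≤ δ →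
      s + h ∈ Ω ∧ u (s + h) ≤ u s + fderiv ℝ u s h + C * ‖h‖ ^ 2 := by
  obtain ⟨δ, hδ, hsub⟩ := hS.exists_cthickening_subset_open hΩo hSΩ
  have hcomp : IsCompact (cthickening δ S) := hS.cthickening
  have hcont1 : ContDiffOn ℝ 1 (fderiv ℝ u) Ω := hu2.fderiv_of_isOpen hΩo (by norm_num)
  have hcont : ContinuousOn (fderiv ℝ (fderiv ℝ u)) (cthickening δ S) :=
    (hcont1.continuousOn_fderiv_of_isOpen hΩo (by norm_num)).mono hsub
  obtain ⟨C, hC⟩ := hcomp.exists_bound_of_continuousOn (f := fderiv ℝ (fderiv ℝ u)) hcont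
  have hin : ∀ s ∈ S, ∀ z, ‖z - s‖ ≤ δ → z ∈ cthickening δ S := by
    intro s hs z hz
    exact mem_cthickening_of_dist_le z s δ S hs (by rwa [dist_eq_norm])
  have hbd : ∀ s ∈ S, ∀ z ∈ closedBall s δ, ‖fderiv ℝ u z - fderiv ℝ u s‖ ≤ max C 0 * ‖z - s‖ := by
    intro s hs z hz
    refine (convex_closedBall s δ).norm_image_sub_le_of_norm_fderiv_le (𝕜 := ℝ) (f := fderiv ℝ u)
      (fun y hy => ?_) (fun y hy => ?_) (mem_closedBall_self hδ.le) hz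
    · have : y ∈ Ω := hsub (hin s hs y (by simpa [dist_eq_norm] using hy))
      exact ((hcont1 y this).contDiffAt (hΩo.mem_nhds this)).differentiableAt (by norm_num)
    · exact (hC y (hin s hs y (by simpa [dist_eq_norm] using hy))).trans (le_max_left _ _)
  refine ⟨δ, hδ, max C 0, le_max_right _ _, fun s hs h hh => ⟨hsub (hin s hs _ (by simpa)), ?_⟩⟩
  have := (convex_closedBall s ‖h‖).norm_image_sub_le_of_norm_fderiv_le' (𝕜 := ℝ) (f := u)
    (φ := fderiv ℝ u s) (C := max C 0 * ‖h‖) (x := s) (y := s + h)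
    (fun y hy => ?_) (fun y hy => ?_) (mem_closedBall_self (norm_nonneg _)) (by simp)
  · have h2 := (le_abs_self _).trans this
    simp only [add_sub_cancel_left] at h2
    nlinarith
  · have hy' : ‖y - s‖ ≤ δ := by
      have : ‖y - s‖ ≤ ‖h‖ := by simpa [dist_eq_norm] using hy
      exact this.trans hh
    have : y ∈ Ω := hsub (hin s hs y hy')
    exact ((hu2 y this).contDiffAt (hΩo.mem_nhds this)).differentiableAt (by norm_num)
  · have hy' : ‖y - s‖ ≤ ‖h‖ := by simpa [dist_eq_norm] using hy
    refine (hbd s hs y (by simpa [dist_eq_norm] using hy'.trans hh)).trans ?_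
    gcongr

/-- At an interior contact point the gradient is `ξ`. -/
lemma crit {n : ℕ} {Ω : Set (Euc n)} {u : Euc n → ℝ} (hΩo : IsOpen Ω)
    (hu2 : ContDiffOn ℝ 2 u Ω) {ξ s : Euc n} (hs : s ∈ Sset Ω u ξ) (hsΩ : s ∈ Ω) (h : Euc n) :
    fderiv ℝ u s h = ⟪ξ, h⟫ := by
  have h1 : HasFDerivAt u (fderiv ℝ u s) s :=
    (((hu2 s hsΩ).contDiffAt (hΩo.mem_nhds hsΩ)).differentiableAt (by norm_num)).hasFDerivAt
  have h2 := h1.sub (innerSL ℝ ξ).hasFDerivAt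
  have hmin : IsLocalMin (fun y => u y - innerSL ℝ ξ y) s := by
    filter_upwards [hΩo.mem_nhds hsΩ] with y hy
    simpa using hs.2 y (subset_closure hy)
  have := hmin.hasFDerivAt_eq_zero h2
  have h3 := congrArg (fun L : Euc n →L[ℝ] ℝ => L h) this
  simp at h3
  linarith

/-- The concave conjugate `min (u - ξ·)`. -/
def phi {n : ℕ} (Ω : Set (Euc n)) (u : Euc n → ℝ) (ξ : Euc n) : ℝ :=
  sInf ((fun y => u y - ⟪ξ, y⟫) '' closure Ω)

lemma Sset_nonempty {n : ℕ} {Ω : Set (Euc n)} {u : Euc n → ℝ}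
    (hΩb : Bornology.IsBounded Ω) (hΩne : Ω.Nonempty)
    (hu : ContinuousOn u (closure Ω)) (ξ : Euc n) : (Sset Ω u ξ).Nonempty := by
  obtain ⟨s, hs, hmin⟩ := hΩb.isCompact_closure.exists_isMinOn hΩne.closure
    (hu.sub (continuous_const.inner continuous_id).continuousOn :
      ContinuousOn (fun y => u y - ⟪ξ, y⟫) (closure Ω))
  exact ⟨s, hs, fun y hy => hmin hy⟩

lemma phi_eq {n : ℕ} {Ω : Set (Euc n)} {u : Euc n → ℝ} {ξ s : Euc n} (hs : s ∈ Sset Ω u ξ) :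
    phi Ω u ξ = u s - ⟪ξ, s⟫ := by
  refine IsLeast.csInf_eq ⟨⟨s, hs.1, rfl⟩, ?_⟩
  rintro _ ⟨y, hy, rfl⟩
  exact hs.2 y hy

lemma phi_le {n : ℕ} {Ω : Set (Euc n)} {u : Euc n → ℝ}
    (hΩb : Bornology.IsBounded Ω) (hΩne : Ω.Nonempty)
    (hu : ContinuousOn u (closure Ω)) (ξ : Euc n) {y : Euc n} (hy : y ∈ closure Ω) :
    phi Ω u ξ ≤ u y - ⟪ξ, y⟫ := by
  obtain ⟨s, hs⟩ := Sset_nonempty hΩb hΩne hu ξ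
  rw [phi_eq hs]
  exact hs.2 y hy

lemma phi_continuous {n : ℕ} {Ω : Set (Euc n)} {u : Euc n → ℝ}
    (hΩb : Bornology.IsBounded Ω) (hΩne : Ω.Nonempty)
    (hu : ContinuousOn u (closure Ω)) : Continuous (phi Ω u) := by
  obtain ⟨R, hR⟩ := hΩb.closure.exists_norm_le
  refine (LipschitzWith.of_le_add_mul' R fun ξ η => ?_).continuous
  obtain ⟨s, hs⟩ := Sset_nonempty hΩb hΩne hu η
  have h1 := phi_le hΩb hΩne hu ξ hs.1
  rw [phi_eq hs]
  have h2 : ⟪η - ξ, s⟫ ≤ ‖η - ξ‖ * ‖s‖ := real_inner_le_norm _ _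
  rw [inner_sub_left] at h2
  have h3 : ‖η - ξ‖ * ‖s‖ ≤ ‖η - ξ‖ * R := by gcongr; exact hR s hs.1
  rw [dist_comm, dist_eq_norm]
  linarith

/-- `ξ` is an optimal slope at `x`. -/
def Opt {n : ℕ} (K Ω : Set (Euc n)) (u : Euc n → ℝ) (x ξ : Euc n) : Prop :=
  ξ ∈ K ∧ ∀ η ∈ K, phi Ω u η + ⟪η, x⟫ ≤ phi Ω u ξ + ⟪ξ, x⟫

lemma exists_opt {n : ℕ} {K Ω : Set (Euc n)} {u : Euc n → ℝ}
    (hKcp : IsCompact K) (hKne : K.Nonempty)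
    (hΩb : Bornology.IsBounded Ω) (hΩne : Ω.Nonempty)
    (hu : ContinuousOn u (closure Ω)) (x : Euc n) : ∃ ξ, Opt K Ω u x ξ := by
  have hc := phi_continuous hΩb hΩne hu
  obtain ⟨ξ, hξ, hmax⟩ := hKcp.exists_isMaxOn hKne
    (hc.add (continuous_id.inner continuous_const : Continuous fun η : Euc n => ⟪η, x⟫)).continuousOn
  exact ⟨ξ, hξ, fun η hη => hmax hη⟩

lemma KEnv_eq {n : ℕ} {K Ω : Set (Euc n)} {u : Euc n → ℝ}
    (hΩb : Bornology.IsBounded Ω) (hΩne : Ω.Nonempty)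
    (hu : ContinuousOn u (closure Ω)) {x ξ : Euc n} (h : Opt K Ω u x ξ) :
    KEnv K Ω u x = phi Ω u ξ + ⟪ξ, x⟫ := by
  refine IsGreatest.csSup_eq ⟨⟨phi Ω u ξ, ξ, h.1, fun y hy => ?_, rfl⟩, ?_⟩
  · linarith [phi_le hΩb hΩne hu ξ hy]
  · rintro _ ⟨a, η, hη, ha, rfl⟩
    obtain ⟨s, hs⟩ := Sset_nonempty hΩb hΩne hu η
    have := ha s hs.1
    have h2 := h.2 η hη
    rw [phi_eq hs] at h2
    linarith

lemma le_KEnv {n : ℕ} {K Ω : Set (Euc n)} {u : Euc n → ℝ}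
    (hKcp : IsCompact K) (hKne : K.Nonempty)
    (hΩb : Bornology.IsBounded Ω) (hΩne : Ω.Nonempty)
    (hu : ContinuousOn u (closure Ω)) (x : Euc n) {η : Euc n} (hη : η ∈ K) :
    phi Ω u η + ⟪η, x⟫ ≤ KEnv K Ω u x := by
  obtain ⟨ξ, hξ⟩ := exists_opt hKcp hKne hΩb hΩne hu x
  rw [KEnv_eq hΩb hΩne hu hξ]
  exact hξ.2 η hη

lemma Sset_isCompact {n : ℕ} {K Ω : Set (Euc n)} {u : Euc n → ℝ} (hKcp : IsCompact K)
    (hΩb : Bornology.IsBounded Ω) (hΩne : Ω.Nonempty)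
    (hu : ContinuousOn u (closure Ω)) :
    IsCompact {p : Euc n × Euc n | p.1 ∈ K ∧ p.2 ∈ Sset Ω u p.1} := by
  have hcl : IsCompact (K ×ˢ closure Ω) := hKcp.prod hΩb.isCompact_closure
  have hc : ContinuousOn (fun p : Euc n × Euc n => u p.2 - ⟪p.1, p.2⟫ - phi Ω u p.1)
      (K ×ˢ closure Ω) := by
    have h1 : ContinuousOn (fun p : Euc n × Euc n => u p.2) (K ×ˢ closure Ω) :=
      hu.comp continuous_snd.continuousOn (fun p hp => hp.2)
    have h2 : Continuous (fun p : Euc n × Euc n => ⟪p.1, p.2⟫) := by fun_prop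
    have h3 : Continuous (fun p : Euc n × Euc n => phi Ω u p.1) :=
      (phi_continuous hΩb hΩne hu).comp continuous_fst
    exact (h1.sub h2.continuousOn).sub h3.continuousOn
  have := hc.preimage_isClosed_of_isClosed hcl.isClosed (isClosed_Iic (a := (0 : ℝ)))
  convert hcl.of_isClosed_subset this inter_subset_left using 1
  ext ⟨ξ, s⟩
  simp only [mem_ofPred_eq, mem_inter_iff, mem_prod, mem_preimage, mem_Iic]
  constructor
  · rintro ⟨h1, h2⟩
    exact ⟨⟨h1, h2.1⟩, by simp [phi_eq h2]⟩
  · rintro ⟨⟨h1, h2⟩, h3⟩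
    refine ⟨h1, h2, fun y hy => ?_⟩
    linarith [phi_le hΩb hΩne hu ξ hy]

/-- First-order optimality along segments in K. -/
lemma dir_opt {n : ℕ} {K Ω : Set (Euc n)} {u : Euc n → ℝ} (hKcp : IsCompact K)
    (hKcv : Convex ℝ K) (hΩb : Bornology.IsBounded Ω) (hΩne : Ω.Nonempty)
    (hu : ContinuousOn u (closure Ω)) {x ξ ξ' : Euc n} (h : Opt K Ω u x ξ) (hξ' : ξ' ∈ K) :
    ∃ s ∈ Sset Ω u ξ, ⟪x - s, ξ' - ξ⟫ ≤ 0 := by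
  let t : ℕ → ℝ := fun k => 1 / ((k : ℝ) + 1)
  have ht0 : ∀ k, 0 < t k := fun k => by positivity
  have ht1 : ∀ k, t k ≤ 1 := fun k => by
    have : (0 : ℝ) ≤ k := Nat.cast_nonneg k
    exact (div_le_one (by positivity)).2 (by linarith)
  have htl : Filter.Tendsto t Filter.atTop (𝓝 0) := tendsto_one_div_add_atTop_nhds_zero_nat
  let p : ℕ → Euc n := fun k => ξ + t k • (ξ' - ξ)
  have hpK : ∀ k, p k ∈ K := fun k =>
    hKcv.add_smul_sub_mem h.1 hξ' ⟨(ht0 k).le, ht1 k⟩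
  choose s hs using fun k => Sset_nonempty hΩb hΩne hu (p k)
  obtain ⟨⟨η, z⟩, hz, g, hg, hlim⟩ := (Sset_isCompact hKcp hΩb hΩne hu).tendsto_subseq
    (x := fun k => (p k, s k)) (fun k => ⟨hpK k, hs k⟩)
  have hl1 : Filter.Tendsto (fun k => p (g k)) Filter.atTop (𝓝 η) :=
    (continuous_fst.tendsto _).comp hlim
  have hl2 : Filter.Tendsto (fun k => s (g k)) Filter.atTop (𝓝 z) :=
    (continuous_snd.tendsto _).comp hlim
  have hpl : Filter.Tendsto p Filter.atTop (𝓝 ξ) := by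
    have := (htl.smul_const (ξ' - ξ)).const_add ξ
    simpa using this
  have hη : η = ξ := tendsto_nhds_unique hl1 (hpl.comp hg.tendsto_atTop)
  subst hη
  refine ⟨z, hz.2, ?_⟩
  have hineq : ∀ k, ⟪x - s k, ξ' - η⟫ ≤ 0 := by
    intro k
    have h1 := h.2 (p k) (hpK k)
    rw [phi_eq (hs k)] at h1
    have h2 := phi_le hΩb hΩne hu η (hs k).1
    have h3 : t k * ⟪x - s k, ξ' - η⟫ ≤ 0 := by
      have e1 : ⟪p k, x⟫ = ⟪η, x⟫ + t k * ⟪x, ξ' - η⟫ := by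
        simp [p, inner_add_left, inner_smul_left, real_inner_comm]
      have e2 : ⟪p k, s k⟫ = ⟪η, s k⟫ + t k * ⟪s k, ξ' - η⟫ := by
        simp [p, inner_add_left, inner_smul_left, real_inner_comm]
      rw [inner_sub_left]
      rw [e1, e2] at h1
      linarith
    by_contra hcon
    push Not at hcon
    have := mul_pos (ht0 k) hcon
    linarith
  have hlim2 : Filter.Tendsto (fun k => ⟪x - s (g k), ξ' - η⟫) Filter.atTop
      (𝓝 ⟪x - z, ξ' - η⟫) := (hl2.const_sub x).inner tendsto_const_nhds
  exact le_of_tendsto' hlim2 fun k => hineq _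

lemma isCompact_cvxHull {n : ℕ} {S : Set (Euc n)} (hS : IsCompact S) (hne : S.Nonempty) :
    IsCompact (convexHull ℝ S) := by
  obtain ⟨s0, hs0⟩ := hne
  have hc : IsCompact (stdSimplex ℝ (Fin (n + 1)) ×ˢ (Set.pi univ fun _ : Fin (n + 1) => S)) :=
    (isCompact_stdSimplex ℝ _).prod (isCompact_univ_pi fun _ => hS)
  have := hc.image (f := fun p : (Fin (n + 1) → ℝ) × (Fin (n + 1) → Euc n) =>
    ∑ i, p.1 i • p.2 i) (by fun_prop)
  convert this using 1
  ext a
  constructor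
  · intro ha
    obtain ⟨ι, _, z, w, hz, haff, hw, hw1, hwz⟩ := eq_pos_convex_span_of_mem_convexHull ha
    have hcard : Fintype.card ι ≤ Fintype.card (Fin (n + 1)) := by
      have := haff.card_le_finrank_succ
      have h2 := Submodule.finrank_le (vectorSpan ℝ (Set.range z))
      simp at h2
      simp
      omega
    obtain ⟨e⟩ := Function.Embedding.nonempty_of_card_le hcard
    refine ⟨(Function.extend e w 0, Function.extend e z fun _ => s0), ⟨⟨?_, ?_⟩, ?_⟩, ?_⟩
    · intro j
      by_cases hj : ∃ i, e i = j
      · obtain ⟨i, rfl⟩ := hj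
        simpa [e.injective.extend_apply] using (hw i).le
      · simp [Function.extend_apply' _ _ _ hj]
    · rw [← hw1]
      refine (Fintype.sum_of_injective e e.injective _ _ (fun j hj => ?_) (fun i => ?_)).symm
      · simp [Function.extend_apply' _ _ _ hj]
      · simp [e.injective.extend_apply]
    · intro j _
      by_cases hj : ∃ i, e i = j
      · obtain ⟨i, rfl⟩ := hj
        simpa [e.injective.extend_apply] using hz (mem_range_self i)
      · simpa [Function.extend_apply' _ _ _ hj] using hs0
    · rw [← hwz]
      refine (Fintype.sum_of_injective e e.injective _ _ (fun j hj => ?_) (fun i => ?_)).symm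
      · simp [Function.extend_apply' _ _ _ hj]
      · simp [e.injective.extend_apply]
  · rintro ⟨⟨w, z⟩, ⟨⟨h0, h1⟩, h2⟩, rfl⟩
    exact (convex_convexHull ℝ S).sum_mem (fun i _ => h0 i) h1
      (fun i _ => subset_convexHull ℝ S (h2 i (mem_univ i)))

lemma Hset_nonempty {n : ℕ} {K Ω : Set (Euc n)} {u : Euc n → ℝ} (hKcp : IsCompact K)
    (hKcv : Convex ℝ K) (hΩb : Bornology.IsBounded Ω) (hΩne : Ω.Nonempty)
    (hu : ContinuousOn u (closure Ω)) (hSsub : ∀ ξ ∈ K, Sset Ω u ξ ⊆ Ω)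
    {x ξ : Euc n} (h : Opt K Ω u x ξ) : (Hset Ω u K x ξ).Nonempty := by
  have hScomp : IsCompact (Sset Ω u ξ) := by
    have := (Sset_isCompact (K := {ξ}) (u := u) isCompact_singleton hΩb hΩne hu).image continuous_snd
    convert this using 1
    ext s
    simp
  have hXc : IsCompact (convexHull ℝ (Sset Ω u ξ)) := isCompact_cvxHull hScomp (Sset_nonempty hΩb hΩne hu ξ)
  obtain ⟨a, ha, b, hb, hab⟩ := Sion.exists_isSaddlePointOn
    (X := convexHull ℝ (Sset Ω u ξ)) (Y := K) (f := fun c η => ⟪x - c, η - ξ⟫)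
    (Sset_nonempty hΩb hΩne hu ξ).convexHull (convex_convexHull ℝ _) hXc
    (fun y _ => Continuous.lowerSemicontinuous (by fun_prop) |>.lowerSemicontinuousOn _)
    (fun y _ => by
      apply ConvexOn.quasiconvexOn
      refine ⟨convex_convexHull ℝ _, fun p _ q _ α β _ _ hαβ => le_of_eq ?_⟩
      have : x = α • x + β • x := by rw [← add_smul, hαβ, one_smul]
      simp only [inner_sub_left, inner_add_left, inner_smul_left, smul_eq_mul]
      simp
      linear_combination (-⟪x, y - ξ⟫) * hαβ)
    hKcv ⟨ξ, h.1⟩ hKcp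
    (fun y _ => Continuous.upperSemicontinuous (by fun_prop) |>.upperSemicontinuousOn _)
    (fun y _ => by
      apply ConcaveOn.quasiconcaveOn
      refine ⟨hKcv, fun p _ q _ α β _ _ hαβ => le_of_eq ?_⟩
      simp only [inner_sub_right, inner_add_right, inner_smul_right, smul_eq_mul]
      linear_combination (-⟪x - y, ξ⟫) * hαβ)
  obtain ⟨s, hs, hsb⟩ := dir_opt hKcp hKcv hΩb hΩne hu h hb
  have hN : x - a ∈ normalCone K ξ := fun η hη =>
    (hab s (subset_convexHull ℝ _ hs) η hη).trans hsb
  obtain ⟨ι, _, z, w, hz, haff, hw, hw1, hwz⟩ := eq_pos_convex_span_of_mem_convexHull ha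
  let e := Fintype.equivFin ι
  refine ⟨_, Fintype.card ι, ?_, ?_, fun i => w (e.symm i), fun i => z (e.symm i),
    fun i => (hw _).le, ?_, fun i => ?_, ?_, rfl⟩
  · rw [Nat.one_le_iff_ne_zero]
    intro h0
    have := Fintype.card_eq_zero_iff.1 h0
    simp at hw1
  · have := haff.card_le_finrank_succ
    refine this.trans ?_
    have h2 := Submodule.finrank_le (vectorSpan ℝ (Set.range z))
    simp at h2
    omega
  · rw [e.symm.sum_comp w, hw1]
  · have := hz (mem_range_self (e.symm i))
    exact ⟨this, hSsub ξ h.1 this⟩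
  · rw [e.symm.sum_comp (fun i => w i • z i), hwz]
    exact hN

lemma KEnv_sub_le {n : ℕ} {K Ω : Set (Euc n)} {u : Euc n → ℝ} (hKcp : IsCompact K)
    (hKne : K.Nonempty) (hΩb : Bornology.IsBounded Ω) (hΩne : Ω.Nonempty)
    (hu : ContinuousOn u (closure Ω)) {x ξ : Euc n} (hopt : Opt K Ω u x ξ)
    {m : ℕ} {lam : Fin m → ℝ} {s : Fin m → Euc n} (h0 : ∀ i, 0 ≤ lam i) (h1 : ∑ i, lam i = 1)
    (hs : ∀ i, s i ∈ Sset Ω u ξ ∩ Ω) (hN : (x - ∑ i, lam i • s i) ∈ normalCone K ξ)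
    {h : Euc n} (hh : ∀ i, s i + h ∈ Ω) :
    KEnv K Ω u (x + h) - KEnv K Ω u x ≤ ∑ i, lam i * (u (s i + h) - u (s i)) := by
  obtain ⟨η, hη⟩ := exists_opt hKcp hKne hΩb hΩne hu (x + h)
  rw [KEnv_eq hΩb hΩne hu hη, KEnv_eq hΩb hΩne hu hopt]
  have hn := hN η hη.1
  have e1 : ∑ i, lam i * phi Ω u η ≤ ∑ i, lam i * (u (s i + h) - ⟪η, s i + h⟫) := by
    gcongr with i
    · exact h0 i
    · exact phi_le hΩb hΩne hu η (subset_closure (hh i))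
  have e2 : ∑ i, lam i * phi Ω u ξ = ∑ i, lam i * (u (s i) - ⟪ξ, s i⟫) := by
    refine Finset.sum_congr rfl fun i _ => ?_
    rw [phi_eq (hs i).1]
  rw [← Finset.sum_mul, h1, one_mul] at e1 e2
  have e3 : ∑ i, lam i * (u (s i + h) - ⟪η, s i + h⟫)
      = ∑ i, lam i * u (s i + h) - ⟪η, ∑ i, lam i • s i⟫ - ⟪η, h⟫ := by
    have : ⟪η, h⟫ = ∑ i, lam i * ⟪η, h⟫ := by rw [← Finset.sum_mul, h1, one_mul]
    rw [this, inner_sum, ← Finset.sum_sub_distrib, ← Finset.sum_sub_distrib]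
    refine Finset.sum_congr rfl fun i _ => ?_
    rw [inner_add_right, inner_smul_right]
    ring
  have e4 : ∑ i, lam i * (u (s i) - ⟪ξ, s i⟫)
      = ∑ i, lam i * u (s i) - ⟪ξ, ∑ i, lam i • s i⟫ := by
    rw [inner_sum, ← Finset.sum_sub_distrib]
    refine Finset.sum_congr rfl fun i _ => ?_
    rw [inner_smul_right]
    ring
  have e5 : ∑ i, lam i * (u (s i + h) - u (s i))
      = ∑ i, lam i * u (s i + h) - ∑ i, lam i * u (s i) := by
    rw [← Finset.sum_sub_distrib]
    exact Finset.sum_congr rfl fun i _ => by ring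
  rw [e5, inner_add_right]
  rw [e3] at e1
  rw [e4] at e2
  have hn' : ⟪η, x⟫ - ⟪η, ∑ i, lam i • s i⟫ - (⟪ξ, x⟫ - ⟪ξ, ∑ i, lam i • s i⟫) ≤ 0 := by
    rw [real_inner_comm, inner_sub_left, inner_sub_right, inner_sub_right] at hn
    linarith
  linarith

lemma KEnv_sub_ge {n : ℕ} {K Ω : Set (Euc n)} {u : Euc n → ℝ} (hKcp : IsCompact K)
    (hKne : K.Nonempty) (hΩb : Bornology.IsBounded Ω) (hΩne : Ω.Nonempty)
    (hu : ContinuousOn u (closure Ω)) {x ξ : Euc n} (hopt : Opt K Ω u x ξ) (h : Euc n) :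
    KEnv K Ω u x + ⟪ξ, h⟫ ≤ KEnv K Ω u (x + h) := by
  have := le_KEnv hKcp hKne hΩb hΩne hu (x + h) hopt.1
  rw [KEnv_eq hΩb hΩne hu hopt]
  rw [inner_add_right] at this
  linarith

lemma KEnv_quad {n : ℕ} {K Ω : Set (Euc n)} {u : Euc n → ℝ}
    (hKcp : IsCompact K) (hKcv : Convex ℝ K) (hKne : K.Nonempty)
    (hΩo : IsOpen Ω) (hΩb : Bornology.IsBounded Ω) (hΩne : Ω.Nonempty)
    (hu : ContinuousOn u (closure Ω)) (hu2 : ContDiffOn ℝ 2 u Ω)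
    (hSsub : ∀ ξ ∈ K, Sset Ω u ξ ⊆ Ω) :
    ∃ C > 0, ∀ x ξ, Opt K Ω u x ξ → ∀ h,
      KEnv K Ω u (x + h) ≤ KEnv K Ω u x + ⟪ξ, h⟫ + C * ‖h‖ ^ 2 := by
  have hcomp := (Sset_isCompact hKcp hΩb hΩne hu).image continuous_snd
  obtain ⟨δ, hδ, C, hC, hq⟩ := unif_quad hΩo hu2 hcomp (by
    rintro _ ⟨⟨ξ, s⟩, ⟨h1, h2⟩, rfl⟩
    exact hSsub ξ h1 h2)
  obtain ⟨M, hM0, hM⟩ := hKcp.isBounded.exists_pos_norm_le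
  refine ⟨C + 2 * M / δ, by positivity, fun x ξ hopt h => ?_⟩
  rcases le_or_gt ‖h‖ δ with hh | hh
  · obtain ⟨_, m, _, _, lam, s, h0, h1, hs, hN, rfl⟩ :=
      Hset_nonempty hKcp hKcv hΩb hΩne hu hSsub hopt
    have hin : ∀ i, s i ∈ Prod.snd '' {p : Euc n × Euc n | p.1 ∈ K ∧ p.2 ∈ Sset Ω u p.1} :=
      fun i => ⟨(ξ, s i), ⟨hopt.1, (hs i).1⟩, rfl⟩
    have key := KEnv_sub_le hKcp hKne hΩb hΩne hu hopt h0 h1 hs hN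
      (fun i => (hq _ (hin i) h hh).1)
    have k2 : ∑ i, lam i * (u (s i + h) - u (s i)) ≤ ∑ i, lam i * (⟪ξ, h⟫ + C * ‖h‖ ^ 2) := by
      gcongr with i
      · exact h0 i
      · have := (hq _ (hin i) h hh).2
        rw [crit hΩo hu2 (hs i).1 (hs i).2] at this
        linarith
    rw [← Finset.sum_mul, h1, one_mul] at k2
    have : 0 ≤ 2 * M / δ * ‖h‖ ^ 2 := by positivity
    linarith
  · obtain ⟨η, hη⟩ := exists_opt hKcp hKne hΩb hΩne hu (x + h)
    have e1 := le_KEnv hKcp hKne hΩb hΩne hu x hη.1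
    rw [KEnv_eq hΩb hΩne hu hη, inner_add_right]
    have e2 : ⟪η, h⟫ ≤ M * ‖h‖ := (real_inner_le_norm _ _).trans (by gcongr; exact hM _ hη.1)
    have e3 : -⟪ξ, h⟫ ≤ M * ‖h‖ := by
      refine (neg_le_abs _).trans ((abs_real_inner_le_norm _ _).trans ?_)
      gcongr; exact hM _ hopt.1
    have e4 : 2 * M * ‖h‖ ≤ 2 * M / δ * ‖h‖ ^ 2 := by
      rw [div_mul_eq_mul_div, le_div_iff₀ hδ]
      have : 0 ≤ 2 * M * ‖h‖ * (‖h‖ - δ) := by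
        have : 0 ≤ ‖h‖ - δ := by linarith
        positivity
      nlinarith
    have e5 : 0 ≤ C * ‖h‖ ^ 2 := by positivity
    linarith

lemma KEnv_hasGradientAt {n : ℕ} {K Ω : Set (Euc n)} {u : Euc n → ℝ}
    (hKcp : IsCompact K) (hKcv : Convex ℝ K) (hKne : K.Nonempty)
    (hΩo : IsOpen Ω) (hΩb : Bornology.IsBounded Ω) (hΩne : Ω.Nonempty)
    (hu : ContinuousOn u (closure Ω)) (hu2 : ContDiffOn ℝ 2 u Ω)
    (hSsub : ∀ ξ ∈ K, Sset Ω u ξ ⊆ Ω) {x ξ : Euc n} (hopt : Opt K Ω u x ξ) :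
    HasGradientAt (KEnv K Ω u) ξ x := by
  obtain ⟨C, hC, hq⟩ := KEnv_quad hKcp hKcv hKne hΩo hΩb hΩne hu hu2 hSsub
  rw [hasGradientAt_iff_hasFDerivAt, hasFDerivAt_iff_isLittleO_nhds_zero]
  refine IsBigO.trans_isLittleO (g := fun h : Euc n => ‖h‖ ^ 2) ?_
    (isLittleO_norm_pow_id one_lt_two)
  refine IsBigO.of_bound C (Filter.Eventually.of_forall fun h => ?_)
  have h1 := hq x ξ hopt h
  have h2 := KEnv_sub_ge hKcp hKne hΩb hΩne hu hopt h
  rw [Real.norm_eq_abs, Real.norm_eq_abs, abs_of_nonneg (by positivity : 0 ≤ ‖h‖ ^ 2),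
    InnerProductSpace.toDual_apply_apply, abs_of_nonneg (by linarith)]
  linarith

lemma KEnv_convex {n : ℕ} {K Ω : Set (Euc n)} {u : Euc n → ℝ} (hKcp : IsCompact K)
    (hKne : K.Nonempty) (hΩb : Bornology.IsBounded Ω) (hΩne : Ω.Nonempty)
    (hu : ContinuousOn u (closure Ω)) : ConvexOn ℝ univ (KEnv K Ω u) := by
  refine ⟨convex_univ, fun p _ q _ α β hα hβ hαβ => ?_⟩
  obtain ⟨ξ, hξ⟩ := exists_opt hKcp hKne hΩb hΩne hu (α • p + β • q)
  rw [KEnv_eq hΩb hΩne hu hξ]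
  have h1 := mul_le_mul_of_nonneg_left (le_KEnv hKcp hKne hΩb hΩne hu p hξ.1) hα
  have h2 := mul_le_mul_of_nonneg_left (le_KEnv hKcp hKne hΩb hΩne hu q hξ.1) hβ
  rw [inner_add_right, inner_smul_right, inner_smul_right, smul_eq_mul, smul_eq_mul]
  have h3 : phi Ω u ξ = α * phi Ω u ξ + β * phi Ω u ξ := by rw [← add_mul, hαβ, one_mul]
  linarith

lemma KEnv_taylor {n : ℕ} {K Ω : Set (Euc n)} {u : Euc n → ℝ}
    (hKcp : IsCompact K) (hKne : K.Nonempty)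
    (hΩo : IsOpen Ω) (hΩb : Bornology.IsBounded Ω) (hΩne : Ω.Nonempty)
    (hu : ContinuousOn u (closure Ω)) (hu2 : ContDiffOn ℝ 2 u Ω)
    {x ξ : Euc n} (hopt : Opt K Ω u x ξ)
    {Hx : Euc n →L[ℝ] Euc n →L[ℝ] ℝ} (hHx : Hx ∈ Hset Ω u K x ξ) :
    (fun x' => max 0 (KEnv K Ω u x' - KEnv K Ω u x -
            ⟪ξ, x' - x⟫ - (1 / 2) * Hx (x' - x) (x' - x)))
          =o[𝓝 x] (fun x' => ‖x' - x‖ ^ 2) := by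
  obtain ⟨m, _, _, lam, s, h0, h1, hs, hN, rfl⟩ := hHx
  have htend : ∀ i, Filter.Tendsto (fun x' => s i + (x' - x)) (𝓝 x) (𝓝 (s i)) := by
    intro i
    have : Continuous fun x' => s i + (x' - x) := by fun_prop
    simpa using this.tendsto x
  have hR : ∀ i, (fun x' => u (s i + (x' - x)) - u (s i) - ⟪ξ, x' - x⟫
      - (1 / 2) * fderiv ℝ (fderiv ℝ u) (s i) (x' - x) (x' - x)) =o[𝓝 x]
      (fun x' => ‖x' - x‖ ^ 2) := by
    intro i
    have := (taylor2 hΩo hu2 (hs i).2).comp_tendsto (htend i)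
    simpa [Function.comp_def, -map_sub, crit hΩo hu2 (hs i).1 (hs i).2] using this
  have hsum : (fun x' => ∑ i, lam i * (u (s i + (x' - x)) - u (s i) - ⟪ξ, x' - x⟫
      - (1 / 2) * fderiv ℝ (fderiv ℝ u) (s i) (x' - x) (x' - x))) =o[𝓝 x]
      (fun x' => ‖x' - x‖ ^ 2) :=
    IsLittleO.fun_sum fun i _ => (hR i).const_mul_left (lam i)
  refine IsBigO.trans_isLittleO (IsBigO.of_bound 1 ?_) hsum
  have hev : ∀ᶠ x' in 𝓝 x, ∀ i, s i + (x' - x) ∈ Ω :=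
    Filter.eventually_all.2 fun i => (htend i).eventually (hΩo.mem_nhds (hs i).2)
  filter_upwards [hev] with x' hx'
  have key := KEnv_sub_le hKcp hKne hΩb hΩne hu hopt h0 h1 hs hN hx'
  rw [add_sub_cancel] at key
  have e : ∑ i, lam i * (u (s i + (x' - x)) - u (s i) - ⟪ξ, x' - x⟫
      - (1 / 2) * fderiv ℝ (fderiv ℝ u) (s i) (x' - x) (x' - x))
      = ∑ i, lam i * (u (s i + (x' - x)) - u (s i)) - ⟪ξ, x' - x⟫
        - (1 / 2) * (∑ i, lam i • fderiv ℝ (fderiv ℝ u) (s i)) (x' - x) (x' - x) := by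
    generalize ⟪ξ, x' - x⟫ = q
    have : q = ∑ i, lam i * q := by rw [← Finset.sum_mul, h1, one_mul]
    rw [sum_apply, sum_apply, Finset.mul_sum]
    conv_rhs => rw [this]
    rw [← Finset.sum_sub_distrib, ← Finset.sum_sub_distrib]
    refine Finset.sum_congr rfl fun i _ => ?_
    rw [smul_apply, smul_apply, smul_eq_mul]
    ring
  rw [e, one_mul, Real.norm_eq_abs, Real.norm_eq_abs, abs_of_nonneg (le_max_left _ _)]
  refine max_le (abs_nonneg _) (le_trans ?_ (le_abs_self _))
  linarith

/-- Sharp `C^{1,1}` regularity of the `K`-envelope when all contact sets are interior. -/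
theorem stmt_8 {n : ℕ} (K Ω : Set (Euc n)) (u : Euc n → ℝ)
    (hKcp : IsCompact K) (hKcv : Convex ℝ K) (hKne : K.Nonempty)
    (hΩo : IsOpen Ω) (hΩb : Bornology.IsBounded Ω) (hΩne : Ω.Nonempty)
    (hu : ContinuousOn u (closure Ω)) (hu2 : ContDiffOn ℝ 2 u Ω)
    (hSsub : ∀ ξ ∈ K, Sset Ω u ξ ⊆ Ω) :
    ConvexOn ℝ univ (KEnv K Ω u) ∧
    ContDiff ℝ 1 (KEnv K Ω u) ∧
    (∃ L : NNReal, LipschitzWith L (fun x => gradient (KEnv K Ω u) x)) ∧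
    (fun x => gradient (KEnv K Ω u) x) '' univ = K ∧
    (fun x => gradient (KEnv K Ω u) x) '' Ω = K ∧
    ∀ x : Euc n,
      (Hset Ω u K x (gradient (KEnv K Ω u) x)).Nonempty ∧
      ∀ Hx ∈ Hset Ω u K x (gradient (KEnv K Ω u) x),
        (fun x' => max 0 (KEnv K Ω u x' - KEnv K Ω u x -
            ⟪gradient (KEnv K Ω u) x, x' - x⟫ - (1 / 2) * Hx (x' - x) (x' - x)))
          =o[𝓝 x] (fun x' => ‖x' - x‖ ^ 2) := by
  have hg : ∀ x, ∃ ξ, Opt K Ω u x ξ := exists_opt hKcp hKne hΩb hΩne hu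
  have hgrad : ∀ {x ξ}, Opt K Ω u x ξ → HasGradientAt (KEnv K Ω u) ξ x := fun h =>
    KEnv_hasGradientAt hKcp hKcv hKne hΩo hΩb hΩne hu hu2 hSsub h
  have hopt : ∀ x, Opt K Ω u x (gradient (KEnv K Ω u) x) := by
    intro x
    obtain ⟨ξ, hξ⟩ := hg x
    rw [(hgrad hξ).gradient]
    exact hξ
  obtain ⟨C, hC, hq⟩ := KEnv_quad hKcp hKcv hKne hΩo hΩb hΩne hu hu2 hSsub
  have hlip : LipschitzWith (2 * C).toNNReal (fun x => gradient (KEnv K Ω u) x) := by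
    refine LipschitzWith.of_dist_le_mul fun x y => ?_
    rw [Real.coe_toNNReal _ (by positivity), dist_eq_norm, dist_eq_norm]
    set a := gradient (KEnv K Ω u) x with ha
    set b := gradient (KEnv K Ω u) y with hb
    have oa : Opt K Ω u x a := hopt x
    have ob : Opt K Ω u y b := hopt y
    let w : Euc n := (1 / (2 * C)) • (a - b)
    have h1 := KEnv_sub_ge hKcp hKne hΩb hΩne hu oa ((y - x) + w)
    have h2 := hq y b ob w
    have h3 := KEnv_sub_ge hKcp hKne hΩb hΩne hu ob (x - y)
    have h3' := hq x a oa (y - x)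
    have h4 : x + ((y - x) + w) = y + w := by abel
    rw [h4, inner_add_right] at h1
    rw [add_sub_cancel] at h3'
    have h5 : ⟪a, w⟫ - ⟪b, w⟫ = 1 / (2 * C) * ‖a - b‖ ^ 2 := by
      rw [← inner_sub_left, inner_smul_right, real_inner_self_eq_norm_sq]
    have h6 : ‖w‖ ^ 2 = (1 / (2 * C)) ^ 2 * ‖a - b‖ ^ 2 := by
      rw [norm_smul, mul_pow, Real.norm_eq_abs, sq_abs]
    rw [h6] at h2
    have h7 : C * ((1 / (2 * C)) ^ 2 * ‖a - b‖ ^ 2) = 1 / (4 * C) * ‖a - b‖ ^ 2 := by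
      field_simp
      norm_num <;> ring
    have h8 : 1 / (2 * C) * ‖a - b‖ ^ 2 = 2 * (1 / (4 * C) * ‖a - b‖ ^ 2) := by
      field_simp
      norm_num <;> ring
    have h9 : 1 / (4 * C) * ‖a - b‖ ^ 2 ≤ C * ‖y - x‖ ^ 2 := by linarith
    have h10 : ‖a - b‖ ^ 2 ≤ (2 * C * ‖x - y‖) ^ 2 := by
      rw [norm_sub_rev y x, div_mul_eq_mul_div, div_le_iff₀ (by positivity)] at h9
      nlinarith
    exact le_of_sq_le_sq h10 (by positivity)
  have hΩimg : K ⊆ (fun x => gradient (KEnv K Ω u) x) '' Ω := by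
    intro ξ hξ
    obtain ⟨s, hs⟩ := Sset_nonempty hΩb hΩne hu ξ
    refine ⟨s, hSsub ξ hξ hs, (hgrad ⟨hξ, fun η hη => ?_⟩).gradient⟩
    have := phi_le hΩb hΩne hu η hs.1
    rw [phi_eq hs]
    linarith
  have himg : ∀ T : Set (Euc n), (fun x => gradient (KEnv K Ω u) x) '' T ⊆ K := by
    rintro T _ ⟨x, _, rfl⟩
    exact (hopt x).1
  refine ⟨KEnv_convex hKcp hKne hΩb hΩne hu, ?_, ⟨_, hlip⟩,
    (himg _).antisymm (hΩimg.trans (image_mono (subset_univ _))),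
    (himg _).antisymm hΩimg, fun x => ⟨?_, fun Hx hHx => ?_⟩⟩
  · rw [contDiff_one_iff_fderiv]
    refine ⟨fun x => (hgrad (hopt x)).differentiableAt, ?_⟩
    have : fderiv ℝ (KEnv K Ω u) =
        fun x => InnerProductSpace.toDual ℝ (Euc n) (gradient (KEnv K Ω u) x) := by
      funext x
      exact (hgrad (hopt x)).hasFDerivAt.fderiv
    rw [this]
    exact (InnerProductSpace.toDual ℝ (Euc n)).continuous.comp hlip.continuous
  · exact Hset_nonempty hKcp hKcv hΩb hΩne hu hSsub (hopt x)
  · exact KEnv_taylor hKcp hKne hΩo hΩb hΩne hu hu2 (hopt x) hHx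
end
end

section
/- For every bounded connected open set E ⊆ ℝⁿ with smooth boundary, there exists a convex function φ : ℝⁿ → ℝ of class C^{1,1} such that ∇φ(ℝⁿ) = ∇φ(cl(E)) = K and Δφ(x) ≤ Per_K(E) / |E| for almost every x ∈ ℝⁿ, where |E| denotes the Lebesgue measure of E. -/
open MeasureTheory Metric Set
open scoped RealInnerProductSpace ENNReal Topology

noncomputable section

/-- The Laplacian of `φ` at `x`, as the trace of the second derivative in the
standard orthonormal coordinates. -/
def lapl {n : ℕ} (φ : Euc n → ℝ) (x : Euc n) : ℝ :=
  ∑ i : Fin n, fderiv ℝ (fderiv ℝ φ) x (EuclideanSpace.single i 1) (EuclideanSpace.single i 1)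

/-- The anisotropic norm `|v|_{K*} = sup {v·z : z ∈ K}`. -/
def anisoNorm {n : ℕ} (K : Set (Euc n)) (v : Euc n) : ℝ :=
  sSup {r : ℝ | ∃ z ∈ K, r = ⟪v, z⟫}

/-! ### Support function -/

lemma aniso_bddAbove {n : ℕ} {K : Set (Euc n)} (hK : IsCompact K) (v : Euc n) :
    BddAbove {r : ℝ | ∃ z ∈ K, r = ⟪v, z⟫} := by
  have := (hK.image (f := fun z => ⟪v, z⟫) (by fun_prop)).bddAbove
  refine this.mono ?_
  rintro r ⟨z, hz, rfl⟩
  exact ⟨z, hz, rfl⟩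

lemma inner_le_aniso {n : ℕ} {K : Set (Euc n)} (hK : IsCompact K) (v : Euc n) {z : Euc n}
    (hz : z ∈ K) : ⟪v, z⟫ ≤ anisoNorm K v :=
  le_csSup (aniso_bddAbove hK v) ⟨z, hz, rfl⟩

lemma aniso_le {n : ℕ} {K : Set (Euc n)} (h0 : (0 : Euc n) ∈ K) (v : Euc n) {c : ℝ}
    (h : ∀ z ∈ K, ⟪v, z⟫ ≤ c) : anisoNorm K v ≤ c := by
  refine csSup_le ⟨_, 0, h0, rfl⟩ ?_
  rintro r ⟨z, hz, rfl⟩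
  exact h z hz

lemma aniso_nonneg {n : ℕ} {K : Set (Euc n)} (hK : IsCompact K) (h0 : (0 : Euc n) ∈ K)
    (v : Euc n) : 0 ≤ anisoNorm K v := by
  simpa using inner_le_aniso hK v h0

lemma aniso_zero {n : ℕ} {K : Set (Euc n)} (hK : IsCompact K) (h0 : (0 : Euc n) ∈ K) :
    anisoNorm K 0 = 0 :=
  le_antisymm (aniso_le h0 _ (by simp)) (aniso_nonneg hK h0 _)

lemma aniso_add_le {n : ℕ} {K : Set (Euc n)} (hK : IsCompact K) (h0 : (0 : Euc n) ∈ K)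
    (v w : Euc n) : anisoNorm K (v + w) ≤ anisoNorm K v + anisoNorm K w := by
  refine aniso_le h0 _ fun z hz => ?_
  rw [inner_add_left]
  exact add_le_add (inner_le_aniso hK v hz) (inner_le_aniso hK w hz)

lemma aniso_smul {n : ℕ} {K : Set (Euc n)} (hK : IsCompact K) (h0 : (0 : Euc n) ∈ K)
    {t : ℝ} (ht : 0 ≤ t) (v : Euc n) : anisoNorm K (t • v) = t * anisoNorm K v := by
  have key : ∀ {s : ℝ} (_ : 0 ≤ s) (w : Euc n), anisoNorm K (s • w) ≤ s * anisoNorm K w := by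
    intro s hs w
    refine aniso_le h0 _ fun z hz => ?_
    rw [real_inner_smul_left]
    exact mul_le_mul_of_nonneg_left (inner_le_aniso hK w hz) hs
  refine le_antisymm (key ht v) ?_
  rcases ht.eq_or_lt with rfl | ht'
  · simp [aniso_zero hK h0]
  · have := key (inv_nonneg.2 ht) (t • v)
    rw [smul_smul, inv_mul_cancel₀ ht'.ne', one_smul] at this
    calc t * anisoNorm K v ≤ t * (t⁻¹ * anisoNorm K (t • v)) := by gcongr
      _ = _ := by field_simp

lemma aniso_bound {n : ℕ} {K : Set (Euc n)} (hK : IsCompact K) (h0 : (0 : Euc n) ∈ K) :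
    ∃ R : ℝ, 0 < R ∧ ∀ v : Euc n, anisoNorm K v ≤ R * ‖v‖ := by
  obtain ⟨R, hR, h⟩ := hK.isBounded.exists_pos_norm_le
  refine ⟨R, hR, fun v => aniso_le h0 _ fun z hz => ?_⟩
  calc ⟪v, z⟫ ≤ ‖v‖ * ‖z‖ := real_inner_le_norm v z
    _ ≤ ‖v‖ * R := by gcongr; exact h z hz
    _ = R * ‖v‖ := mul_comm _ _

lemma aniso_sub_le {n : ℕ} {K : Set (Euc n)} (hK : IsCompact K) (h0 : (0 : Euc n) ∈ K)
    (v w : Euc n) : anisoNorm K v - anisoNorm K w ≤ anisoNorm K (v - w) := by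
  have := aniso_add_le hK h0 (v - w) w
  rw [sub_add_cancel] at this
  linarith

lemma aniso_continuous {n : ℕ} {K : Set (Euc n)} (hK : IsCompact K) (h0 : (0 : Euc n) ∈ K) :
    Continuous (anisoNorm K) := by
  obtain ⟨R, hR, h⟩ := aniso_bound hK h0
  refine (LipschitzWith.of_le_add_mul' R fun x y => ?_).continuous
  have := aniso_sub_le hK h0 x y
  have := h (x - y)
  rw [dist_eq_norm]
  linarith

lemma mem_of_inner_le_aniso {n : ℕ} {K : Set (Euc n)} (hK : IsCompact K) (hcv : Convex ℝ K)
    (h0 : (0 : Euc n) ∈ K) {p : Euc n} (h : ∀ v, ⟪v, p⟫ ≤ anisoNorm K v) : p ∈ K := by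
  by_contra hp
  obtain ⟨f, u, hu, hup⟩ := geometric_hahn_banach_closed_point hcv hK.isClosed hp
  set v := (InnerProductSpace.toDual ℝ (Euc n)).symm f with hv
  have hf : ∀ x, f x = ⟪v, x⟫ := fun x => by simp [hv]
  have h1 : anisoNorm K v ≤ u := aniso_le h0 _ fun z hz => by rw [← hf]; exact (hu z hz).le
  have := h v
  rw [← hf] at this
  linarith

/-! ### Subgradients -/

lemma exists_subgradient {n : ℕ} {φ : Euc n → ℝ} (hcv : ConvexOn ℝ univ φ) (hc : Continuous φ)
    (x0 : Euc n) : ∃ p : Euc n, ∀ x, φ x0 + ⟪p, x - x0⟫ ≤ φ x := by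
  have hS : Convex ℝ {q : Euc n × ℝ | q.1 ∈ univ ∧ φ q.1 < q.2} := hcv.convex_strict_epigraph
  have hSo : IsOpen {q : Euc n × ℝ | q.1 ∈ univ ∧ φ q.1 < q.2} := by
    simp only [mem_univ, true_and]
    exact isOpen_lt (by fun_prop) (by fun_prop)
  obtain ⟨f, hf⟩ := geometric_hahn_banach_open_point (x := (x0, φ x0)) hS hSo (by simp)
  have hdec : ∀ (x : Euc n) (t : ℝ), f (x, t) = f (x, 0) + t * f (0, 1) := by
    intro x t
    have : (x, t) = (x, (0 : ℝ)) + t • ((0 : Euc n), (1 : ℝ)) := by simp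
    rw [this, map_add, map_smul, smul_eq_mul]
  have hb : f (0, 1) < 0 := by
    have := hf (x0, φ x0 + 1) (by simp)
    rw [hdec x0 (φ x0 + 1), hdec x0 (φ x0)] at this
    linarith
  set g : Euc n →L[ℝ] ℝ := (-(f (0, 1))⁻¹) • f.comp (ContinuousLinearMap.inl ℝ (Euc n) ℝ) with hg
  refine ⟨(InnerProductSpace.toDual ℝ (Euc n)).symm g, fun x => ?_⟩
  rw [InnerProductSpace.toDual_symm_apply]
  refine le_of_forall_gt_imp_ge_of_dense fun t ht => ?_
  have h1 := hf (x, t) (by simpa using ht)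
  rw [hdec x t, hdec x0 (φ x0)] at h1
  have h2 : g (x - x0) = -(f (0, 1))⁻¹ * (f (x, 0) - f (x0, 0)) := by
    simp [hg, ← map_sub]
  rw [h2]
  have h3 : (f (x, 0) - f (x0, 0)) < (φ x0 - t) * f (0, 1) := by linarith
  have h4 : -(f (0, 1))⁻¹ * (f (x, 0) - f (x0, 0)) ≤ -(f (0, 1))⁻¹ * ((φ x0 - t) * f (0, 1)) := by
    apply mul_le_mul_of_nonneg_left h3.le
    have := inv_lt_zero.2 hb
    linarith
  have h5 : -(f (0, 1))⁻¹ * ((φ x0 - t) * f (0, 1)) = t - φ x0 := by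
    field_simp [hb.ne]
    ring
  linarith

/-! ### Finite graph lemma -/

lemma graph_lemma {ι : Type*} [Fintype ι] [Nonempty ι] (c : ι → ι → ℝ)
    (hsymm : ∀ x y, c x y = c y x) (hnn : ∀ x y, 0 ≤ c x y) (g : ι → ℝ) (hg : 0 ≤ ∑ x, g x) :
    ∃ (C : Set ι) (u : ι → ℝ), C.Nonempty ∧ (∀ x ∈ C, ∀ y, 0 < c x y → y ∈ C) ∧
      ∀ x ∈ C, ∑ y, c x y * (u y - u x) ≤ g x := by
  let L : EuclideanSpace ℝ ι →ₗ[ℝ] EuclideanSpace ℝ ι :=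
    { toFun := fun u => WithLp.toLp 2 fun x => ∑ y, c x y * (u y - u x)
      map_add' := fun u v => by
        ext x
        simp only [PiLp.add_apply, ← Finset.sum_add_distrib]
        exact Finset.sum_congr rfl fun y _ => by ring
      map_smul' := fun t u => by
        ext x
        simp only [PiLp.smul_apply, smul_eq_mul, RingHom.id_apply, Finset.mul_sum]
        exact Finset.sum_congr rfl fun y _ => by ring }
  have hL : ∀ u x, L u x = ∑ y, c x y * (u y - u x) := fun u x => rfl
  have hinner : ∀ u v, ⟪L u, v⟫ = - (∑ x, ∑ y, c x y * (u y - u x) * (v y - v x)) / 2 := by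
    intro u v
    have h1 : ⟪L u, v⟫ = ∑ x, ∑ y, c x y * (u y - u x) * v x := by
      simp only [PiLp.inner_apply, hL, RCLike.inner_apply, conj_trivial, Finset.mul_sum]
      exact Finset.sum_congr rfl fun x _ => Finset.sum_congr rfl fun y _ => by ring
    have h2 : ∑ x, ∑ y, c x y * (u y - u x) * v x = ∑ x, ∑ y, c x y * (u x - u y) * v y := by
      rw [Finset.sum_comm]
      exact Finset.sum_congr rfl fun x _ => Finset.sum_congr rfl fun y _ => by
        rw [hsymm x y]
    have h3 : ∑ x, ∑ y, c x y * (u y - u x) * (v y - v x) =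
        -(∑ x, ∑ y, c x y * (u x - u y) * v y) - ∑ x, ∑ y, c x y * (u y - u x) * v x := by
      rw [← Finset.sum_neg_distrib, ← Finset.sum_sub_distrib]
      refine Finset.sum_congr rfl fun x _ => ?_
      rw [← Finset.sum_neg_distrib, ← Finset.sum_sub_distrib]
      exact Finset.sum_congr rfl fun y _ => by ring
    rw [h3, ← h2, h1]
    ring
  have hsym : L.IsSymmetric := by
    intro u v
    rw [hinner, real_inner_comm, hinner]
    congr 2
    exact Finset.sum_congr rfl fun x _ => Finset.sum_congr rfl fun y _ => by ring
  obtain ⟨g1, hg1, g0, hg0, hsum⟩ :=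
    (LinearMap.range L).exists_add_mem_mem_orthogonal (WithLp.toLp 2 g)
  obtain ⟨u, rfl⟩ := hg1
  rw [hsym.orthogonal_range] at hg0
  have hLg0 : L g0 = 0 := hg0
  have hconst : ∀ x y, 0 < c x y → g0 x = g0 y := by
    intro x y hxy
    have h := hinner g0 g0
    rw [hLg0, inner_zero_left] at h
    have h0 : ∑ x, ∑ y, c x y * (g0 y - g0 x) * (g0 y - g0 x) = 0 := by linarith
    have hnn' : ∀ x y, 0 ≤ c x y * (g0 y - g0 x) * (g0 y - g0 x) := fun x y => by
      rw [mul_assoc]; exact mul_nonneg (hnn x y) (mul_self_nonneg _)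
    have h1 := (Finset.sum_eq_zero_iff_of_nonneg
      (fun x _ => Finset.sum_nonneg fun y _ => hnn' x y)).1 h0 x (Finset.mem_univ _)
    have h2 := (Finset.sum_eq_zero_iff_of_nonneg (fun y _ => hnn' x y)).1 h1 y (Finset.mem_univ _)
    rw [mul_assoc] at h2
    have h3 := (mul_eq_zero.1 h2).resolve_left hxy.ne'
    have h4 := mul_self_eq_zero.1 h3
    linarith
  have hsum0 : 0 ≤ ∑ x, g0 x := by
    have h1 : ∑ x, L u x = 0 := by
      have := hinner u (WithLp.toLp 2 fun _ => 1)
      simpa [PiLp.inner_apply] using this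
    have h2 : ∀ x, g x = L u x + g0 x := fun x => by
      have := congrArg (fun v => v x) hsum
      simpa using this
    simp only [h2, Finset.sum_add_distrib, h1, zero_add] at hg
    exact hg
  obtain ⟨x0, hx0⟩ := Finite.exists_max (fun x => g0 x)
  have hpos : 0 ≤ g0 x0 := by
    by_contra hneg
    push Not at hneg
    have : ∑ x, g0 x < 0 := Finset.sum_neg (fun x _ => (hx0 x).trans_lt hneg) Finset.univ_nonempty
    linarith
  refine ⟨{x | g0 x = g0 x0}, fun x => u x, ⟨x0, rfl⟩, fun x hx y hxy => ?_, fun x hx => ?_⟩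
  · exact (hconst x y hxy).symm.trans hx
  · have := congrArg (fun v => v x) hsum
    simp only [PiLp.add_apply, hL] at this
    have hx' : g0 x = g0 x0 := hx
    linarith

/-! ### Convex envelope with slopes in `K` of a function on a finite set -/

lemma envelope {n : ℕ} {K : Set (Euc n)} (hK : IsCompact K) (hcv : Convex ℝ K)
    (h0 : (0 : Euc n) ∈ K) (C : Set (Euc n)) (hCf : C.Finite) (hC : C.Nonempty)
    (u : Euc n → ℝ) (h c : ℝ)
    (hcontact : ∀ y ∈ C, ∀ p ∈ K, (∀ y' ∈ C, u y + ⟪p, y' - y⟫ ≤ u y') →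
      (∀ i : Fin n, y + h • EuclideanSpace.single i (1 : ℝ) ∈ C ∧
        y - h • EuclideanSpace.single i (1 : ℝ) ∈ C) ∧
      ∑ i : Fin n, (u (y + h • EuclideanSpace.single i (1 : ℝ)) +
        u (y - h • EuclideanSpace.single i (1 : ℝ)) - 2 * u y) ≤ c) :
    ∃ φ : Euc n → ℝ, ConvexOn ℝ univ φ ∧ (∀ x v, φ (x + v) ≤ φ x + anisoNorm K v) ∧
      (∀ p ∈ K, ∃ y ∈ C, ∀ x, φ y + ⟪p, x - y⟫ ≤ φ x) ∧
      ∀ x, ∑ i : Fin n, (φ (x + h • EuclideanSpace.single i (1 : ℝ)) +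
        φ (x - h • EuclideanSpace.single i (1 : ℝ)) - 2 * φ x) ≤ c := by
  classical
  have : Fintype C := hCf.fintype
  have : Nonempty C := hC.to_subtype
  set N := anisoNorm K with hN
  have hNc : Continuous N := aniso_continuous hK h0
  let b : (C → ℝ) → Euc n := fun l => ∑ y, l y • (y : Euc n)
  let U : (C → ℝ) → ℝ := fun l => ∑ y, l y * u y
  have hb : Continuous b := by fun_prop
  have hU : Continuous U := by fun_prop
  have hex : ∀ x : Euc n, ∃ l ∈ stdSimplex ℝ C, ∀ l' ∈ stdSimplex ℝ C,
      U l + N (x - b l) ≤ U l' + N (x - b l') := by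
    intro x
    obtain ⟨l, hl, hmin⟩ := (isCompact_stdSimplex ℝ C).exists_isMinOn
      ⟨_, ite_eq_mem_stdSimplex ℝ (Classical.arbitrary C)⟩
      (f := fun l => U l + N (x - b l)) (by fun_prop)
    exact ⟨l, hl, fun l' hl' => hmin hl'⟩
  choose l hl hmin using hex
  let φ : Euc n → ℝ := fun x => U (l x) + N (x - b (l x))
  have hφle : ∀ x, ∀ l' ∈ stdSimplex ℝ C, φ x ≤ U l' + N (x - b l') := fun x => hmin x
  have hφu : ∀ y ∈ C, φ y ≤ u y := by
    intro y hy
    have := hφle y _ (ite_eq_mem_stdSimplex ℝ (⟨y, hy⟩ : C))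
    have e1 : U (fun j => if (⟨y, hy⟩ : C) = j then (1 : ℝ) else 0) = u y := by
      simp [U]
    have e2 : b (fun j => if (⟨y, hy⟩ : C) = j then (1 : ℝ) else 0) = y := by
      simp [b]
    rw [e1, e2, sub_self, hN, aniso_zero hK h0, add_zero] at this
    exact this
  have hslope : ∀ x v, φ (x + v) ≤ φ x + N v := by
    intro x v
    have h1 := hφle (x + v) (l x) (hl x)
    have h2 := aniso_add_le hK h0 (x - b (l x)) v
    have e : x - b (l x) + v = x + v - b (l x) := by abel
    rw [e] at h2
    show _ ≤ U (l x) + N (x - b (l x)) + N v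
    linarith
  have hconv : ConvexOn ℝ univ φ := by
    refine ⟨convex_univ, fun x _ y _ s t hs ht hst => ?_⟩
    have h1 := hφle (s • x + t • y) (s • l x + t • l y)
      (convex_stdSimplex ℝ C (hl x) (hl y) hs ht hst)
    have e1 : U (s • l x + t • l y) = s * U (l x) + t * U (l y) := by
      simp only [U, Pi.add_apply, Pi.smul_apply, smul_eq_mul, Finset.mul_sum,
        ← Finset.sum_add_distrib]
      exact Finset.sum_congr rfl fun y _ => by ring
    have e2 : b (s • l x + t • l y) = s • b (l x) + t • b (l y) := by
      simp only [b, Pi.add_apply, Pi.smul_apply, smul_eq_mul, Finset.smul_sum,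
        ← Finset.sum_add_distrib, add_smul, mul_smul]
    have e3 : s • x + t • y - (s • b (l x) + t • b (l y)) =
        s • (x - b (l x)) + t • (y - b (l y)) := by
      simp only [smul_sub]; abel
    have h2 := aniso_add_le hK h0 (s • (x - b (l x))) (t • (y - b (l y)))
    rw [aniso_smul hK h0 hs, aniso_smul hK h0 ht] at h2
    rw [e1, e2, e3] at h1
    simp only [smul_eq_mul]
    show _ ≤ s * (U (l x) + N (x - b (l x))) + t * (U (l y) + N (y - b (l y)))
    linarith
  have hφc : Continuous φ := by
    obtain ⟨R, hR, hb⟩ := aniso_bound hK h0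
    refine (LipschitzWith.of_le_add_mul' R fun x y => ?_).continuous
    have h1 := hslope y (x - y)
    have h2 := hb (x - y)
    rw [dist_eq_norm]
    rw [add_sub_cancel] at h1
    linarith
  -- affine minorants on `C` extend
  have hext : ∀ p ∈ K, ∀ a : ℝ, (∀ y ∈ C, a + ⟪p, y⟫ ≤ u y) → ∀ x, a + ⟪p, x⟫ ≤ φ x := by
    intro p hp a ha x
    have h1 : a + ⟪p, b (l x)⟫ ≤ U (l x) := by
      have e : a + ⟪p, b (l x)⟫ = ∑ y : C, l x y * (a + ⟪p, (y : Euc n)⟫) := by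
        simp only [b, inner_sum, inner_smul_right, mul_add, Finset.sum_add_distrib,
          ← Finset.sum_mul, (hl x).2, one_mul]
      rw [e]
      exact Finset.sum_le_sum fun y _ => mul_le_mul_of_nonneg_left (ha y y.2) ((hl x).1 y)
    have h2 := inner_le_aniso hK (x - b (l x)) hp
    rw [real_inner_comm, inner_sub_right] at h2
    show _ ≤ U (l x) + N (x - b (l x))
    linarith
  refine ⟨φ, hconv, hslope, ?_, ?_⟩
  · intro p hp
    obtain ⟨y, hy, hym⟩ := hCf.toFinset.exists_min_image (fun y => u y - ⟪p, y⟫)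
      (by simpa using hC)
    have hy' : y ∈ C := by simpa using hy
    refine ⟨y, hy', fun x => ?_⟩
    have := hext p hp (u y - ⟪p, y⟫) (fun y' hy'' => by
      have := hym y' (by simpa using hy''); linarith) x
    have h2 := hφu y hy'
    rw [inner_sub_right]
    linarith
  · intro x
    obtain ⟨p, hp⟩ := exists_subgradient hconv hφc x
    have hpK : p ∈ K := by
      refine mem_of_inner_le_aniso hK hcv h0 fun v => ?_
      have h1 := hp (x + v)
      have h2 := hslope x v
      rw [add_sub_cancel_left, real_inner_comm] at h1
      linarith
    have hge : ∀ y ∈ C, φ x + ⟪p, y - x⟫ ≤ u y := fun y hy => (hp y).trans (hφu y hy)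
    have heq : ∀ y : C, l x y ≠ 0 → u y = φ x + ⟪p, (y : Euc n) - x⟫ := by
      have hs : ∑ y : C, l x y * (u y - (φ x + ⟪p, (y : Euc n) - x⟫)) ≤ 0 := by
        have e : ∑ y : C, l x y * (u y - (φ x + ⟪p, (y : Euc n) - x⟫)) =
            U (l x) - φ x - ⟪p, b (l x)⟫ + ⟪p, x⟫ := by
          have e1 : ∑ y : C, l x y * (u y - (φ x + ⟪p, (y : Euc n) - x⟫)) =
            ∑ y : C, (l x y * u y - l x y * φ x - l x y * ⟪p, (y : Euc n)⟫ + l x y * ⟪p, x⟫) :=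
            Finset.sum_congr rfl fun y _ => by rw [inner_sub_right]; ring
          rw [e1]
          simp only [Finset.sum_add_distrib, Finset.sum_sub_distrib, ← Finset.sum_mul, (hl x).2,
            one_mul, b, inner_sum, inner_smul_right, U]
        have h2 := inner_le_aniso hK (x - b (l x)) hpK
        rw [real_inner_comm, inner_sub_right] at h2
        have h3 : φ x = U (l x) + N (x - b (l x)) := rfl
        rw [e]
        linarith
      have hnn : ∀ y ∈ (Finset.univ : Finset C),
          0 ≤ l x y * (u y - (φ x + ⟪p, (y : Euc n) - x⟫)) := fun y _ =>
        mul_nonneg ((hl x).1 y) (sub_nonneg.2 (hge y y.2))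
      have hz := (Finset.sum_eq_zero_iff_of_nonneg hnn).1 (le_antisymm hs (Finset.sum_nonneg hnn))
      intro y hy
      have := (mul_eq_zero.1 (hz y (Finset.mem_univ _))).resolve_left hy
      linarith
    have hcon : ∀ y : C, l x y ≠ 0 → φ y = u y ∧ ∑ i : Fin n,
        (φ (y + h • EuclideanSpace.single i (1 : ℝ)) +
        φ (y - h • EuclideanSpace.single i (1 : ℝ)) - 2 * φ y) ≤ c := by
      intro y hy
      have e := heq y hy
      have e2 : φ y = u y := le_antisymm (hφu y y.2) (by rw [e]; exact hp y)
      refine ⟨e2, ?_⟩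
      obtain ⟨h1, h2⟩ := hcontact y y.2 p hpK (fun y' hy' => by
        have := hge y' hy'
        rw [e, add_assoc, ← inner_add_right]
        convert this using 3
        abel)
      refine le_trans (Finset.sum_le_sum fun i _ => ?_) h2
      have := hφu _ (h1 i).1
      have := hφu _ (h1 i).2
      rw [e2]
      linarith
    have hfx : φ x = ∑ y : C, l x y * φ y + N (x - b (l x)) := by
      show U (l x) + N (x - b (l x)) = _
      congr 1
      refine Finset.sum_congr rfl fun y _ => ?_
      by_cases hy : l x y = 0
      · simp [hy]
      · rw [(hcon y hy).1]
    have hfz : ∀ z, φ (x + z) ≤ ∑ y : C, l x y * φ (y + z) + N (x - b (l x)) := by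
      intro z
      have h1 := hslope (b (l x) + z) (x - b (l x))
      have e1 : b (l x) + z + (x - b (l x)) = x + z := by abel
      rw [e1] at h1
      have h2 := hconv.map_sum_le (t := Finset.univ) (w := l x) (p := fun y : C => (y : Euc n) + z)
        (fun y _ => (hl x).1 y) (hl x).2 (fun _ _ => mem_univ _)
      have e2 : ∑ y : C, l x y • ((y : Euc n) + z) = b (l x) + z := by
        simp only [smul_add, Finset.sum_add_distrib, ← Finset.sum_smul, (hl x).2, one_smul, b]
      rw [e2] at h2
      simp only [smul_eq_mul] at h2
      linarith
    calc ∑ i : Fin n, (φ (x + h • EuclideanSpace.single i (1 : ℝ)) +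
          φ (x - h • EuclideanSpace.single i (1 : ℝ)) - 2 * φ x)
        ≤ ∑ i : Fin n, ∑ y : C, l x y * (φ (y + h • EuclideanSpace.single i (1 : ℝ)) +
          φ (y - h • EuclideanSpace.single i (1 : ℝ)) - 2 * φ y) := by
          refine Finset.sum_le_sum fun i _ => ?_
          have h1 := hfz (h • EuclideanSpace.single i (1 : ℝ))
          have h2 := hfz (-(h • EuclideanSpace.single i (1 : ℝ)))
          simp only [← sub_eq_add_neg] at h2
          have e : ∑ y : C, l x y * (φ (y + h • EuclideanSpace.single i (1 : ℝ)) +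
              φ (y - h • EuclideanSpace.single i (1 : ℝ)) - 2 * φ y) =
              ∑ y : C, l x y * φ (y + h • EuclideanSpace.single i (1 : ℝ)) +
              ∑ y : C, l x y * φ (y - h • EuclideanSpace.single i (1 : ℝ)) -
              2 * ∑ y : C, l x y * φ y := by
            rw [Finset.mul_sum, ← Finset.sum_add_distrib, ← Finset.sum_sub_distrib]
            exact Finset.sum_congr rfl fun y _ => by ring
          rw [e]
          linarith
      _ = ∑ y : C, l x y * ∑ i : Fin n, (φ (y + h • EuclideanSpace.single i (1 : ℝ)) +
          φ (y - h • EuclideanSpace.single i (1 : ℝ)) - 2 * φ y) := by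
          rw [Finset.sum_comm]
          simp only [Finset.mul_sum]
      _ ≤ ∑ y : C, l x y * c := by
          refine Finset.sum_le_sum fun y _ => ?_
          by_cases hy : l x y = 0
          · simp [hy]
          · exact mul_le_mul_of_nonneg_left (hcon y hy).2 ((hl x).1 y)
      _ = c := by rw [← Finset.sum_mul, (hl x).2, one_mul]

/-! ### Convex functions with bounded second differences are `C^{1,1}` -/

lemma convex_second_diff_nonneg {n : ℕ} {φ : Euc n → ℝ} (hcv : ConvexOn ℝ univ φ) (x v : Euc n) :
    0 ≤ φ (x + v) + φ (x - v) - 2 * φ x := by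
  have h := hcv.2 (mem_univ (x + v)) (mem_univ (x - v))
    (show (0 : ℝ) ≤ 1 / 2 by norm_num) (show (0 : ℝ) ≤ 1 / 2 by norm_num) (by norm_num)
  have e : (1 / 2 : ℝ) • (x + v) + (1 / 2 : ℝ) • (x - v) = x := by
    rw [← smul_add, add_add_sub_cancel, ← two_smul ℝ, smul_smul]; norm_num
  rw [e] at h
  simp only [smul_eq_mul] at h
  linarith

lemma upper_of_subgradient {n : ℕ} {φ : Euc n → ℝ} {M : ℝ}
    (hM : ∀ x v, φ (x + v) + φ (x - v) - 2 * φ x ≤ M * ‖v‖ ^ 2) {x p : Euc n}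
    (hp : ∀ y, φ x + ⟪p, y - x⟫ ≤ φ y) (y : Euc n) :
    φ y ≤ φ x + ⟪p, y - x⟫ + M * ‖y - x‖ ^ 2 := by
  have h1 := hM x (y - x)
  have h2 := hp (x - (y - x))
  have e1 : x - (y - x) - x = -(y - x) := by abel
  rw [add_sub_cancel] at h1
  rw [e1, inner_neg_right] at h2
  linarith

lemma hasGradient_of_subgradient {n : ℕ} {φ : Euc n → ℝ} {M : ℝ}
    (hM : ∀ x v, φ (x + v) + φ (x - v) - 2 * φ x ≤ M * ‖v‖ ^ 2) {x p : Euc n}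
    (hp : ∀ y, φ x + ⟪p, y - x⟫ ≤ φ y) : HasGradientAt φ p x := by
  rw [hasGradientAt_iff_isLittleO]
  have : (fun y => φ y - φ x - ⟪p, y - x⟫) =O[𝓝 x] fun y => ‖y - x‖ ^ 2 := by
    refine Asymptotics.IsBigO.of_bound |M| (Filter.Eventually.of_forall fun y => ?_)
    have h1 := hp y
    have h2 := upper_of_subgradient hM hp y
    rw [Real.norm_eq_abs, abs_of_nonneg (by linarith), Real.norm_eq_abs,
      abs_of_nonneg (sq_nonneg ‖y - x‖)]
    have := mul_le_mul_of_nonneg_right (le_abs_self M) (sq_nonneg ‖y - x‖)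
    linarith
  refine this.trans_isLittleO ?_
  have h3 : (fun z : Euc n => ‖z‖ ^ 2) =o[𝓝 0] fun z => z := by
    have := Asymptotics.isLittleO_norm_pow_id (E' := Euc n) (n := 2) (by norm_num)
    exact this
  have h4 : Filter.Tendsto (fun y => y - x) (𝓝 x) (𝓝 0) := by
    have : Continuous fun y : Euc n => y - x := by fun_prop
    simpa using this.tendsto x
  exact h3.comp_tendsto h4

lemma gradient_lipschitz {n : ℕ} {φ : Euc n → ℝ} {M : ℝ}
    (hM : ∀ x v, φ (x + v) + φ (x - v) - 2 * φ x ≤ M * ‖v‖ ^ 2) {x y p q : Euc n}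
    (hp : ∀ z, φ x + ⟪p, z - x⟫ ≤ φ z) (hq : ∀ z, φ y + ⟪q, z - y⟫ ≤ φ z) :
    ‖p - q‖ ≤ 2 * M * ‖x - y‖ := by
  have key : ∀ w : Euc n, ⟪p - q, w⟫ ≤ M * ‖w‖ ^ 2 + M * ‖x - y‖ ^ 2 := by
    intro w
    have h1 := hp (y + w)
    have h2 := upper_of_subgradient hM hq (y + w)
    have h3 := upper_of_subgradient hM hp y
    rw [add_sub_cancel_left] at h2
    have e : y + w - x = (y - x) + w := by abel
    rw [e, inner_add_right] at h1
    rw [norm_sub_rev y x] at h3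
    rw [inner_sub_left]
    linarith
  rcases eq_or_ne p q with rfl | hpq
  · rw [sub_self, norm_zero]
    by_cases hxy : x = y
    · simp [hxy]
    have h1 := hM x (x - y)
    have h2 := key 0
    simp only [inner_zero_right, norm_zero] at h2
    have h3 : 0 < ‖x - y‖ := norm_pos_iff.2 (sub_ne_zero.2 hxy)
    have h4 : 0 ≤ M * ‖x - y‖ ^ 2 := by linarith
    have h5 : 0 ≤ M := nonneg_of_mul_nonneg_left h4 (by positivity)
    positivity
  · have hpos : 0 < ‖p - q‖ := norm_pos_iff.2 (sub_ne_zero.2 hpq)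
    have h1 := key ((‖x - y‖ / ‖p - q‖) • (p - q))
    rw [inner_smul_right, real_inner_self_eq_norm_sq, norm_smul, Real.norm_eq_abs,
      abs_of_nonneg (by positivity)] at h1
    have e : ‖x - y‖ / ‖p - q‖ * ‖p - q‖ = ‖x - y‖ := by field_simp
    rw [e] at h1
    have e2 : ‖x - y‖ / ‖p - q‖ * ‖p - q‖ ^ 2 = ‖x - y‖ * ‖p - q‖ := by field_simp
    rw [e2] at h1
    by_cases hxy : ‖x - y‖ = 0
    · have hxy' : x = y := by simpa [sub_eq_zero] using hxy
      subst hxy'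
      exact absurd ((hasGradient_of_subgradient hM hp).unique (hasGradient_of_subgradient hM hq))
        hpq
    · have h3 : 0 < ‖x - y‖ := lt_of_le_of_ne (norm_nonneg _) (Ne.symm hxy)
      have h4 : ‖x - y‖ * ‖p - q‖ ≤ ‖x - y‖ * (2 * M * ‖x - y‖) := by linarith
      exact le_of_mul_le_mul_left h4 h3

lemma second_diff_all {n : ℕ} (hn : 1 ≤ n) {φ : Euc n → ℝ} (hcv : ConvexOn ℝ univ φ) {c : ℝ}
    (hc : ∀ x (i : Fin n) (t : ℝ), φ (x + t • EuclideanSpace.single i (1 : ℝ)) +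
      φ (x - t • EuclideanSpace.single i (1 : ℝ)) - 2 * φ x ≤ c * t ^ 2) (x v : Euc n) :
    φ (x + v) + φ (x - v) - 2 * φ x ≤ (n * c) * ‖v‖ ^ 2 := by
  have hn0 : (n : ℝ) ≠ 0 := by positivity
  have hsum : ∑ _i : Fin n, (1 / n : ℝ) = 1 := by simp [hn0]
  have hv : ∑ i : Fin n, v i • (EuclideanSpace.single i (1 : ℝ) : Euc n) = v := by
    ext j
    simp [Finset.sum_apply, Pi.single_apply]
  have key : ∀ s : ℝ, φ (x + s • v) ≤
      ∑ i : Fin n, (1 / n : ℝ) * φ (x + (s * (n * v i)) • EuclideanSpace.single i (1 : ℝ)) := by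
    intro s
    have h2 := hcv.map_sum_le (t := Finset.univ) (w := fun _ : Fin n => (1 / n : ℝ))
        (p := fun i : Fin n => x + (s * (n * v i)) • EuclideanSpace.single i (1 : ℝ))
        (fun y _ => by positivity) hsum (fun _ _ => mem_univ _)
    have e2 : ∑ i : Fin n, (1 / n : ℝ) • (x + (s * (n * v i)) •
        (EuclideanSpace.single i (1 : ℝ) : Euc n)) = x + s • v := by
      simp only [smul_add, Finset.sum_add_distrib, ← Finset.sum_smul, hsum, one_smul]
      congr 1
      conv_rhs => rw [← hv, Finset.smul_sum]
      refine Finset.sum_congr rfl fun i _ => ?_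
      rw [smul_smul, smul_smul]
      congr 1
      field_simp
    rw [e2] at h2
    exact h2
  have h1 := key 1
  have h2 := key (-1)
  rw [one_smul] at h1
  rw [neg_one_smul, ← sub_eq_add_neg] at h2
  have h3 : φ x = ∑ i : Fin n, (1 / n : ℝ) * φ x := by rw [← Finset.sum_mul, hsum, one_mul]
  calc φ (x + v) + φ (x - v) - 2 * φ x
      ≤ ∑ i : Fin n, (1 / n : ℝ) * (φ (x + (n * v i) • EuclideanSpace.single i (1 : ℝ)) +
        φ (x - (n * v i) • EuclideanSpace.single i (1 : ℝ)) - 2 * φ x) := by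
        have e : ∑ i : Fin n, (1 / n : ℝ) * (φ (x + (n * v i) • EuclideanSpace.single i (1 : ℝ)) +
          φ (x - (n * v i) • EuclideanSpace.single i (1 : ℝ)) - 2 * φ x) =
          ∑ i : Fin n, (1 / n : ℝ) * φ (x + (1 * (n * v i)) • EuclideanSpace.single i (1 : ℝ)) +
          ∑ i : Fin n, (1 / n : ℝ) * φ (x + (-1 * (n * v i)) • EuclideanSpace.single i (1 : ℝ)) -
          2 * ∑ i : Fin n, (1 / n : ℝ) * φ x := by
          rw [Finset.mul_sum, ← Finset.sum_add_distrib, ← Finset.sum_sub_distrib]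
          refine Finset.sum_congr rfl fun i _ => ?_
          rw [one_mul, neg_one_mul, neg_smul, ← sub_eq_add_neg]
          ring
        rw [e, ← h3]
        linarith
    _ ≤ ∑ i : Fin n, (1 / n : ℝ) * (c * (n * v i) ^ 2) := by
        refine Finset.sum_le_sum fun i _ => mul_le_mul_of_nonneg_left (hc x i _) (by positivity)
    _ = (n * c) * ‖v‖ ^ 2 := by
        rw [EuclideanSpace.norm_sq_eq, Finset.mul_sum]
        refine Finset.sum_congr rfl fun i _ => ?_
        rw [Real.norm_eq_abs, sq_abs]
        field_simp

lemma discrete_second_diff {a : ℤ → ℝ} {C : ℝ} (h : ∀ j, a (j + 1) + a (j - 1) - 2 * a j ≤ C)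
    (m : ℕ) : a m + a (-m) - 2 * a 0 ≤ C * (m : ℝ) ^ 2 := by
  have key : ∀ m : ℕ, a m + a (-m) - 2 * a 0 ≤ C * (m : ℝ) ^ 2 ∧
      (a (m + 1) - a m) - (a (-m) - a (-m - 1)) ≤ (2 * m + 1) * C := by
    intro m
    induction m with
    | zero =>
      have := h 0
      simp only [zero_add, zero_sub] at this
      norm_num
      refine ⟨by linarith, by linarith⟩
    | succ m ih =>
      have h1 := h (m + 1)
      have h2 := h (-m - 1)
      have e1 : (-(m : ℤ) - 1 + 1) = -m := by ring
      have e2 : ((m : ℤ) + 1 - 1) = m := by ring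
      have e3 : -((m : ℤ) + 1) = -m - 1 := by ring
      rw [e1] at h2
      rw [e2] at h1
      push_cast
      rw [e3]
      constructor
      · nlinarith [ih.1, ih.2]
      · nlinarith [ih.2]
  exact (key m).1

lemma taylor_lower {n : ℕ} {φ : Euc n → ℝ} (hd : Differentiable ℝ φ) {x : Euc n}
    (hx : DifferentiableAt ℝ (fderiv ℝ φ) x) {η : ℝ} (hη : 0 < η) :
    ∃ r > 0, ∀ z : Euc n, ‖z‖ ≤ r → φ x + fderiv ℝ φ x z +
      (1 / 2) * fderiv ℝ (fderiv ℝ φ) x z z - η * ‖z‖ ^ 2 ≤ φ (x + z) := by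
  have h1 := hx.hasFDerivAt.isLittleO
  have h2 := h1.def hη
  obtain ⟨r, hr, hr'⟩ := Metric.eventually_nhds_iff.1 h2
  refine ⟨r / 2, by positivity, fun z hz => ?_⟩
  set B := fderiv ℝ (fderiv ℝ φ) x with hB
  set ψ : ℝ → ℝ := fun s => φ (x + s • z) - s * fderiv ℝ φ x z - s ^ 2 / 2 * B z z with hψ
  have hder : ∀ s : ℝ, HasDerivAt ψ (fderiv ℝ φ (x + s • z) z - fderiv ℝ φ x z - s * B z z) s := by
    intro s
    have d1 : HasDerivAt (fun s : ℝ => x + s • z) z s := by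
      simpa using ((hasDerivAt_id s).smul_const z).const_add x
    have d2 := (hd (x + s • z)).hasFDerivAt.comp_hasDerivAt s d1
    have d3 := (d2.sub ((hasDerivAt_id s).mul_const (fderiv ℝ φ x z))).sub
      ((((hasDerivAt_id s).pow 2).div_const 2).mul_const (B z z))
    refine d3.congr_deriv ?_
    simp
  obtain ⟨s, hs, hs'⟩ := exists_hasDerivAt_eq_slope ψ _ (zero_lt_one' ℝ)
    (fun s _ => (hder s).continuousAt.continuousWithinAt) (fun s _ => hder s)
  have e1 : ψ 1 = φ (x + z) - fderiv ℝ φ x z - 1 / 2 * B z z := by simp [hψ]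
  have e0 : ψ 0 = φ x := by simp [hψ]
  rw [e1, e0] at hs'
  have hsz : dist (x + s • z) x < r := by
    rw [dist_eq_norm, add_sub_cancel_left, norm_smul, Real.norm_eq_abs, abs_of_pos hs.1]
    have := mul_le_mul_of_nonneg_right hs.2.le (norm_nonneg z)
    linarith
  have h3 := hr' hsz
  rw [add_sub_cancel_left] at h3
  have h4 : ‖(fderiv ℝ φ (x + s • z) - fderiv ℝ φ x - B (s • z)) z‖ ≤ η * ‖s • z‖ * ‖z‖ :=
    (ContinuousLinearMap.le_opNorm _ _).trans (by gcongr)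
  have e3 : (fderiv ℝ φ (x + s • z) - fderiv ℝ φ x - B (s • z)) z =
      fderiv ℝ φ (x + s • z) z - fderiv ℝ φ x z - s * B z z := by
    simp
  rw [e3, hs', norm_smul, Real.norm_eq_abs, Real.norm_eq_abs, abs_of_pos hs.1] at h4
  have h5 := (abs_le.1 h4).1
  have h6 : η * (s * ‖z‖) * ‖z‖ ≤ η * ‖z‖ ^ 2 := by
    have : s * (η * ‖z‖ ^ 2) ≤ 1 * (η * ‖z‖ ^ 2) :=
      mul_le_mul_of_nonneg_right hs.2.le (by positivity)
    nlinarith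
  norm_num at h5
  linarith

/-! ### Passing to the limit -/

lemma limit_theorem {n : ℕ} (hn : 1 ≤ n) {K : Set (Euc n)} (hK : IsCompact K) (hcv : Convex ℝ K)
    (h0 : (0 : Euc n) ∈ K) {A : Set (Euc n)} (hA : IsCompact A) (c : ℝ)
    (F : ℕ → Euc n → ℝ) (h : ℕ → ℝ) (d : ℕ → ℝ) (hpos : ∀ k, 0 < h k)
    (hh : Filter.Tendsto h Filter.atTop (𝓝 0)) (hd : Filter.Tendsto d Filter.atTop (𝓝 c))
    (hF1 : ∀ k, ConvexOn ℝ univ (F k))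
    (hF2 : ∀ k x v, F k (x + v) ≤ F k x + anisoNorm K v)
    (hF3 : ∀ k, ∀ p ∈ K, ∃ y ∈ A, ∀ x, F k y + ⟪p, x - y⟫ ≤ F k x)
    (hF4 : ∀ k x, ∑ i : Fin n, (F k (x + h k • EuclideanSpace.single i (1 : ℝ)) +
        F k (x - h k • EuclideanSpace.single i (1 : ℝ)) - 2 * F k x) ≤ d k * h k ^ 2)
    (hF0 : ∀ k, F k 0 = 0) :
    ∃ φ : Euc n → ℝ, ConvexOn ℝ univ φ ∧
      ContDiff ℝ 1 φ ∧ (∃ L : NNReal, LipschitzWith L (fun x => gradient φ x)) ∧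
      (fun x => gradient φ x) '' univ = K ∧
      (fun x => gradient φ x) '' A = K ∧
      ∀ᵐ x ∂(volume : Measure (Euc n)),
        DifferentiableAt ℝ (fderiv ℝ φ) x ∧ lapl φ x ≤ c := by
  obtain ⟨R, hR, hRb⟩ := aniso_bound hK h0
  have hlip : ∀ k x y, |F k x - F k y| ≤ R * ‖x - y‖ := by
    intro k x y
    rw [abs_le]
    have h1 := hF2 k y (x - y)
    have h2 := hF2 k x (y - x)
    have h3 := hRb (x - y)
    have h4 := hRb (y - x)
    rw [norm_sub_rev y x] at h4
    rw [add_sub_cancel] at h1 h2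
    constructor <;> linarith
  let l : Ultrafilter ℕ := Filter.hyperfilter ℕ
  have hl : (l : Filter ℕ) ≤ Filter.atTop := by
    rw [← Nat.cofinite_eq_atTop]; exact Filter.hyperfilter_le_cofinite
  have hex : ∀ x, ∃ y, Filter.Tendsto (fun k => F k x) l (𝓝 y) := by
    intro x
    have hc : IsCompact (Icc (-(R * ‖x‖)) (R * ‖x‖)) := isCompact_Icc
    obtain ⟨y, -, hy⟩ := hc.ultrafilter_le_nhds (l.map fun k => F k x) (by
      rw [Filter.le_principal_iff, Ultrafilter.mem_coe, Ultrafilter.mem_map]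
      refine Filter.univ_mem' fun k => ?_
      have := hlip k x 0
      rw [hF0, sub_zero, sub_zero] at this
      exact abs_le.1 this)
    exact ⟨y, hy⟩
  choose φ hφ using hex
  have hh' := hh.mono_left hl
  have hd' := hd.mono_left hl
  have hφm : ∀ (X : ℕ → Euc n) (x : Euc n), Filter.Tendsto X l (𝓝 x) →
      Filter.Tendsto (fun k => F k (X k)) l (𝓝 (φ x)) := by
    intro X x hX
    have h1 : Filter.Tendsto (fun k => F k (X k) - F k x) l (𝓝 0) := by
      refine squeeze_zero_norm (fun k => hlip k (X k) x) ?_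
      have := ((hX.sub_const x).norm).const_mul R
      simpa using this
    simpa using h1.add (hφ x)
  have hconv : ConvexOn ℝ univ φ := by
    refine ⟨convex_univ, fun x _ y _ s t hs ht hst => ?_⟩
    refine le_of_tendsto_of_tendsto' (hφ _) (((hφ x).const_mul s).add ((hφ y).const_mul t))
      fun k => ?_
    exact (hF1 k).2 (mem_univ x) (mem_univ y) hs ht hst
  have hslope : ∀ x v, φ (x + v) ≤ φ x + anisoNorm K v := fun x v =>
    le_of_tendsto_of_tendsto' (hφ _) ((hφ x).add_const _) fun k => hF2 k x v
  have hφc : Continuous φ := by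
    refine (LipschitzWith.of_le_add_mul' R fun x y => ?_).continuous
    have h1 := hslope y (x - y)
    have h2 := hRb (x - y)
    rw [dist_eq_norm]
    rw [add_sub_cancel] at h1
    linarith
  have hsub : ∀ p ∈ K, ∃ y ∈ A, ∀ x, φ y + ⟪p, x - y⟫ ≤ φ x := by
    intro p hp
    choose y hyA hy using fun k => hF3 k p hp
    obtain ⟨y0, hy0, hlim⟩ := hA.ultrafilter_le_nhds (l.map y) (by
      rw [Filter.le_principal_iff, Ultrafilter.mem_coe, Ultrafilter.mem_map]
      exact Filter.univ_mem' fun k => hyA k)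
    have hlim' : Filter.Tendsto y l (𝓝 y0) := hlim
    refine ⟨y0, hy0, fun x => ?_⟩
    refine le_of_tendsto_of_tendsto' ((hφm y y0 hlim').add
      (Filter.Tendsto.inner (𝕜 := ℝ) tendsto_const_nhds (tendsto_const_nhds.sub hlim'))) (hφ x)
      fun k => hy k x
  -- second differences along the axes
  have hstep : ∀ k x (i : Fin n), F k (x + h k • EuclideanSpace.single i (1 : ℝ)) +
        F k (x - h k • EuclideanSpace.single i (1 : ℝ)) - 2 * F k x ≤ d k * h k ^ 2 := by
    intro k x i
    refine le_trans ?_ (hF4 k x)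
    exact Finset.single_le_sum (f := fun i => F k (x + h k • EuclideanSpace.single i (1 : ℝ)) +
        F k (x - h k • EuclideanSpace.single i (1 : ℝ)) - 2 * F k x)
      (fun i _ => convex_second_diff_nonneg (hF1 k) x _) (Finset.mem_univ i)
  have hax0 : ∀ x (i : Fin n) (t : ℝ), 0 ≤ t → φ (x + t • EuclideanSpace.single i (1 : ℝ)) +
      φ (x - t • EuclideanSpace.single i (1 : ℝ)) - 2 * φ x ≤ c * t ^ 2 := by
    intro x i t ht
    let m : ℕ → ℕ := fun k => ⌊t / h k⌋₊
    have hm : Filter.Tendsto (fun k => (m k : ℝ) * h k) l (𝓝 t) := by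
      refine tendsto_of_tendsto_of_tendsto_of_le_of_le (g := fun k => t - h k) (h := fun _ => t)
        (by simpa using hh'.const_sub t) tendsto_const_nhds ?_ ?_
      · intro k
        have := Nat.lt_floor_add_one (t / h k)
        rw [div_lt_iff₀ (hpos k)] at this
        show t - h k ≤ m k * h k
        simp only [m]
        linarith
      · intro k
        have := Nat.floor_le (div_nonneg ht (hpos k).le)
        rw [le_div_iff₀ (hpos k)] at this
        exact this
    have hk : ∀ k, F k (x + ((m k : ℝ) * h k) • EuclideanSpace.single i (1 : ℝ)) +
        F k (x - ((m k : ℝ) * h k) • EuclideanSpace.single i (1 : ℝ)) - 2 * F k x ≤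
        d k * ((m k : ℝ) * h k) ^ 2 := by
      intro k
      have := discrete_second_diff (C := d k * h k ^ 2)
        (a := fun j : ℤ => F k (x + ((j : ℝ) * h k) • EuclideanSpace.single i (1 : ℝ))) (by
          intro j
          have := hstep k (x + ((j : ℝ) * h k) • EuclideanSpace.single i (1 : ℝ)) i
          have e1 : x + ((j : ℝ) * h k) • (EuclideanSpace.single i (1 : ℝ) : Euc n) +
              h k • EuclideanSpace.single i (1 : ℝ) =
              x + (((j + 1 : ℤ) : ℝ) * h k) • EuclideanSpace.single i (1 : ℝ) := by
            push_cast; module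
          have e2 : x + ((j : ℝ) * h k) • (EuclideanSpace.single i (1 : ℝ) : Euc n) -
              h k • EuclideanSpace.single i (1 : ℝ) =
              x + (((j - 1 : ℤ) : ℝ) * h k) • EuclideanSpace.single i (1 : ℝ) := by
            push_cast; module
          rw [e1, e2] at this
          exact this) (m k)
      push_cast at this
      rw [zero_mul, zero_smul, add_zero, neg_mul, neg_smul, ← sub_eq_add_neg] at this
      linarith
    have hs := hm.smul_const (EuclideanSpace.single i (1 : ℝ) : Euc n)
    exact le_of_tendsto_of_tendsto' (((hφm _ _ (hs.const_add x)).add (hφm _ _ (hs.const_sub x))).sub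
      ((hφ x).const_mul 2)) (hd'.mul (hm.pow 2)) hk
  have hax : ∀ x (i : Fin n) (t : ℝ), φ (x + t • EuclideanSpace.single i (1 : ℝ)) +
      φ (x - t • EuclideanSpace.single i (1 : ℝ)) - 2 * φ x ≤ c * t ^ 2 := by
    intro x i t
    rcases le_total 0 t with ht | ht
    · exact hax0 x i t ht
    · have := hax0 x i (-t) (by linarith)
      rw [neg_smul, sub_neg_eq_add, ← sub_eq_add_neg, neg_sq] at this
      linarith
  have hM := second_diff_all hn hconv hax
  choose G hG using fun x => exists_subgradient hconv hφc x
  have hGg : ∀ x, HasGradientAt φ (G x) x := fun x => hasGradient_of_subgradient hM (hG x)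
  have hgr : ∀ x, gradient φ x = G x := fun x => (hGg x).gradient
  have hdiff : Differentiable ℝ φ := fun x => (hGg x).differentiableAt
  have hGl : ∀ x y, ‖G x - G y‖ ≤ 2 * (n * c) * ‖x - y‖ := fun x y =>
    gradient_lipschitz hM (hG x) (hG y)
  have hGlip : LipschitzWith (Real.toNNReal (2 * (n * c))) (fun x => gradient φ x) := by
    refine LipschitzWith.of_dist_le_mul fun x y => ?_
    rw [hgr, hgr, dist_eq_norm, dist_eq_norm]
    refine (hGl x y).trans ?_
    gcongr
    exact Real.le_coe_toNNReal _
  have hfd : ∀ x, fderiv ℝ φ x = InnerProductSpace.toDual ℝ (Euc n) (gradient φ x) := by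
    intro x
    simp [gradient]
  have hfd' : fderiv ℝ φ = fun x => InnerProductSpace.toDual ℝ (Euc n) (gradient φ x) := funext hfd
  have hflip : LipschitzWith (Real.toNNReal (2 * (n * c))) (fderiv ℝ φ) := by
    rw [hfd']
    refine LipschitzWith.of_dist_le_mul fun x y => ?_
    rw [LinearIsometryEquiv.dist_map]
    exact hGlip.dist_le_mul x y
  have hGK : ∀ x, G x ∈ K := by
    intro x
    refine mem_of_inner_le_aniso hK hcv h0 fun v => ?_
    have h1 := hG x (x + v)
    have h2 := hslope x v
    rw [add_sub_cancel_left, real_inner_comm] at h1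
    linarith
  have hsurj : ∀ p ∈ K, ∃ y ∈ A, gradient φ y = p := by
    intro p hp
    obtain ⟨y, hy, hyp⟩ := hsub p hp
    exact ⟨y, hy, (hasGradient_of_subgradient hM hyp).gradient⟩
  refine ⟨φ, hconv, ?_, ⟨_, hGlip⟩, ?_, ?_, ?_⟩
  · rw [contDiff_one_iff_fderiv]
    exact ⟨hdiff, hflip.continuous⟩
  · apply Subset.antisymm
    · rintro _ ⟨x, -, rfl⟩
      simp only [hgr]; exact hGK x
    · intro p hp
      obtain ⟨y, hy, e⟩ := hsurj p hp
      exact ⟨y, mem_univ _, e⟩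
  · apply Subset.antisymm
    · rintro _ ⟨x, -, rfl⟩
      simp only [hgr]; exact hGK x
    · intro p hp
      obtain ⟨y, hy, e⟩ := hsurj p hp
      exact ⟨y, hy, e⟩
  · filter_upwards [hflip.ae_differentiableAt (μ := volume)] with x hx
    refine ⟨hx, ?_⟩
    set B := fderiv ℝ (fderiv ℝ φ) x with hB
    have main : ∀ η : ℝ, 0 < η → lapl φ x - 4 * n * η ≤ c := by
      intro η hη
      obtain ⟨r, hr, hT⟩ := taylor_lower hdiff hx hη
      let P : Euc n → ℝ := fun z => fderiv ℝ φ x z + (1 / 2) * B z z - 2 * η * ‖z‖ ^ 2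
      have hPc : Continuous P := by fun_prop
      have hFc : ∀ k, Continuous (F k) := by
        intro k
        refine (LipschitzWith.of_le_add_mul' R fun x y => ?_).continuous
        have := (abs_le.1 (hlip k x y)).2
        rw [dist_eq_norm]
        linarith
      have hmin : ∀ k, ∃ z ∈ closedBall (0 : Euc n) r, ∀ z' ∈ closedBall (0 : Euc n) r,
          F k (x + z) - P z ≤ F k (x + z') - P z' := by
        intro k
        have hFk := hFc k
        obtain ⟨z, hz, hzm⟩ := (isCompact_closedBall (0 : Euc n) r).exists_isMinOn
          ⟨0, mem_closedBall_self hr.le⟩ (f := fun z => F k (x + z) - P z) (by fun_prop)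
        exact ⟨z, hz, fun z' hz' => hzm hz'⟩
      choose z hz hzm using hmin
      obtain ⟨z0, hz0, hlim⟩ := (isCompact_closedBall (0 : Euc n) r).ultrafilter_le_nhds
        (l.map z) (by
          rw [Filter.le_principal_iff, Ultrafilter.mem_coe, Ultrafilter.mem_map]
          exact Filter.univ_mem' fun k => hz k)
      have hlim' : Filter.Tendsto z l (𝓝 z0) := hlim
      have hz00 : z0 = 0 := by
        have h1 : φ (x + z0) - P z0 ≤ φ (x + 0) - P 0 :=
          le_of_tendsto_of_tendsto' ((hφm _ _ (hlim'.const_add x)).sub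
            ((hPc.tendsto z0).comp hlim')) ((hφ (x + 0)).sub_const (P 0))
            fun k => hzm k 0 (mem_closedBall_self hr.le)
        have h2 := hT z0 (by simpa using hz0)
        have hP0 : P 0 = 0 := by simp [P]
        have hPz : P z0 = fderiv ℝ φ x z0 + (1 / 2) * B z0 z0 - 2 * η * ‖z0‖ ^ 2 := rfl
        rw [hP0, add_zero] at h1
        have h3 : η * ‖z0‖ ^ 2 ≤ 0 := by linarith
        have h4 : ‖z0‖ ^ 2 ≤ 0 := by
          by_contra hc
          push Not at hc
          have := mul_pos hη hc
          linarith
        have h5 : ‖z0‖ = 0 := by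
          have := sq_nonneg ‖z0‖
          exact pow_eq_zero_iff (two_ne_zero) |>.1 (le_antisymm h4 this)
        exact norm_eq_zero.1 h5
      subst hz00
      have hev : ∀ᶠ k in (l : Filter ℕ), ‖z k‖ + h k < r := by
        have : Filter.Tendsto (fun k => ‖z k‖ + h k) l (𝓝 0) := by
          simpa using hlim'.norm.add hh'
        exact this.eventually (gt_mem_nhds hr)
      refine ge_of_tendsto hd' ?_
      filter_upwards [hev] with k hk
      have hki : ∀ i : Fin n, h k ^ 2 * (B (EuclideanSpace.single i 1) (EuclideanSpace.single i 1)
          - 4 * η) ≤ F k ((x + z k) + h k • EuclideanSpace.single i (1 : ℝ)) +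
        F k ((x + z k) - h k • EuclideanSpace.single i (1 : ℝ)) - 2 * F k (x + z k) := by
        intro i
        set e : Euc n := h k • EuclideanSpace.single i (1 : ℝ) with he
        have hen : ‖e‖ = h k := by
          rw [he, norm_smul, Real.norm_eq_abs, abs_of_pos (hpos k)]
          simp
        have h1 := hzm k (z k + e) (by
          rw [mem_closedBall_zero_iff]
          exact (norm_add_le _ _).trans (by rw [hen]; exact hk.le))
        have h2 := hzm k (z k - e) (by
          rw [mem_closedBall_zero_iff]
          exact (norm_sub_le _ _).trans (by rw [hen]; exact hk.le))
        rw [← add_assoc] at h1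
        rw [← add_sub_assoc] at h2
        have hp := parallelogram_law_with_norm ℝ (z k) e
        have hP : P (z k + e) + P (z k - e) - 2 * P (z k) = B e e - 4 * η * ‖e‖ ^ 2 := by
          simp only [P, map_add, map_sub, add_apply, sub_apply]
          linear_combination (-2 * η) * hp
        have hBe : B e e = h k ^ 2 * B (EuclideanSpace.single i 1) (EuclideanSpace.single i 1) := by
          simp [he]; ring
        rw [hBe, hen] at hP
        linarith
      have hs := Finset.sum_le_sum (s := Finset.univ) fun i _ => hki i
      have hs2 := hs.trans (hF4 k (x + z k))
      have e1 : ∑ i : Fin n, h k ^ 2 *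
          (B (EuclideanSpace.single i 1) (EuclideanSpace.single i 1) - 4 * η) =
          h k ^ 2 * (lapl φ x - 4 * n * η) := by
        rw [← Finset.mul_sum, Finset.sum_sub_distrib]
        simp only [lapl, Finset.sum_const, Finset.card_univ, Fintype.card_fin, nsmul_eq_mul, hB]
        ring
      rw [e1, mul_comm (d k)] at hs2
      exact le_of_mul_le_mul_left hs2 (by have := hpos k; positivity)
    by_contra hcon
    push Not at hcon
    have hn' : (0 : ℝ) < n := by exact_mod_cast hn
    have := main ((lapl φ x - c) / (8 * n)) (div_pos (by linarith) (by positivity))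
    have e : 4 * (n : ℝ) * ((lapl φ x - c) / (8 * n)) = (lapl φ x - c) / 2 := by
      field_simp; ring
    rw [e] at this
    linarith

/-! ### Discretization -/

/-- The standard lattice of mesh `1 / N`. -/
def latt (n N : ℕ) : Set (Euc n) :=
  {x | ∀ i, ∃ z : ℤ, x i = (N : ℝ)⁻¹ * z}

lemma latt_add {n N : ℕ} {x : Euc n} (hx : x ∈ latt n N) (i : Fin n) :
    x + (N : ℝ)⁻¹ • EuclideanSpace.single i (1 : ℝ) ∈ latt n N := by
  intro j
  obtain ⟨z, hz⟩ := hx j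
  by_cases hij : j = i
  · subst hij
    exact ⟨z + 1, by simp [hz]; ring⟩
  · exact ⟨z, by simp [hz, hij]⟩

lemma latt_sub {n N : ℕ} {x : Euc n} (hx : x ∈ latt n N) (i : Fin n) :
    x - (N : ℝ)⁻¹ • EuclideanSpace.single i (1 : ℝ) ∈ latt n N := by
  intro j
  obtain ⟨z, hz⟩ := hx j
  by_cases hij : j = i
  · subst hij
    exact ⟨z - 1, by simp [hz]; ring⟩
  · exact ⟨z, by simp [hz, hij]⟩

open scoped Pointwise in
lemma latt_riemann {n : ℕ} (ρ : ℝ) : ∃ T : ℕ → Finset (Euc n),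
    (∀ N, 0 < N → ∀ x, x ∈ T N ↔ (x ∈ latt n N ∧ ∀ i, |x i| ≤ ρ)) ∧
    ∀ G : Euc n → ℝ, Continuous G →
      Filter.Tendsto (fun N : ℕ => (∑ x ∈ T N, G x) / (N : ℝ) ^ n) Filter.atTop
        (𝓝 (∫ x in {x : Euc n | ∀ i, |x i| ≤ ρ}, G x)) := by
  classical
  set s : Set (Fin n → ℝ) := {x | ∀ i, |x i| ≤ ρ} with hs
  set L : Set (Fin n → ℝ) :=
    (Submodule.span ℤ (Set.range (Pi.basisFun ℝ (Fin n))) : Set (Fin n → ℝ)) with hL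
  have hsicc : s = Icc (fun _ => -ρ) (fun _ => ρ) := by
    ext x
    simp only [hs, mem_ofPred_eq, mem_Icc, Pi.le_def, abs_le, forall_and]
  have hsb : Bornology.IsBounded s := by rw [hsicc]; exact isBounded_Icc _ _
  have hsm : MeasurableSet s := by rw [hsicc]; exact measurableSet_Icc
  have hsf : volume (frontier s) = 0 := by
    rw [hsicc]; exact (convex_Icc _ _).addHaar_frontier volume
  have hmem : ∀ N : ℕ, 0 < N → ∀ x : Fin n → ℝ, x ∈ (N : ℝ)⁻¹ • L ↔ ∀ i, ∃ z : ℤ, x i = (N : ℝ)⁻¹ * z := by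
    intro N hN x
    have hN' : (N : ℝ)⁻¹ ≠ 0 := by positivity
    constructor
    · rintro ⟨y, hy, rfl⟩ i
      have := ((Pi.basisFun ℝ (Fin n)).mem_span_iff_repr_mem ℤ y).1 hy i
      obtain ⟨z, hz⟩ := this
      refine ⟨z, ?_⟩
      simp at hz
      simp [hz]
    · intro h
      choose z hz using h
      refine ⟨fun i => z i, ?_, by ext i; simp [hz]⟩
      rw [hL]
      refine ((Pi.basisFun ℝ (Fin n)).mem_span_iff_repr_mem ℤ _).2 fun i => ⟨z i, by simp⟩
  have hfin : ∀ N : ℕ, 0 < N → (s ∩ (N : ℝ)⁻¹ • L).Finite := by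
    intro N hN
    have hN' : (N : ℝ) ≠ 0 := by positivity
    have h1 : ((N : ℝ) • s ∩ L).Finite :=
      ZSpan.setFinite_inter (Pi.basisFun ℝ (Fin n)) (hsb.smul₀ (N : ℝ))
    refine Set.Finite.subset (h1.image fun y => (N : ℝ)⁻¹ • y) ?_
    rintro x ⟨hx, y, hy, rfl⟩
    exact ⟨y, ⟨⟨_, hx, by simp [smul_smul, hN']⟩, hy⟩, rfl⟩
  let T : ℕ → Finset (Euc n) := fun N =>
    if hN : 0 < N then (hfin N hN).toFinset.map
      (WithLp.equiv 2 (Fin n → ℝ)).symm.toEmbedding else ∅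
  refine ⟨T, ?_, ?_⟩
  · intro N hN x
    simp only [T, hN, dif_pos, Finset.mem_map, Finite.mem_toFinset, mem_inter_iff, hmem N hN]
    constructor
    · rintro ⟨y, ⟨h1, h2⟩, rfl⟩
      exact ⟨h2, h1⟩
    · rintro ⟨h1, h2⟩
      exact ⟨WithLp.ofLp x, ⟨h2, h1⟩, rfl⟩
  · intro G hG
    have h := tendsto_tsum_div_pow_atTop_integral s (fun x => G (WithLp.toLp 2 x))
      (by fun_prop) hsb hsm hsf
    have hintg : ∫ x in s, G (WithLp.toLp 2 x) = ∫ x in {x : Euc n | ∀ i, |x i| ≤ ρ}, G x := by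
      have := (PiLp.volume_preserving_toLp (Fin n)).setIntegral_preimage_emb
        (MeasurableEquiv.toLp 2 (Fin n → ℝ)).measurableEmbedding G {x : Euc n | ∀ i, |x i| ≤ ρ}
      exact this
    rw [hintg] at h
    refine h.congr' ?_
    filter_upwards [Filter.eventually_gt_atTop 0] with N hN
    rw [Fintype.card_fin]
    congr 1
    have : Fintype ↑(s ∩ (N : ℝ)⁻¹ • L) := (hfin N hN).fintype
    rw [tsum_fintype]
    simp only [T, hN, dif_pos, Finset.sum_map]
    rw [Finset.sum_subtype (hfin N hN).toFinset (p := fun x => x ∈ s ∩ (N : ℝ)⁻¹ • L) (by simp)]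
    rfl

/-- The discrete vector field, minus the derivative of the squared weight, at mesh h. -/
def discField {n : ℕ} (w : Euc n → ℝ) (h : ℝ) (x : Euc n) : Euc n :=
  ∑ i, (w x * (w (x - h • EuclideanSpace.single i (1 : ℝ)) -
    w (x + h • EuclideanSpace.single i (1 : ℝ))) / h) • EuclideanSpace.single i (1 : ℝ)

lemma gradient_eq_sum {n : ℕ} (w : Euc n → ℝ) (x : Euc n) :
    gradient w x = ∑ i, (fderiv ℝ w x (EuclideanSpace.single i (1 : ℝ))) •
      EuclideanSpace.single i (1 : ℝ) := by
  have h := (EuclideanSpace.basisFun (Fin n) ℝ).sum_repr (gradient w x)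
  rw [← h]
  refine Finset.sum_congr rfl fun i _ => ?_
  have h2 : (EuclideanSpace.basisFun (Fin n) ℝ).repr (gradient w x) i =
      fderiv ℝ w x (EuclideanSpace.single i (1 : ℝ)) := by
    rw [OrthonormalBasis.repr_apply_apply, real_inner_comm, gradient,
      InnerProductSpace.toDual_symm_apply]
    simp
  rw [h2]; simp

lemma gradient_continuous {n : ℕ} {w : Euc n → ℝ} (hw : ContDiff ℝ 1 w) :
    Continuous (gradient w) := by
  unfold gradient
  exact (LinearIsometryEquiv.continuous _).comp (hw.continuous_fderiv (by norm_num))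

lemma unif_diff {n : ℕ} {w : Euc n → ℝ} (hw : ContDiff ℝ 1 w) (hc : HasCompactSupport w)
    {ε : ℝ} (hε : 0 < ε) : ∃ δ > 0, ∀ x v : Euc n, ‖v‖ < δ →
      |w (x + v) - w x - fderiv ℝ w x v| ≤ ε * ‖v‖ := by
  have hu : UniformContinuous (fderiv ℝ w) :=
    (hc.fderiv (𝕜 := ℝ)).uniformContinuous_of_continuous (hw.continuous_fderiv (by norm_num))
  obtain ⟨δ, hδ, h⟩ := Metric.uniformContinuous_iff.1 hu ε hε
  refine ⟨δ, hδ, fun x v hv => ?_⟩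
  have := (convex_ball x δ).norm_image_sub_le_of_norm_fderiv_le' (𝕜 := ℝ) (f := w)
    (C := ε) (φ := fderiv ℝ w x) (x := x) (y := x + v)
    (fun y _ => hw.differentiable (by norm_num) y)
    (fun y hy => by rw [← dist_eq_norm]; exact (h (mem_ball.1 hy)).le)
    (mem_ball_self hδ) (by simpa [mem_ball, dist_eq_norm] using hv)
  simpa using this

lemma discField_close {n : ℕ} {w : Euc n → ℝ} (hw : ContDiff ℝ 1 w) (hc : HasCompactSupport w)
    {ε : ℝ} (hε : 0 < ε) : ∃ δ > 0, ∀ h : ℝ, 0 < h → h < δ → ∀ x : Euc n,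
      ‖discField w h x + (2 * w x) • gradient w x‖ ≤ ε := by
  obtain ⟨M, hM⟩ := hc.exists_bound_of_continuous hw.continuous
  have hM0 : 0 ≤ M := (norm_nonneg _).trans (hM 0)
  set ε' := ε / (2 * (M + 1) * (n + 1)) with hε'
  have hε'0 : 0 < ε' := by positivity
  obtain ⟨δ, hδ, hd⟩ := unif_diff hw hc hε'0
  refine ⟨δ, hδ, fun h h0 hh x => ?_⟩
  have key : ∀ i, ‖(w x * (w (x - h • EuclideanSpace.single i (1 : ℝ)) -
      w (x + h • EuclideanSpace.single i (1 : ℝ))) / h +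
      2 * w x * fderiv ℝ w x (EuclideanSpace.single i (1 : ℝ)))‖ ≤ M * (2 * ε') := by
    intro i
    set e := EuclideanSpace.single i (1 : ℝ) with he
    have hne : ‖h • e‖ = h := by simp [norm_smul, he, abs_of_pos h0]
    have h1 := hd x (h • e) (by rw [hne]; exact hh)
    have h2 := hd x (-(h • e)) (by rw [norm_neg, hne]; exact hh)
    rw [norm_neg, ← sub_eq_add_neg] at h2
    rw [hne] at h1 h2
    simp only [map_neg, map_smul, smul_eq_mul] at h1 h2
    have : w x * (w (x - h • e) - w (x + h • e)) / h + 2 * w x * fderiv ℝ w x e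
        = w x * (((w (x - h • e) - w x - -(h * fderiv ℝ w x e)) -
          (w (x + h • e) - w x - h * fderiv ℝ w x e)) / h) := by
      field_simp; ring
    rw [this, norm_mul]
    refine mul_le_mul (hM x) ?_ (norm_nonneg _) hM0
    rw [Real.norm_eq_abs, abs_div, abs_of_pos h0, div_le_iff₀ h0]
    rw [abs_le] at h1 h2 ⊢
    constructor <;> linarith [h1.1, h1.2, h2.1, h2.2]
  have heq : discField w h x + (2 * w x) • gradient w x =
      ∑ i, (w x * (w (x - h • EuclideanSpace.single i (1 : ℝ)) -
      w (x + h • EuclideanSpace.single i (1 : ℝ))) / h +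
      2 * w x * fderiv ℝ w x (EuclideanSpace.single i (1 : ℝ))) •
        EuclideanSpace.single i (1 : ℝ) := by
    rw [gradient_eq_sum, discField, Finset.smul_sum, ← Finset.sum_add_distrib]
    refine Finset.sum_congr rfl fun i _ => ?_
    rw [add_smul, smul_smul]
  rw [heq]
  calc _ ≤ ∑ i : Fin n, M * (2 * ε') := by
        refine norm_sum_le_of_le _ fun i _ => ?_
        rw [norm_smul]
        simpa using key i
    _ = n * (M * (2 * ε')) := by simp
    _ ≤ (n + 1) * ((M + 1) * (2 * ε')) := by gcongr <;> linarith
    _ = ε := by rw [hε']; field_simp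

lemma disc_exists_mesh {n : ℕ} {K : Set (Euc n)} (hK : IsCompact K) (h0 : (0 : Euc n) ∈ K)
    {w : Euc n → ℝ} (hw : ContDiff ℝ 1 w) (hc : HasCompactSupport w) (hw0 : ∀ x, 0 ≤ w x) {c : ℝ}
    (hI : ∫ x, anisoNorm K (-((2 * w x) • gradient w x)) < c * ∫ x, w x ^ 2)
    {ε : ℝ} (hε : 0 < ε) :
    0 < c ∧ ∃ τ > 0, ∃ N : ℕ, 0 < N ∧ (N : ℝ)⁻¹ < ε ∧
      (∀ x v : Euc n, ‖v‖ = (N : ℝ)⁻¹ → |w (x + v) - w x| ≤ τ / 2) ∧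
      ∃ S : Finset (Euc n), S.Nonempty ∧ (∀ x, x ∈ S ↔ x ∈ latt n N ∧ 0 < w x) ∧
        0 ≤ ∑ x ∈ S, (c * (w x * (w x - τ)) - anisoNorm K (discField w (N : ℝ)⁻¹ x)) := by
  classical
  have hgc := gradient_continuous hw
  have hwc := hw.continuous
  have hNc := aniso_continuous hK h0
  set I := ∫ x, anisoNorm K (-((2 * w x) • gradient w x)) with hIdef
  have hI0 : 0 ≤ I := integral_nonneg fun x => aniso_nonneg hK h0 _
  have hW0 : 0 ≤ ∫ x, w x ^ 2 := integral_nonneg fun x => sq_nonneg _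
  have hcpos : 0 < c := by
    by_contra hneg
    push Not at hneg
    nlinarith [mul_nonneg (neg_nonneg.2 hneg) hW0]
  refine ⟨hcpos, ?_⟩
  have hw1int : Integrable w := hwc.integrable_of_hasCompactSupport hc
  set B := c * ∫ x, w x with hB
  have hB0 : 0 ≤ B := mul_nonneg hcpos.le (integral_nonneg hw0)
  set g := c * (∫ x, w x ^ 2) - I with hg
  have hgpos : 0 < g := sub_pos.2 hI
  set τ := g / (B + 1) with hτ
  have hτpos : 0 < τ := by positivity
  have hgap : τ * B < g := by
    rw [hτ, div_mul_eq_mul_div, div_lt_iff₀ (by positivity)]; nlinarith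
  refine ⟨τ, hτpos, ?_⟩
  -- the continuous integrand
  set G : Euc n → ℝ := fun x => c * (w x * (w x - τ)) -
    anisoNorm K (-((2 * w x) • gradient w x)) with hG
  have hGc : Continuous G := by
    refine Continuous.sub (by fun_prop) (hNc.comp ?_)
    exact ((continuous_const.mul hwc).smul hgc).neg
  have hzero : ∀ x, w x = 0 → anisoNorm K (-((2 * w x) • gradient w x)) = 0 := by
    intro x hx; simp [hx, aniso_zero hK h0]
  have hG0 : ∀ x, w x = 0 → G x = 0 := by
    intro x hx
    simp only [hG]
    rw [hzero x hx, hx]; simp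
  have hcs1 : HasCompactSupport (fun x => anisoNorm K (-((2 * w x) • gradient w x))) :=
    hc.mono (fun x hx hx0 => hx (hzero x hx0))
  have hint1 : Integrable (fun x => anisoNorm K (-((2 * w x) • gradient w x))) :=
    (hNc.comp ((continuous_const.mul hwc).smul hgc).neg).integrable_of_hasCompactSupport hcs1
  have hint2 : Integrable (fun x => w x ^ 2) :=
    (hwc.pow 2).integrable_of_hasCompactSupport (hc.mono fun x hx hx0 => hx (by simp [hx0]))
  have hGint : ∫ x, G x = c * (∫ x, w x ^ 2) - τ * B - I := by
    have : G = fun x => (c * w x ^ 2 - (c * τ) * w x) -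
      anisoNorm K (-((2 * w x) • gradient w x)) := by ext x; simp only [hG]; ring
    have hA : Integrable (fun x => c * w x ^ 2 - (c * τ) * w x) :=
      (hint2.const_mul c).sub (hw1int.const_mul _)
    have e1 : ∫ x, G x = (∫ x, (c * w x ^ 2 - (c * τ) * w x)) - I := by
      rw [this]; exact integral_sub hA hint1
    have e2 : ∫ x, (c * w x ^ 2 - (c * τ) * w x) =
        (∫ x, c * w x ^ 2) - ∫ x, (c * τ) * w x :=
      integral_sub (hint2.const_mul c) (hw1int.const_mul _)
    rw [e1, e2, integral_const_mul, integral_const_mul, hB]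
    ring
  have hJ : 0 < ∫ x, G x := by rw [hGint]; simp only [hg] at hgap; linarith
  -- the box
  obtain ⟨ρ, hρ⟩ := hc.isCompact.isBounded.subset_closedBall (0 : Euc n)
  have hbox : ∀ x, w x ≠ 0 → ∀ i, |x i| ≤ ρ := by
    intro x hx i
    have h1 := hρ (subset_tsupport w hx)
    rw [mem_closedBall, dist_zero_right] at h1
    exact (PiLp.norm_apply_le x i).trans h1
  obtain ⟨T, hT, hR⟩ := latt_riemann (n := n) ρ
  have hRG := hR G hGc
  rw [setIntegral_eq_integral_of_forall_compl_eq_zero (s := {x : Euc n | ∀ i, |x i| ≤ ρ})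
    (by intro x hx; apply hG0; by_contra h; exact hx (hbox x h))] at hRG
  have hR1 := hR (fun _ => 1) continuous_const
  set V := ∫ x in {x : Euc n | ∀ i, |x i| ≤ ρ}, (1 : ℝ) with hV
  have hV0 : 0 ≤ V := integral_nonneg fun _ => zero_le_one
  obtain ⟨R, hRpos, hRb⟩ := aniso_bound hK h0
  set J := ∫ x, G x with hJdef
  set ε' := J / (2 * (R * (V + 1))) with hε'
  have hε'pos : 0 < ε' := by positivity
  obtain ⟨δ1, hδ1, hdisc⟩ := discField_close hw hc hε'pos
  obtain ⟨δ2, hδ2, hucont⟩ := Metric.uniformContinuous_iff.1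
    (hc.uniformContinuous_of_continuous hwc) (τ / 2) (by positivity)
  have hinv : Filter.Tendsto (fun N : ℕ => (N : ℝ)⁻¹) Filter.atTop (𝓝 0) :=
    tendsto_inv_atTop_nhds_zero_nat
  have hev := ((((hinv.eventually (gt_mem_nhds hε)).and (hinv.eventually (gt_mem_nhds hδ1))).and
    (hinv.eventually (gt_mem_nhds hδ2))).and
    ((hRG.eventually (lt_mem_nhds (half_lt_self hJ))).and
    (hR1.eventually (gt_mem_nhds (lt_add_one V))))).and (Filter.eventually_gt_atTop 0)
  obtain ⟨N, ⟨⟨⟨hNε, hN1⟩, hN2⟩, hNG, hNV⟩, hN0⟩ := hev.exists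
  have hNpos : (0 : ℝ) < (N : ℝ)⁻¹ := by positivity
  have hNn : (0 : ℝ) < (N : ℝ) ^ n := by positivity
  set Gh : Euc n → ℝ := fun x => c * (w x * (w x - τ)) - anisoNorm K (discField w (N : ℝ)⁻¹ x)
    with hGh
  have hGh0 : ∀ x, w x = 0 → Gh x = 0 := by
    intro x hx
    have : discField w (N : ℝ)⁻¹ x = 0 := by simp [discField, hx]
    simp only [hGh]
    rw [this, aniso_zero hK h0, hx]; simp
  have hclose : ∀ x, G x - R * ε' ≤ Gh x := by
    intro x
    have h1 := aniso_sub_le hK h0 (discField w (N : ℝ)⁻¹ x) (-((2 * w x) • gradient w x))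
    have h2 := hRb (discField w (N : ℝ)⁻¹ x - (-((2 * w x) • gradient w x)))
    have h3 := hdisc _ hNpos hN1 x
    rw [sub_neg_eq_add] at h1 h2
    have h4 := mul_le_mul_of_nonneg_left h3 hRpos.le
    simp only [hG, hGh]
    linarith
  have hsum : 0 < ∑ x ∈ T N, Gh x := by
    rw [lt_div_iff₀ hNn] at hNG
    rw [div_lt_iff₀ hNn] at hNV
    have h1 : ∑ x ∈ T N, (G x - R * ε') ≤ ∑ x ∈ T N, Gh x :=
      Finset.sum_le_sum fun x _ => hclose x
    rw [Finset.sum_sub_distrib, ← mul_one (R * ε'), ← Finset.mul_sum] at h1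
    have h2 : R * ε' * ∑ x ∈ T N, (1 : ℝ) ≤ R * ε' * ((V + 1) * (N : ℝ) ^ n) :=
      mul_le_mul_of_nonneg_left hNV.le (by positivity)
    have h3 : R * ε' * ((V + 1) * (N : ℝ) ^ n) = J / 2 * (N : ℝ) ^ n := by
      rw [hε']; field_simp
    linarith
  refine ⟨N, hN0, hNε, ?_, (T N).filter (fun x => 0 < w x), ?_, ?_, ?_⟩
  · intro x v hv
    have := hucont (a := x + v) (b := x) (by rw [dist_eq_norm]; simpa [hv] using hN2)
    rw [Real.dist_eq] at this
    exact this.le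
  · obtain ⟨x, hx, hxp⟩ := Finset.exists_lt_of_sum_lt (s := T N) (f := fun _ => (0 : ℝ)) (g := Gh)
      (by simpa using hsum)
    refine ⟨x, Finset.mem_filter.2 ⟨hx, lt_of_le_of_ne (hw0 x) fun h => ?_⟩⟩
    rw [hGh0 x h.symm] at hxp
    exact lt_irrefl _ hxp
  · intro x
    rw [Finset.mem_filter, hT N hN0]
    exact ⟨fun h => ⟨h.1.1, h.2⟩, fun h => ⟨⟨h.1, hbox x h.2.ne'⟩, h.2⟩⟩
  · rw [Finset.sum_filter_of_ne]
    · exact hsum.le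
    · intro x _ hx
      exact lt_of_le_of_ne (hw0 x) fun h => hx (hGh0 x h.symm)

open Classical in
/-- Edge weights on the lattice. -/
def edgeW {n : ℕ} (w : Euc n → ℝ) (h : ℝ) (x y : Euc n) : ℝ :=
  w x * w y * ∑ i, ((if y = x + h • EuclideanSpace.single i (1 : ℝ) then (1 : ℝ) else 0) +
    (if y = x - h • EuclideanSpace.single i (1 : ℝ) then (1 : ℝ) else 0))

lemma edgeW_symm {n : ℕ} (w : Euc n → ℝ) (h : ℝ) (x y : Euc n) :
    edgeW w h x y = edgeW w h y x := by
  classical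
  unfold edgeW
  rw [mul_comm (w x)]
  congr 1
  refine Finset.sum_congr rfl fun i _ => ?_
  rw [add_comm]
  congr 1 <;> congr 1 <;> apply propext
  · rw [eq_sub_iff_add_eq, eq_comm]
  · rw [eq_sub_iff_add_eq, eq_comm]

lemma edgeW_nonneg {n : ℕ} {w : Euc n → ℝ} (hw : ∀ x, 0 ≤ w x) (h : ℝ) (x y : Euc n) :
    0 ≤ edgeW w h x y := by
  classical
  refine mul_nonneg (mul_nonneg (hw x) (hw y)) (Finset.sum_nonneg fun i _ => ?_)
  split_ifs <;> norm_num

lemma edgeW_pos {n : ℕ} {w : Euc n → ℝ} {h : ℝ} {x y : Euc n} (hx : 0 < w x) (hy : 0 < w y)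
    (i : Fin n) (hxy : y = x + h • EuclideanSpace.single i (1 : ℝ) ∨
      y = x - h • EuclideanSpace.single i (1 : ℝ)) : 0 < edgeW w h x y := by
  classical
  refine mul_pos (mul_pos hx hy) (Finset.sum_pos' (fun j _ => ?_) ⟨i, Finset.mem_univ _, ?_⟩)
  · split_ifs <;> norm_num
  · rcases hxy with hxy | hxy
    · rw [if_pos hxy]; split_ifs <;> norm_num
    · rw [if_pos hxy]; split_ifs <;> norm_num

lemma edgeW_sum {n : ℕ} {w : Euc n → ℝ} {h : ℝ} (S : Finset (Euc n)) (x : Euc n)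
    (hp : ∀ i, x + h • EuclideanSpace.single i (1 : ℝ) ∉ S →
      w (x + h • EuclideanSpace.single i (1 : ℝ)) = 0)
    (hm : ∀ i, x - h • EuclideanSpace.single i (1 : ℝ) ∉ S →
      w (x - h • EuclideanSpace.single i (1 : ℝ)) = 0) (F : Euc n → ℝ) :
    ∑ y ∈ S, edgeW w h x y * F y = w x * ∑ i,
      (w (x + h • EuclideanSpace.single i (1 : ℝ)) * F (x + h • EuclideanSpace.single i (1 : ℝ)) +
       w (x - h • EuclideanSpace.single i (1 : ℝ)) * F (x - h • EuclideanSpace.single i (1 : ℝ))) := by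
  classical
  have : ∀ y ∈ S, edgeW w h x y * F y = w x * ∑ i,
      ((if y = x + h • EuclideanSpace.single i (1 : ℝ) then w y * F y else 0) +
       (if y = x - h • EuclideanSpace.single i (1 : ℝ) then w y * F y else 0)) := by
    intro y _
    unfold edgeW
    rw [mul_assoc (w x), mul_assoc (w x), Finset.mul_sum, Finset.sum_mul]
    congr 1
    refine Finset.sum_congr rfl fun i _ => ?_
    split_ifs <;> ring
  rw [Finset.sum_congr rfl this, ← Finset.mul_sum, Finset.sum_comm]
  congr 1
  refine Finset.sum_congr rfl fun i _ => ?_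
  rw [Finset.sum_add_distrib, Finset.sum_ite_eq', Finset.sum_ite_eq']
  congr 1
  · split_ifs with h1
    · rfl
    · rw [hp i h1, zero_mul]
  · split_ifs with h1
    · rfl
    · rw [hm i h1, zero_mul]

theorem discretize {n : ℕ} {K : Set (Euc n)} (hK : IsCompact K) (hcv : Convex ℝ K)
    (h0 : (0 : Euc n) ∈ K)
    {w : Euc n → ℝ} (hw : ContDiff ℝ 1 w) (hc : HasCompactSupport w) (hw0 : ∀ x, 0 ≤ w x) {c : ℝ}
    (hI : ∫ x, anisoNorm K (-((2 * w x) • gradient w x)) < c * ∫ x, w x ^ 2)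
    {ε : ℝ} (hε : 0 < ε) :
    ∃ h : ℝ, 0 < h ∧ h < ε ∧ ∃ φ : Euc n → ℝ, ConvexOn ℝ univ φ ∧
      (∀ x v, φ (x + v) ≤ φ x + anisoNorm K v) ∧
      (∀ p ∈ K, ∃ y, 0 < w y ∧ ∀ x, φ y + ⟪p, x - y⟫ ≤ φ x) ∧
      ∀ x, ∑ i, (φ (x + h • EuclideanSpace.single i (1 : ℝ)) +
        φ (x - h • EuclideanSpace.single i (1 : ℝ)) - 2 * φ x) ≤ c * h ^ 2 := by
  classical
  obtain ⟨hcpos, τ, hτ, N, hN, hNε, hosc, S, hSne, hS, hsum⟩ := disc_exists_mesh hK h0 hw hc hw0 hI hε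
  set h : ℝ := (N : ℝ)⁻¹ with hh
  have hpos : 0 < h := by rw [hh]; positivity
  refine ⟨h, hpos, hNε, ?_⟩
  have hzero : ∀ z ∈ latt n N, z ∉ S → w z = 0 := by
    intro z hz hzS
    by_contra hne
    exact hzS ((hS z).2 ⟨hz, lt_of_le_of_ne (hw0 z) (Ne.symm hne)⟩)
  haveI : Nonempty S := hSne.coe_sort
  obtain ⟨C, u, hCne, hCcl, hCu⟩ := graph_lemma (ι := S) (fun x y => edgeW w h x y)
    (fun x y => edgeW_symm w h x y) (fun x y => edgeW_nonneg hw0 h x y)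
    (fun x => h ^ 2 * (c * (w x * (w x - τ)) - anisoNorm K (discField w h x)))
    (by
      rw [← Finset.mul_sum]
      refine mul_nonneg (sq_nonneg _) ?_
      rw [Finset.sum_coe_sort S (fun x => c * (w x * (w x - τ)) - anisoNorm K (discField w h x))]
      exact hsum)
  set u' : Euc n → ℝ := fun y => if hy : y ∈ S then u ⟨y, hy⟩ else 0 with hu'
  have hu'S : ∀ y : S, u' y = u y := by
    intro y; simp [hu']
  obtain ⟨φ, h1, h2, h3, h4⟩ := envelope hK hcv h0 (Subtype.val '' C) (toFinite _)
    (hCne.image _) u' h (c * h ^ 2) (by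
    rintro _ ⟨⟨x, hxS⟩, hxC, rfl⟩ p hp hcon
    simp only at hcon ⊢
    have hxl := ((hS x).1 hxS).1
    have hxw := ((hS x).1 hxS).2
    have hcl : ∀ z, z ∈ latt n N → 0 < w z → ∀ i, (z = x + h • EuclideanSpace.single i (1 : ℝ) ∨
        z = x - h • EuclideanSpace.single i (1 : ℝ)) → z ∈ Subtype.val '' C := by
      intro z hzl hzw i hz
      have hzS := (hS z).2 ⟨hzl, hzw⟩
      exact ⟨⟨z, hzS⟩, hCcl _ hxC ⟨z, hzS⟩ (edgeW_pos hxw hzw i hz), rfl⟩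
    set D : Euc n → ℝ := fun z => u' z - u' x - ⟪p, z - x⟫ with hD
    have hDC : ∀ z ∈ Subtype.val '' C, 0 ≤ D z := by
      intro z hz
      have := hcon z hz
      simp only [hD]; linarith
    have hwD : ∀ z, z ∈ latt n N → ∀ i, (z = x + h • EuclideanSpace.single i (1 : ℝ) ∨
        z = x - h • EuclideanSpace.single i (1 : ℝ)) → 0 ≤ w z * D z := by
      intro z hzl i hz
      rcases (hw0 z).eq_or_lt with h' | h'
      · rw [← h', zero_mul]
      · exact mul_nonneg h'.le (hDC z (hcl z hzl h' i hz))
    have hlp : ∀ i, x + h • EuclideanSpace.single i (1 : ℝ) ∈ latt n N := fun i => latt_add hxl i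
    have hlm : ∀ i, x - h • EuclideanSpace.single i (1 : ℝ) ∈ latt n N := fun i => latt_sub hxl i
    have hineq := hCu _ hxC
    have hineq' : ∑ y ∈ S, edgeW w h x y * (u' y - u' x) ≤
        h ^ 2 * (c * (w x * (w x - τ)) - anisoNorm K (discField w h x)) := by
      rw [← Finset.sum_coe_sort]
      convert hineq using 3 with y _
      rw [hu'S, hu'S ⟨x, hxS⟩]
    rw [edgeW_sum S x (fun i => hzero _ (hlp i)) (fun i => hzero _ (hlm i))
      (fun y => u' y - u' x)] at hineq'
    have hVp := inner_le_aniso hK (discField w h x) hp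
    have hVeq : h ^ 2 * ⟪discField w h x, p⟫ = w x * ∑ i,
        (w (x - h • EuclideanSpace.single i (1 : ℝ)) - w (x + h • EuclideanSpace.single i (1 : ℝ))) *
          (h * ⟪p, EuclideanSpace.single i (1 : ℝ)⟫) := by
      rw [discField, sum_inner, Finset.mul_sum, Finset.mul_sum]
      refine Finset.sum_congr rfl fun i _ => ?_
      rw [real_inner_smul_left, real_inner_comm p]
      field_simp
    set wp : Fin n → ℝ := fun i => w (x + h • EuclideanSpace.single i (1 : ℝ)) with hwp
    set wm : Fin n → ℝ := fun i => w (x - h • EuclideanSpace.single i (1 : ℝ)) with hwm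
    set Dp : Fin n → ℝ := fun i => D (x + h • EuclideanSpace.single i (1 : ℝ)) with hDp
    set Dm : Fin n → ℝ := fun i => D (x - h • EuclideanSpace.single i (1 : ℝ)) with hDm
    have hDsum : ∑ i, (wp i * Dp i + wm i * Dm i) ≤ h ^ 2 * (c * (w x - τ)) := by
      have hk : w x * ∑ i, (wp i * Dp i + wm i * Dm i) ≤ w x * (h ^ 2 * (c * (w x - τ))) := by
        have he : w x * ∑ i, (wp i * Dp i + wm i * Dm i) = w x * ∑ i,
            (wp i * (u' (x + h • EuclideanSpace.single i (1 : ℝ)) - u' x) +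
             wm i * (u' (x - h • EuclideanSpace.single i (1 : ℝ)) - u' x)) +
             h ^ 2 * ⟪discField w h x, p⟫ := by
          rw [hVeq, ← mul_add, ← Finset.sum_add_distrib]
          congr 1
          refine Finset.sum_congr rfl fun i _ => ?_
          simp only [hDp, hDm, hD, hwp, hwm, add_sub_cancel_left, sub_sub_cancel_left, inner_neg_right,
            inner_smul_right]
          ring
        rw [he]
        have := mul_le_mul_of_nonneg_left hVp (sq_nonneg h)
        nlinarith [hineq']
      exact le_of_mul_le_mul_left hk hxw
    have hDp0 : ∀ i, 0 ≤ wp i * Dp i := fun i => hwD _ (hlp i) i (Or.inl rfl)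
    have hDm0 : ∀ i, 0 ≤ wm i * Dm i := fun i => hwD _ (hlm i) i (Or.inr rfl)
    have hxτ : τ ≤ w x := by
      have : 0 ≤ h ^ 2 * (c * (w x - τ)) :=
        (Finset.sum_nonneg fun i _ => add_nonneg (hDp0 i) (hDm0 i)).trans hDsum
      have h5 : 0 < h ^ 2 * c := by positivity
      by_contra hlt
      push Not at hlt
      nlinarith
    have hne : ∀ i : Fin n, ‖h • EuclideanSpace.single i (1 : ℝ)‖ = h := fun i => by
      simp [norm_smul, abs_of_pos hpos]
    have hwp1 : ∀ i, w x - τ / 2 ≤ wp i := fun i => by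
      have := (abs_le.1 (hosc x (h • EuclideanSpace.single i (1 : ℝ)) (hne i))).1
      simp only [hwp]; linarith
    have hwm1 : ∀ i, w x - τ / 2 ≤ wm i := fun i => by
      have := (abs_le.1 (hosc x (-(h • EuclideanSpace.single i (1 : ℝ)))
        (by rw [norm_neg]; exact hne i))).1
      rw [← sub_eq_add_neg] at this
      simp only [hwm]; linarith
    have hτx : 0 < w x - τ / 2 := by linarith
    have hCp : ∀ i, x + h • EuclideanSpace.single i (1 : ℝ) ∈ Subtype.val '' C := fun i =>
      hcl _ (hlp i) (hτx.trans_le (hwp1 i)) i (Or.inl rfl)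
    have hCm : ∀ i, x - h • EuclideanSpace.single i (1 : ℝ) ∈ Subtype.val '' C := fun i =>
      hcl _ (hlm i) (hτx.trans_le (hwm1 i)) i (Or.inr rfl)
    refine ⟨fun i => ⟨hCp i, hCm i⟩, ?_⟩
    have hDs : ∑ i, (u' (x + h • EuclideanSpace.single i (1 : ℝ)) +
        u' (x - h • EuclideanSpace.single i (1 : ℝ)) - 2 * u' x) = ∑ i, (Dp i + Dm i) := by
      refine Finset.sum_congr rfl fun i _ => ?_
      simp only [hDp, hDm, hD, add_sub_cancel_left, sub_sub_cancel_left, inner_neg_right]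
      ring
    rw [hDs]
    have hfin : (w x - τ / 2) * ∑ i, (Dp i + Dm i) ≤ (w x - τ / 2) * (c * h ^ 2) := by
      calc (w x - τ / 2) * ∑ i, (Dp i + Dm i) ≤ ∑ i, (wp i * Dp i + wm i * Dm i) := by
            rw [Finset.mul_sum]
            refine Finset.sum_le_sum fun i _ => ?_
            have a1 := mul_le_mul_of_nonneg_right (hwp1 i) (hDC _ (hCp i))
            have a2 := mul_le_mul_of_nonneg_right (hwm1 i) (hDC _ (hCm i))
            rw [mul_add]
            exact add_le_add a1 a2
        _ ≤ _ := hDsum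
        _ ≤ _ := by
            have h5 : 0 ≤ c * h ^ 2 * τ := by positivity
            nlinarith
    exact le_of_mul_le_mul_left hfin hτx)
  refine ⟨φ, h1, h2, fun p hp => ?_, h4⟩
  obtain ⟨y, ⟨⟨z, hz⟩, _, rfl⟩, hy⟩ := h3 p hp
  exact ⟨z, ((hS z).1 hz).2, hy⟩

/-! ### Coarea-type estimate near the boundary -/

/-- Projection along the first basis vector. -/
def proj {m : ℕ} (b : OrthonormalBasis (Fin (m + 1)) ℝ (Euc (m + 1))) (x : Euc (m + 1)) :
    Fin m → ℝ := fun j => ⟪b j.succ, x⟫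

lemma proj_lip {m : ℕ} (b : OrthonormalBasis (Fin (m + 1)) ℝ (Euc (m + 1))) :
    LipschitzWith 1 (proj b) := by
  refine LipschitzWith.of_dist_le_mul fun x y => ?_
  rw [NNReal.coe_one, one_mul, dist_pi_le_iff dist_nonneg]
  intro j
  simp only [proj]
  rw [Real.dist_eq, ← inner_sub_right, dist_eq_norm]
  refine (abs_real_inner_le_norm _ _).trans ?_
  simp

/-- Coordinates adapted to `b`. -/
def chart {m : ℕ} (b : OrthonormalBasis (Fin (m + 1)) ℝ (Euc (m + 1))) (q : ℝ × (Fin m → ℝ)) :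
    Euc (m + 1) :=
  b.repr.symm (WithLp.toLp 2 ((MeasurableEquiv.piFinSuccAbove (fun _ => ℝ) 0).symm q))

lemma chart_mp {m : ℕ} (b : OrthonormalBasis (Fin (m + 1)) ℝ (Euc (m + 1))) :
    MeasurePreserving (chart b) volume volume := by
  have h1 := (volume_preserving_piFinSuccAbove (fun _ : Fin (m + 1) => ℝ) 0).symm
  have h2 := PiLp.volume_preserving_toLp (Fin (m + 1))
  have h3 := b.measurePreserving_repr_symm
  exact h3.comp (h2.comp h1)

lemma chart_emb {m : ℕ} (b : OrthonormalBasis (Fin (m + 1)) ℝ (Euc (m + 1))) :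
    MeasurableEmbedding (chart b) := by
  have h1 := (MeasurableEquiv.piFinSuccAbove (fun _ : Fin (m + 1) => ℝ) 0).symm.measurableEmbedding
  have h2 := (MeasurableEquiv.toLp 2 (Fin (m + 1) → ℝ)).measurableEmbedding
  have h3 := b.repr.symm.toHomeomorph.measurableEmbedding
  exact h3.comp (h2.comp h1)

lemma chart_eq {m : ℕ} (b : OrthonormalBasis (Fin (m + 1)) ℝ (Euc (m + 1))) (t : ℝ)
    (y : Fin m → ℝ) : chart b (t, y) = t • b 0 + ∑ j, y j • b j.succ := by
  unfold chart
  rw [← b.sum_repr_symm, Fin.sum_univ_succ]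
  simp [MeasurableEquiv.piFinSuccAbove]

lemma proj_chart {m : ℕ} (b : OrthonormalBasis (Fin (m + 1)) ℝ (Euc (m + 1))) (t : ℝ)
    (y : Fin m → ℝ) : proj b (chart b (t, y)) = y := by
  ext j
  simp only [proj, chart]
  rw [← b.repr_apply_apply]
  simp [MeasurableEquiv.piFinSuccAbove]

lemma chart_add {m : ℕ} (b : OrthonormalBasis (Fin (m + 1)) ℝ (Euc (m + 1))) (t : ℝ)
    (y : Fin m → ℝ) : chart b (t, y) = chart b (0, y) + t • b 0 := by
  rw [chart_eq, chart_eq]; simp [add_comm]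

lemma chart_deriv {m : ℕ} (b : OrthonormalBasis (Fin (m + 1)) ℝ (Euc (m + 1)))
    {f : Euc (m + 1) → ℝ} (hf : ContDiff ℝ 1 f) (y : Fin m → ℝ) (t : ℝ) :
    HasDerivAt (fun t => f (chart b (t, y))) ⟪gradient f (chart b (t, y)), b 0⟫ t := by
  have h1 : HasDerivAt (fun t => chart b (t, y)) (b 0) t := by
    have : (fun t => chart b (t, y)) = fun t => chart b (0, y) + t • b 0 := by
      ext1 t; exact chart_add b t y
    rw [this]
    simpa using ((hasDerivAt_id t).smul_const (b 0)).const_add (chart b (0, y))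
  have h2 := ((hf.differentiable (by norm_num)) (chart b (t, y))).hasFDerivAt
  have h3 := h2.comp_hasDerivAt t h1
  rw [gradient, InnerProductSpace.toDual_symm_apply]
  exact h3

lemma fiber_est {m : ℕ} (b : OrthonormalBasis (Fin (m + 1)) ℝ (Euc (m + 1)))
    {f : Euc (m + 1) → ℝ} (hf : ContDiff ℝ 1 f) {X k : ℝ → ℝ} {δ : ℝ}
    (hX : ∀ s, HasDerivAt X (-k s) s) (hk : ∀ s, 0 ≤ k s) (hkc : Continuous k)
    (hX0 : ∀ s, X s ∈ Icc (0 : ℝ) 1) (hkδ : ∀ s, k s ≠ 0 → -δ ≤ s ∧ s ≤ 0)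
    {nu : Euc (m + 1) → ℝ} (hnu : Continuous nu) {M : ℝ} (hM : 0 ≤ M)
    {B D : Set (Euc (m + 1))} (hB : Convex ℝ B) (hD : IsCompact D) (hDB : D ⊆ B)
    (hgood : ∀ x ∈ B, 0 ≤ ⟪gradient f x, b 0⟫ ∧ nu x ≤ M * ⟪gradient f x, b 0⟫) :
    ∫⁻ x in D, ENNReal.ofReal (k (f x) * nu x) ≤
      ENNReal.ofReal M * volume (proj b '' (D ∩ {x | -δ ≤ f x ∧ f x ≤ 0})) := by
  set P := proj b '' (D ∩ {x | -δ ≤ f x ∧ f x ≤ 0}) with hP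
  have hfc := hf.continuous
  have hPc : IsCompact P := by
    refine (hD.inter_right ?_).image (proj_lip b).continuous
    exact (isClosed_le continuous_const hfc).inter (isClosed_le hfc continuous_const)
  have hmeas : Measurable (fun x => ENNReal.ofReal (k (f x) * nu x)) := by
    exact ((hkc.comp hfc).mul hnu).measurable.ennreal_ofReal
  have hDm : MeasurableSet (chart b ⁻¹' D) := (chart_emb b).measurable hD.measurableSet
  rw [← (chart_mp b).setLIntegral_comp_preimage_emb (chart_emb b),
    ← lintegral_indicator hDm, Measure.volume_eq_prod]
  have hmi : Measurable ((chart b ⁻¹' D).indicator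
      (fun q => ENNReal.ofReal (k (f (chart b q)) * nu (chart b q)))) :=
    (hmeas.comp (chart_emb b).measurable).indicator hDm
  rw [lintegral_prod_symm _ hmi.aemeasurable]
  have hle : ∀ y : Fin m → ℝ, ∫⁻ t, (chart b ⁻¹' D).indicator
      (fun q => ENNReal.ofReal (k (f (chart b q)) * nu (chart b q))) (t, y) ≤
      P.indicator (fun _ => ENNReal.ofReal M) y := by
    intro y
    have hcc : Measurable (fun t : ℝ => chart b (t, y)) :=
      (chart_emb b).measurable.comp (measurable_id.prodMk measurable_const)
    by_cases hy : y ∈ P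
    · rw [indicator_of_mem hy]
      set s : Set ℝ := {t | chart b (t, y) ∈ D} with hs
      have hsm : MeasurableSet s := hcc hD.measurableSet
      have e1 : ∀ t, (chart b ⁻¹' D).indicator
          (fun q => ENNReal.ofReal (k (f (chart b q)) * nu (chart b q))) (t, y) =
          s.indicator (fun t => ENNReal.ofReal (k (f (chart b (t, y))) * nu (chart b (t, y)))) t := by
        intro t
        by_cases ht : chart b (t, y) ∈ D
        · rw [indicator_of_mem (show (t, y) ∈ chart b ⁻¹' D from ht),
            indicator_of_mem (show t ∈ s from ht)]
        · rw [indicator_of_notMem (show (t, y) ∉ chart b ⁻¹' D from ht),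
            indicator_of_notMem (show t ∉ s from ht)]
      simp_rw [e1]
      rw [lintegral_indicator hsm]
      set g : ℝ → ℝ := fun t => X (f (chart b (t, y))) with hg
      set g' : ℝ → ℝ := fun t => -k (f (chart b (t, y))) * ⟪gradient f (chart b (t, y)), b 0⟫ with hg'
      have hgd : ∀ t, HasDerivAt g (g' t) t := fun t =>
        (hX _).comp t (chart_deriv b hf y t)
      set J : Set ℝ := {t | chart b (t, y) ∈ B} with hJ
      have hJc : Convex ℝ J := by
        intro t1 h1 t2 h2 a c ha hc hac
        have := hB h1 h2 ha hc hac
        rw [hJ, mem_ofPred_eq]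
        convert this using 1
        rw [chart_add b t1, chart_add b t2, chart_add b]
        have : a • chart b (0, y) + c • chart b (0, y) = chart b (0, y) := by
          rw [← add_smul, hac, one_smul]
        simp only [smul_add, smul_eq_mul, add_smul, smul_smul]
        nth_rewrite 1 [← this]
        abel
      have hanti : AntitoneOn g s := by
        have : AntitoneOn g J := by
          refine antitoneOn_of_deriv_nonpos hJc (fun t _ => (hgd t).continuousAt.continuousWithinAt)
            (fun t _ => (hgd t).differentiableAt.differentiableWithinAt) fun t ht => ?_
          rw [(hgd t).deriv]
          have h1 := (hgood _ (interior_subset ht : t ∈ J)).1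
          have h2 := mul_nonneg (hk (f (chart b (t, y)))) h1
          simp only [hg']; linarith
        exact this.mono fun t ht => hDB ht
      have hvol := lintegral_deriv_eq_volume_image_of_antitoneOn hsm
        (fun t _ => (hgd t).hasDerivWithinAt) hanti
      have hvol1 : volume (g '' s) ≤ 1 := by
        calc volume (g '' s) ≤ volume (Icc (0 : ℝ) 1) := by
              refine measure_mono ?_
              rintro _ ⟨t, _, rfl⟩
              exact hX0 _
          _ = 1 := by simp
      calc ∫⁻ t in s, ENNReal.ofReal (k (f (chart b (t, y))) * nu (chart b (t, y)))
          ≤ ∫⁻ t in s, ENNReal.ofReal M * ENNReal.ofReal (-g' t) := by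
            refine setLIntegral_mono' hsm fun t ht => ?_
            rw [← ENNReal.ofReal_mul hM]
            refine ENNReal.ofReal_le_ofReal ?_
            have h1 := (hgood _ (hDB ht)).2
            have h2 := mul_le_mul_of_nonneg_left h1 (hk (f (chart b (t, y))))
            simp only [hg']; linarith
        _ = ENNReal.ofReal M * ∫⁻ t in s, ENNReal.ofReal (-g' t) := by
            rw [lintegral_const_mul' _ _ ENNReal.ofReal_ne_top]
        _ ≤ ENNReal.ofReal M * 1 := by rw [hvol]; gcongr
        _ = _ := mul_one _
    · rw [indicator_of_notMem hy]
      refine le_of_eq ?_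
      rw [lintegral_eq_zero_of_ae_eq_zero]
      refine Filter.Eventually.of_forall fun t => ?_
      simp only [Pi.zero_apply]
      by_cases ht : chart b (t, y) ∈ D
      · rw [indicator_of_mem (show (t, y) ∈ chart b ⁻¹' D from ht)]
        have : k (f (chart b (t, y))) = 0 := by
          by_contra hne
          exact hy ⟨_, ⟨ht, hkδ _ hne⟩, proj_chart b t y⟩
        simp [this]
      · rw [indicator_of_notMem (show (t, y) ∉ chart b ⁻¹' D from ht)]
  calc _ ≤ ∫⁻ y, P.indicator (fun _ => ENNReal.ofReal M) y := lintegral_mono hle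
    _ = _ := by rw [lintegral_indicator hPc.measurableSet]; simp

lemma small_proj {m : ℕ} (b : OrthonormalBasis (Fin (m + 1)) ℝ (Euc (m + 1)))
    {f : Euc (m + 1) → ℝ} (hf : Continuous f) {D : Set (Euc (m + 1))} (hD : IsCompact D)
    {η : ℝ≥0∞} (hη : η ≠ 0) : ∃ δ₀ > 0, ∀ δ : ℝ, δ ≤ δ₀ →
      volume (proj b '' (D ∩ {x | -δ ≤ f x ∧ f x ≤ 0})) ≤
        volume (proj b '' (D ∩ {x | f x = 0})) + η := by
  have hc : IsCompact (proj b '' (D ∩ {x | f x = 0})) :=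
    (hD.inter_right (isClosed_eq hf continuous_const)).image (proj_lip b).continuous
  obtain ⟨U, hU, hUo, hUv⟩ := (proj b '' (D ∩ {x | f x = 0})).exists_isOpen_lt_of_lt (μ := volume)
    (volume (proj b '' (D ∩ {x | f x = 0})) + η) (ENNReal.lt_add_right hc.measure_lt_top.ne hη)
  have hD' : IsCompact (D \ proj b ⁻¹' U) := hD.diff (hUo.preimage (proj_lip b).continuous)
  have hex : ∃ δ₀ > 0, ∀ x ∈ D \ proj b ⁻¹' U, δ₀ < |f x| := by
    rcases (D \ proj b ⁻¹' U).eq_empty_or_nonempty with he | hne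
    · exact ⟨1, one_pos, by simp [he]⟩
    · obtain ⟨z, hz, hzmin⟩ := hD'.exists_isMinOn hne hf.abs.continuousOn
      have hz0 : 0 < |f z| := by
        rw [abs_pos]
        intro h0
        exact hz.2 (hU ⟨z, ⟨hz.1, h0⟩, rfl⟩)
      exact ⟨|f z| / 2, by positivity, fun x hx => lt_of_lt_of_le (half_lt_self hz0) (hzmin hx)⟩
  obtain ⟨δ₀, hδ₀, h⟩ := hex
  refine ⟨δ₀, hδ₀, fun δ hδ => le_trans (measure_mono ?_) hUv.le⟩
  rintro _ ⟨x, ⟨hxD, hx1, hx2⟩, rfl⟩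
  by_contra hxU
  have := h x ⟨hxD, hxU⟩
  rw [abs_of_nonpos hx2] at this
  linarith

lemma volume_proj_le {m : ℕ} (b : OrthonormalBasis (Fin (m + 1)) ℝ (Euc (m + 1)))
    (A : Set (Euc (m + 1))) : volume (proj b '' A) ≤ μH[(m : ℝ)] A := by
  have h := (proj_lip b).hausdorffMeasure_image_le (d := (m : ℝ)) (Nat.cast_nonneg m) A
  have h2 : (μH[(m : ℝ)] : Measure (Fin m → ℝ)) = volume := by
    have := hausdorffMeasure_pi_real (ι := Fin m)
    rwa [Fintype.card_fin] at this
  rw [h2] at h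
  simpa using h

lemma haus_finite_of_anti {m : ℕ} (b : OrthonormalBasis (Fin (m + 1)) ℝ (Euc (m + 1)))
    {A : Set (Euc (m + 1))} (hA : Bornology.IsBounded A)
    (h : ∀ x ∈ A, ∀ y ∈ A, |⟪b 0, x - y⟫| ≤ 1 / 2 * ‖x - y‖) : μH[(m : ℝ)] A < ⊤ := by
  have hanti : AntilipschitzWith (2 * (m + 1) : NNReal) (fun x : A => proj b x) := by
    refine AntilipschitzWith.of_le_mul_dist fun x y => ?_
    have hs := b.sum_sq_inner_right ((x : Euc (m + 1)) - y)
    rw [Fin.sum_univ_succ] at hs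
    have h1 := h x x.2 y y.2
    have h2 : ∀ j : Fin m, ⟪b j.succ, (x : Euc (m + 1)) - y⟫ ^ 2 ≤ dist (proj b x) (proj b y) ^ 2 := by
      intro j
      have h3 := dist_le_pi_dist (proj b x) (proj b y) j
      simp only [proj] at h3
      rw [Real.dist_eq, ← inner_sub_right] at h3
      rw [← sq_abs]
      exact pow_le_pow_left₀ (abs_nonneg _) h3 2
    have h4 := Finset.sum_le_sum fun j (_ : j ∈ Finset.univ) => h2 j
    simp only [Finset.sum_const, Finset.card_univ, Fintype.card_fin, nsmul_eq_mul] at h4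
    have h5 : ⟪b 0, (x : Euc (m + 1)) - y⟫ ^ 2 ≤ (1 / 2 * ‖(x : Euc (m + 1)) - y‖) ^ 2 := by
      rw [← sq_abs]
      exact pow_le_pow_left₀ (abs_nonneg _) h1 2
    set d := dist (proj b x) (proj b y) with hd
    have hd0 : 0 ≤ d := dist_nonneg
    rw [Subtype.dist_eq, dist_eq_norm]
    push_cast
    refine le_of_sq_le_sq ?_ (by positivity)
    have hm : (0 : ℝ) ≤ m := Nat.cast_nonneg m
    nlinarith [mul_nonneg hm (sq_nonneg d), mul_nonneg (mul_nonneg hm hm) (sq_nonneg d), sq_nonneg d]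
  have h1 := hanti.le_hausdorffMeasure_image (d := (m : ℝ)) (Nat.cast_nonneg m) univ
  have h2 : (μH[(m : ℝ)] : Measure (Fin m → ℝ)) = volume := by
    have := hausdorffMeasure_pi_real (ι := Fin m)
    rwa [Fintype.card_fin] at this
  have h3 := (isometry_subtype_coe (s := A)).hausdorffMeasure_image (d := (m : ℝ))
    (Or.inl (Nat.cast_nonneg m)) univ
  rw [image_univ, Subtype.range_coe] at h3
  rw [h3]
  refine h1.trans_lt (ENNReal.mul_lt_top ?_ ?_)
  · exact ENNReal.rpow_lt_top_of_nonneg (Nat.cast_nonneg m) ENNReal.coe_ne_top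
  · rw [h2]
    have : Bornology.IsBounded ((fun x : A => proj b x) '' univ) := by
      have e : (fun x : A => proj b x) '' univ = proj b '' A := by
        ext y; simp
      rw [e]
      exact (proj_lip b).isBounded_image hA
    exact this.measure_lt_top

lemma exists_basis {m : ℕ} (v : Euc (m + 1)) (hv : ‖v‖ = 1) :
    ∃ b : OrthonormalBasis (Fin (m + 1)) ℝ (Euc (m + 1)), b 0 = v := by
  obtain ⟨b, hb⟩ := Orthonormal.exists_orthonormalBasis_extension_of_card_eq (𝕜 := ℝ)
    (E := Euc (m + 1)) (ι := Fin (m + 1)) (by simp) (v := fun _ => v) (s := {0}) (by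
      rw [orthonormal_iff_ite]
      rintro ⟨i, hi⟩ ⟨j, hj⟩
      rw [mem_singleton_iff] at hi hj
      subst hi; subst hj
      simp [hv])
  exact ⟨b, hb 0 rfl⟩

/-- A cutoff profile: `X` decreases from one to zero on `[-δ, 0]`, with derivative `-k`. -/
structure Prof (δ : ℝ) (X k : ℝ → ℝ) : Prop where
  hX : ∀ s, HasDerivAt X (-k s) s
  hk : ∀ s, 0 ≤ k s
  hkc : Continuous k
  hX0 : ∀ s, X s ∈ Icc (0 : ℝ) 1
  hkδ : ∀ s, k s ≠ 0 → -δ ≤ s ∧ s ≤ 0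

lemma local_est {m : ℕ} {K : Set (Euc (m + 1))} (hK : IsCompact K) (h0 : (0 : Euc (m + 1)) ∈ K)
    {f : Euc (m + 1) → ℝ} (hf : ContDiff ℝ 1 f) {x₀ : Euc (m + 1)} (hg : gradient f x₀ ≠ 0)
    {η : ℝ} (hη : 0 < η) :
    ∃ r > 0, μH[(m : ℝ)] (closedBall x₀ r ∩ {x | f x = 0}) < ⊤ ∧
      ∀ D ⊆ closedBall x₀ r, IsCompact D → ∀ η' > 0, ∃ δ₀ > 0, ∀ δ : ℝ, δ ≤ δ₀ →
        ∀ X k : ℝ → ℝ, Prof δ X k →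
        ∫⁻ x in D, ENNReal.ofReal (k (f x) * anisoNorm K (gradient f x)) ≤
          (∫⁻ x in D ∩ {x | f x = 0},
            ENNReal.ofReal (anisoNorm K (‖gradient f x‖⁻¹ • gradient f x) + 2 * η) ∂μH[(m : ℝ)]) +
            ENNReal.ofReal η' := by
  have hgc := gradient_continuous hf
  have hNc := aniso_continuous hK h0
  have hfdc : Continuous (fderiv ℝ f) := hf.continuous_fderiv (by norm_num)
  set g₀ := gradient f x₀ with hg₀
  have hg0 : 0 < ‖g₀‖ := norm_pos_iff.2 hg
  set ν := ‖g₀‖⁻¹ • g₀ with hν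
  have hν1 : ‖ν‖ = 1 := by rw [hν, norm_smul, norm_inv, norm_norm, inv_mul_cancel₀ hg0.ne']
  have hgν : ⟪g₀, ν⟫ = ‖g₀‖ := by
    rw [hν, inner_smul_right, real_inner_self_eq_norm_sq]; field_simp
  have hNν : anisoNorm K ν = ‖g₀‖⁻¹ * anisoNorm K g₀ := aniso_smul hK h0 (by positivity) _
  obtain ⟨b, hb⟩ := exists_basis ν hν1
  have hNν0 : 0 ≤ anisoNorm K ν := aniso_nonneg hK h0 _
  have ha : ∀ᶠ x in 𝓝 x₀, 0 < ⟪gradient f x, ν⟫ := by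
    have : Continuous fun x => ⟪gradient f x, ν⟫ := hgc.inner continuous_const
    exact this.continuousAt.eventually (lt_mem_nhds (by beta_reduce; rw [← hg₀, hgν]; exact hg0))
  have hbb : ∀ᶠ x in 𝓝 x₀, anisoNorm K (gradient f x) < (anisoNorm K ν + η) * ⟪gradient f x, ν⟫ := by
    have h1 : Continuous fun x => (anisoNorm K ν + η) * ⟪gradient f x, ν⟫ :=
      continuous_const.mul (hgc.inner continuous_const)
    refine (hNc.comp hgc).continuousAt.eventually_lt h1.continuousAt ?_
    simp only [Function.comp]
    rw [← hg₀, hgν, hNν, add_mul]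
    have : ‖g₀‖⁻¹ * anisoNorm K g₀ * ‖g₀‖ = anisoNorm K g₀ := by field_simp
    rw [this]
    have := mul_pos hη hg0
    linarith
  have hcc : ∀ᶠ x in 𝓝 x₀, anisoNorm K ν < anisoNorm K (‖gradient f x‖⁻¹ • gradient f x) + η := by
    have h1 : ContinuousAt (fun x => anisoNorm K (‖gradient f x‖⁻¹ • gradient f x) + η) x₀ := by
      refine ContinuousAt.add (hNc.continuousAt.comp ?_) continuousAt_const
      exact (hgc.norm.continuousAt.inv₀ (by rw [← hg₀]; exact hg0.ne')).smul hgc.continuousAt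
    refine continuousAt_const.eventually_lt h1 ?_
    rw [← hg₀, ← hν]; linarith
  have hdd : ∀ᶠ x in 𝓝 x₀, ‖fderiv ℝ f x - fderiv ℝ f x₀‖ < 1 / 2 * ‖g₀‖ := by
    have h1 : Continuous fun x => ‖fderiv ℝ f x - fderiv ℝ f x₀‖ := by fun_prop
    exact h1.continuousAt.eventually (gt_mem_nhds (by simp [hg0]))
  obtain ⟨r, hr, hgood⟩ := Metric.nhds_basis_closedBall.eventually_iff.1
    ((ha.and hbb).and (hcc.and hdd))
  refine ⟨r, hr, ?_, ?_⟩
  · refine haus_finite_of_anti b (isBounded_closedBall.subset inter_subset_left) ?_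
    rintro x ⟨hx, hfx⟩ y ⟨hy, hfy⟩
    rw [mem_ofPred_eq] at hfx hfy
    have := (convex_closedBall x₀ r).norm_image_sub_le_of_norm_fderiv_le' (𝕜 := ℝ) (f := f)
      (C := 1 / 2 * ‖g₀‖) (φ := fderiv ℝ f x₀) (x := y) (y := x)
      (fun z _ => hf.differentiable (by norm_num) z)
      (fun z hz => (hgood hz).2.2.le) hy hx
    rw [hfx, hfy, sub_zero, zero_sub, norm_neg, Real.norm_eq_abs] at this
    have h2 : fderiv ℝ f x₀ (x - y) = ‖g₀‖ * ⟪b 0, x - y⟫ := by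
      rw [hb, hν, real_inner_smul_left, hg₀, gradient, InnerProductSpace.toDual_symm_apply]
      rw [← mul_assoc, mul_inv_cancel₀, one_mul]
      exact hg0.ne'
    rw [h2, abs_mul, abs_of_pos hg0] at this
    refine le_of_mul_le_mul_left ?_ hg0
    linarith
  · intro D hDr hD η' hη'
    set M := anisoNorm K ν + η with hM
    have hM0 : 0 < M := by positivity
    obtain ⟨δ₀, hδ₀, hsm⟩ := small_proj b hf.continuous hD (η := ENNReal.ofReal (η' / M))
      (by simp only [ne_eq, ENNReal.ofReal_eq_zero, not_le]; positivity)
    refine ⟨δ₀, hδ₀, fun δ hδ X k hp => ?_⟩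
    have h1 := fiber_est b hf hp.hX hp.hk hp.hkc hp.hX0 hp.hkδ (hNc.comp hgc) hM0.le
      (convex_closedBall x₀ r) hD hDr (fun x hx => by
        rw [hb]
        exact ⟨(hgood hx).1.1.le, (hgood hx).1.2.le⟩)
    refine h1.trans ?_
    have hmeas : MeasurableSet (D ∩ {x | f x = 0}) :=
      (hD.inter_right (isClosed_eq hf.continuous continuous_const)).measurableSet
    calc ENNReal.ofReal M * volume (proj b '' (D ∩ {x | -δ ≤ f x ∧ f x ≤ 0}))
        ≤ ENNReal.ofReal M * (μH[(m : ℝ)] (D ∩ {x | f x = 0}) + ENNReal.ofReal (η' / M)) := by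
          gcongr
          exact (hsm δ hδ).trans (add_le_add (volume_proj_le b _) le_rfl)
      _ = (∫⁻ x in D ∩ {x | f x = 0}, ENNReal.ofReal M ∂μH[(m : ℝ)]) + ENNReal.ofReal η' := by
          rw [mul_add, setLIntegral_const, ← ENNReal.ofReal_mul hM0.le]
          congr 2
          field_simp
      _ ≤ _ := by
          refine add_le_add ?_ le_rfl
          refine setLIntegral_mono' hmeas fun x hx => ENNReal.ofReal_le_ofReal ?_
          have := (hgood (hDr hx.1)).2.1
          linarith

lemma haus_boundary_finite {m : ℕ} {f : Euc (m + 1) → ℝ} (hf : ContDiff ℝ 1 f)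
    (hZ : IsCompact {x | f x = 0}) (hg : ∀ x, f x = 0 → gradient f x ≠ 0) :
    μH[(m : ℝ)] {x | f x = 0} < ⊤ := by
  refine hZ.measure_lt_top_of_nhdsWithin fun x hx => ?_
  obtain ⟨r, hr, h, -⟩ := local_est (K := {0}) isCompact_singleton rfl hf (hg x hx) one_pos
  exact ⟨_, Filter.inter_mem (mem_nhdsWithin_of_mem_nhds (closedBall_mem_nhds x hr))
    self_mem_nhdsWithin, h⟩

lemma global_est {m : ℕ} {K : Set (Euc (m + 1))} (hK : IsCompact K) (h0 : (0 : Euc (m + 1)) ∈ K)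
    {f : Euc (m + 1) → ℝ} (hf : ContDiff ℝ 1 f) (hL : IsCompact {x | f x ≤ 0})
    (hg : ∀ x, f x = 0 → gradient f x ≠ 0) {η : ℝ} (hη : 0 < η) :
    ∀ᶠ δ : ℝ in 𝓝[>] 0, ∀ X k : ℝ → ℝ, Prof δ X k →
        ∫⁻ x, ENNReal.ofReal (k (f x) * anisoNorm K (gradient f x)) ≤
          (∫⁻ x in {x | f x = 0},
            ENNReal.ofReal (anisoNorm K (‖gradient f x‖⁻¹ • gradient f x) + 2 * η) ∂μH[(m : ℝ)]) +
            ENNReal.ofReal η := by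
  classical
  have hfc := hf.continuous
  set Z := {x | f x = 0} with hZdef
  have hZcl : IsClosed Z := isClosed_eq hfc continuous_const
  have hZ : IsCompact Z := hL.of_isClosed_subset hZcl fun x (hx : f x = 0) => hx.le
  have hZfin : μH[(m : ℝ)] Z < ⊤ := haus_boundary_finite hf hZ hg
  set μ : Measure (Euc (m + 1)) := μH[(m : ℝ)].restrict Z with hμ
  have : IsFiniteMeasure μ := ⟨by rw [hμ, Measure.restrict_apply_univ]; exact hZfin⟩
  have hrad : ∀ x : Euc (m + 1), ∃ r > 0, f x = 0 → (μ (sphere x r) = 0 ∧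
      ∀ D ⊆ closedBall x r, IsCompact D → ∀ η' > 0, ∃ δ₀ > 0, ∀ δ : ℝ, δ ≤ δ₀ →
        ∀ X k : ℝ → ℝ, Prof δ X k →
        ∫⁻ x in D, ENNReal.ofReal (k (f x) * anisoNorm K (gradient f x)) ≤
          (∫⁻ x in D ∩ Z,
            ENNReal.ofReal (anisoNorm K (‖gradient f x‖⁻¹ • gradient f x) + 2 * η) ∂μH[(m : ℝ)]) +
            ENNReal.ofReal η') := by
    intro x
    by_cases hx : f x = 0
    · obtain ⟨r, hr, -, h⟩ := local_est hK h0 hf (hg x hx) hη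
      obtain ⟨rs, hrs, hnull⟩ := exists_null_frontiers_thickening μ {x}
      obtain ⟨N, hN⟩ := (hrs.eventually (gt_mem_nhds hr)).exists
      refine ⟨rs N, (hnull N).1, fun _ => ⟨?_, fun D hD => h D (hD.trans
        (closedBall_subset_closedBall hN.le))⟩⟩
      have := (hnull N).2
      rwa [thickening_singleton, frontier_ball x (hnull N).1.ne'] at this
    · exact ⟨1, one_pos, fun h => absurd h hx⟩
  choose r hr hrprop using hrad
  obtain ⟨t, htZ, htcov⟩ := hZ.elim_nhds_subcover (fun x => ball x (r x))
    (fun x _ => ball_mem_nhds x (hr x))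
  set N := t.card with hN
  set p : Fin N → Euc (m + 1) := fun i => (t.equivFin.symm i : Euc (m + 1)) with hp
  have hpZ : ∀ i, f (p i) = 0 := fun i => htZ _ (t.equivFin.symm i).2
  have hcov : Z ⊆ ⋃ i, ball (p i) (r (p i)) := by
    intro x hx
    obtain ⟨y, hy, hxy⟩ := mem_iUnion₂.1 (htcov hx)
    refine mem_iUnion.2 ⟨t.equivFin ⟨y, hy⟩, ?_⟩
    simpa [hp] using hxy
  set U := ⋃ i, ball (p i) (r (p i)) with hU
  have hUo : IsOpen U := isOpen_iUnion fun _ => isOpen_ball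
  set D : Fin N → Set (Euc (m + 1)) := fun i =>
    closedBall (p i) (r (p i)) \ ⋃ j, ⋃ (_ : j < i), ball (p j) (r (p j)) with hD
  have hDc : ∀ i, IsCompact (D i) := fun i => (isCompact_closedBall _ _).diff
    (isOpen_iUnion fun j => isOpen_iUnion fun _ => isOpen_ball)
  have hDsub : ∀ i, D i ⊆ closedBall (p i) (r (p i)) := fun i => sdiff_subset
  have hUD : U ⊆ ⋃ i, D i := by
    intro x hx
    obtain ⟨i, hi⟩ := mem_iUnion.1 hx
    obtain ⟨i₀, hi₀, hmin⟩ := wellFounded_lt.has_min {i | x ∈ ball (p i) (r (p i))} ⟨i, hi⟩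
    refine mem_iUnion.2 ⟨i₀, ball_subset_closedBall hi₀, fun hx' => ?_⟩
    obtain ⟨j, hj, hxj⟩ := mem_iUnion₂.1 hx'
    exact hmin j hxj hj
  -- small level sets are covered
  have hev1 : ∀ᶠ δ : ℝ in 𝓝[>] 0, {x | -δ ≤ f x ∧ f x ≤ 0} ⊆ U := by
    have hc : IsCompact ({x | f x ≤ 0} \ U) := hL.diff hUo
    rcases ({x | f x ≤ 0} \ U).eq_empty_or_nonempty with he | hne
    · refine Filter.Eventually.of_forall fun δ x hx => ?_
      by_contra hxU
      have : x ∈ {x | f x ≤ 0} \ U := ⟨hx.2, hxU⟩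
      rw [he] at this
      exact this
    · obtain ⟨z, hz, hzmax⟩ := hc.exists_isMaxOn hne hfc.continuousOn
      have hz0 : f z < 0 := lt_of_le_of_ne hz.1 fun h => hz.2 (hcov h)
      have : ∀ᶠ δ : ℝ in 𝓝[>] 0, δ < -f z :=
        mem_nhdsWithin_of_mem_nhds (gt_mem_nhds (by linarith))
      filter_upwards [this] with δ hδ x hx
      by_contra hxU
      have h1 : f x ≤ f z := hzmax (show x ∈ {x | f x ≤ 0} \ U from ⟨hx.2, hxU⟩)
      have h2 := hx.1
      linarith
  have hN1 : (0 : ℝ) < η / (N + 1) := by positivity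
  have hev2 : ∀ᶠ δ : ℝ in 𝓝[>] 0, ∀ i : Fin N, ∀ X k : ℝ → ℝ, Prof δ X k →
        ∫⁻ x in D i, ENNReal.ofReal (k (f x) * anisoNorm K (gradient f x)) ≤
          (∫⁻ x in D i ∩ Z,
            ENNReal.ofReal (anisoNorm K (‖gradient f x‖⁻¹ • gradient f x) + 2 * η) ∂μH[(m : ℝ)]) +
            ENNReal.ofReal (η / (N + 1)) := by
    rw [Filter.eventually_all]
    intro i
    obtain ⟨δ₀, hδ₀, h⟩ := (hrprop (p i) (hpZ i)).2 (D i) (hDsub i) (hDc i) _ hN1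
    have : ∀ᶠ δ : ℝ in 𝓝[>] 0, δ < δ₀ := mem_nhdsWithin_of_mem_nhds (gt_mem_nhds hδ₀)
    filter_upwards [this] with δ hδ
    exact h δ hδ.le
  filter_upwards [hev1, hev2] with δ h1 h2 X k hp'
  set a : Euc (m + 1) → ℝ≥0∞ := fun x => ENNReal.ofReal (k (f x) * anisoNorm K (gradient f x)) with ha
  set B : Euc (m + 1) → ℝ≥0∞ := fun x =>
    ENNReal.ofReal (anisoNorm K (‖gradient f x‖⁻¹ • gradient f x) + 2 * η) with hB
  have hDZm : ∀ i, MeasurableSet (D i ∩ Z) := fun i =>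
    (hDc i).measurableSet.inter hZcl.measurableSet
  have key : ∀ i j : Fin N, i < j → μH[(m : ℝ)] ((D i ∩ Z) ∩ (D j ∩ Z)) = 0 := by
    intro i j hij
    have h3 := (hrprop (p i) (hpZ i)).1
    rw [hμ, Measure.restrict_apply (isClosed_sphere.measurableSet)] at h3
    refine measure_mono_null ?_ h3
    rintro x ⟨⟨hxi, hxZ⟩, hxj, -⟩
    refine ⟨?_, hxZ⟩
    have h4 := hDsub i hxi
    have h5 : x ∉ ball (p i) (r (p i)) := fun hx => hxj.2 (mem_iUnion₂.2 ⟨i, hij, hx⟩)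
    rw [mem_closedBall] at h4
    rw [mem_ball, not_lt] at h5
    exact le_antisymm h4 h5
  have hdisj : Pairwise (Function.onFun (AEDisjoint μH[(m : ℝ)]) fun i => D i ∩ Z) := by
    intro i j hij
    rcases lt_or_gt_of_ne hij with h | h
    · exact key i j h
    · have := key j i h
      rw [inter_comm] at this
      exact this
  have hsumB : ∑ i, ∫⁻ x in D i ∩ Z, B x ∂μH[(m : ℝ)] ≤ ∫⁻ x in Z, B x ∂μH[(m : ℝ)] := by
    have := lintegral_iUnion₀ (fun i => (hDZm i).nullMeasurableSet) hdisj B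
    rw [tsum_fintype] at this
    rw [← this]
    exact lintegral_mono_set (iUnion_subset fun i => inter_subset_right)
  calc ∫⁻ x, a x = ∫⁻ x in ⋃ i, D i, a x := by
        rw [← lintegral_indicator (MeasurableSet.iUnion fun i => (hDc i).measurableSet)]
        congr 1
        ext1 x
        by_cases hx : x ∈ ⋃ i, D i
        · rw [indicator_of_mem hx]
        · rw [indicator_of_notMem hx]
          have : k (f x) = 0 := by
            by_contra hne
            exact hx (hUD (h1 (hp'.hkδ _ hne)))
          simp [ha, this]
    _ ≤ ∑' i, ∫⁻ x in D i, a x := lintegral_iUnion_le _ _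
    _ = ∑ i, ∫⁻ x in D i, a x := tsum_fintype _
    _ ≤ ∑ i, ((∫⁻ x in D i ∩ Z, B x ∂μH[(m : ℝ)]) + ENNReal.ofReal (η / (N + 1))) :=
        Finset.sum_le_sum fun i _ => h2 i X k hp'
    _ = (∑ i, ∫⁻ x in D i ∩ Z, B x ∂μH[(m : ℝ)]) + N * ENNReal.ofReal (η / (N + 1)) := by
        rw [Finset.sum_add_distrib]; simp
    _ ≤ _ := by
        refine add_le_add hsumB ?_
        rw [← ENNReal.ofReal_natCast, ← ENNReal.ofReal_mul (Nat.cast_nonneg N)]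
        refine ENNReal.ofReal_le_ofReal ?_
        rw [mul_div_assoc', div_le_iff₀ (by positivity)]
        nlinarith

/-- Derivative of the squared cutoff profile, up to sign. -/
def profK (δ s : ℝ) : ℝ :=
  2 * Real.smoothTransition (-s / δ) * deriv Real.smoothTransition (-s / δ) / δ

lemma st_hasDerivAt (y : ℝ) :
    HasDerivAt Real.smoothTransition (deriv Real.smoothTransition y) y :=
  ((Real.smoothTransition.contDiff (n := 1)).differentiable (by norm_num) y).hasDerivAt

lemma prof_cutoff {δ : ℝ} (hδ : 0 < δ) :
    Prof δ (fun s => Real.smoothTransition (-s / δ) ^ 2) (profK δ) where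
  hX s := by
    have h1 : HasDerivAt (fun s : ℝ => -s / δ) (-1 / δ) s :=
      ((hasDerivAt_id s).neg).div_const δ
    have h2 : HasDerivAt (fun s : ℝ => Real.smoothTransition (-s / δ))
        (deriv Real.smoothTransition (-s / δ) * (-1 / δ)) s :=
      HasDerivAt.comp (h₂ := Real.smoothTransition) (h := fun s : ℝ => -s / δ) s
        (st_hasDerivAt (-s / δ)) h1
    refine (h2.fun_pow 2).congr_deriv ?_
    simp only [profK]
    norm_num
    ring
  hk s := by
    have h1 := Real.smoothTransition.nonneg (-s / δ)
    have h2 : 0 ≤ deriv Real.smoothTransition (-s / δ) := Real.smoothTransition.monotone.deriv_nonneg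
    unfold profK
    positivity
  hkc := by
    have h2 : Continuous (deriv Real.smoothTransition) :=
      (Real.smoothTransition.contDiff (n := 1)).continuous_deriv (by norm_num)
    unfold profK
    have h3 : Continuous fun s : ℝ => -s / δ := by fun_prop
    exact ((continuous_const.mul (Real.smoothTransition.continuous.comp h3)).mul
      (h2.comp h3)).div_const δ
  hX0 s := ⟨by positivity, by
    have h1 := Real.smoothTransition.nonneg (-s / δ)
    have h2 := Real.smoothTransition.le_one (-s / δ)
    exact pow_le_one₀ h1 h2⟩
  hkδ s hs := by
    constructor
    · by_contra hlt
      push Not at hlt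
      apply hs
      have h1 : 1 < -s / δ := by rw [lt_div_iff₀ hδ]; linarith
      have h2 : Real.smoothTransition =ᶠ[𝓝 (-s / δ)] fun _ => 1 := by
        filter_upwards [lt_mem_nhds h1] with y hy
        exact Real.smoothTransition.one_of_one_le hy.le
      simp [profK, h2.deriv_eq]
    · by_contra hlt
      push Not at hlt
      apply hs
      have h1 : -s / δ ≤ 0 := div_nonpos_of_nonpos_of_nonneg (by linarith) hδ.le
      simp [profK, Real.smoothTransition.zero_of_nonpos h1]

lemma cutoff_aniso {n : ℕ} {K : Set (Euc n)} (hK : IsCompact K) (h0 : (0 : Euc n) ∈ K)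
    {f : Euc n → ℝ} (hf : ContDiff ℝ 1 f) {δ : ℝ} (hδ : 0 < δ) (x : Euc n) :
    anisoNorm K (-((2 * Real.smoothTransition (-f x / δ)) •
      gradient (fun x => Real.smoothTransition (-f x / δ)) x)) =
      profK δ (f x) * anisoNorm K (gradient f x) := by
  have h1 : HasDerivAt (fun s : ℝ => -s / δ) (-1 / δ) (f x) :=
    ((hasDerivAt_id (f x)).neg).div_const δ
  have h2 := ((st_hasDerivAt (-f x / δ)).comp (f x) h1).comp_hasFDerivAt x
    (hf.differentiable (by norm_num) x).hasFDerivAt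
  have h3 : fderiv ℝ (fun x => Real.smoothTransition (-f x / δ)) x =
    (deriv Real.smoothTransition (-f x / δ) * (-1 / δ)) • fderiv ℝ f x := h2.fderiv
  have h4 : gradient (fun x => Real.smoothTransition (-f x / δ)) x =
      (deriv Real.smoothTransition (-f x / δ) * (-1 / δ)) • gradient f x := by
    rw [gradient, h3, gradient]
    simp
  rw [h4, ← aniso_smul hK h0 ((prof_cutoff hδ).hk (f x)), smul_smul, ← neg_smul]
  congr 2
  unfold profK
  ring

lemma cutoff_tendsto {n : ℕ} {f : Euc n → ℝ} (hf : Continuous f)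
    (hL : IsCompact {x | f x ≤ 0}) :
    Filter.Tendsto (fun δ : ℝ => ∫ x, Real.smoothTransition (-f x / δ) ^ 2) (𝓝[>] 0)
      (𝓝 (volume {x | f x < 0}).toReal) := by
  have hEm : MeasurableSet {x | f x < 0} := (isOpen_lt hf continuous_const).measurableSet
  have e : (volume {x | f x < 0}).toReal = ∫ x, {x | f x < 0}.indicator (fun _ => (1 : ℝ)) x := by
    rw [integral_indicator hEm]; simp [Measure.real]
  rw [e]
  refine tendsto_integral_filter_of_dominated_convergence
    ({x | f x ≤ 0}.indicator (fun _ => (1 : ℝ))) ?_ ?_ ?_ ?_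
  · refine Filter.Eventually.of_forall fun δ => Continuous.aestronglyMeasurable ?_
    exact (Real.smoothTransition.continuous.comp (hf.neg.div_const δ)).pow 2
  · filter_upwards [self_mem_nhdsWithin] with δ hδ
    refine Filter.Eventually.of_forall fun x => ?_
    rw [mem_Ioi] at hδ
    by_cases hx : f x ≤ 0
    · rw [indicator_of_mem (show x ∈ {x | f x ≤ 0} from hx), Real.norm_eq_abs,
        abs_of_nonneg (by positivity)]
      exact ((prof_cutoff hδ).hX0 (f x)).2
    · rw [indicator_of_notMem (show x ∉ {x | f x ≤ 0} from hx)]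
      push Not at hx
      rw [Real.smoothTransition.zero_of_nonpos
        (div_nonpos_of_nonpos_of_nonneg (by linarith) hδ.le)]
      simp
  · exact (integrableOn_const hL.measure_lt_top.ne).integrable_indicator hL.measurableSet
  · refine Filter.Eventually.of_forall fun x => ?_
    refine tendsto_const_nhds.congr' ?_
    by_cases hx : f x < 0
    · have : ∀ᶠ δ : ℝ in 𝓝[>] 0, δ < -f x :=
        mem_nhdsWithin_of_mem_nhds (gt_mem_nhds (by linarith))
      filter_upwards [this, self_mem_nhdsWithin] with δ h1 h2
      rw [mem_Ioi] at h2
      rw [indicator_of_mem (show x ∈ {x | f x < 0} from hx),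
        Real.smoothTransition.one_of_one_le (by rw [le_div_iff₀ h2]; linarith)]
      simp
    · filter_upwards [self_mem_nhdsWithin] with δ h2
      rw [mem_Ioi] at h2
      rw [indicator_of_notMem (show x ∉ {x | f x < 0} from hx),
        Real.smoothTransition.zero_of_nonpos
        (div_nonpos_of_nonpos_of_nonneg (by linarith) h2.le)]
      simp

theorem exists_cutoff {m : ℕ} {K : Set (Euc (m + 1))} (hK : IsCompact K)
    (h0 : (0 : Euc (m + 1)) ∈ K)
    {f : Euc (m + 1) → ℝ} (hf : ContDiff ℝ 1 f) (hL : IsCompact {x | f x ≤ 0})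
    (hg : ∀ x, f x = 0 → gradient f x ≠ 0) {c : ℝ}
    (hc : (∫ y in {x | f x = 0}, anisoNorm K (‖gradient f y‖⁻¹ • gradient f y) ∂(μH[(m : ℝ)])) <
      c * (volume {x | f x < 0}).toReal) :
    ∃ w : Euc (m + 1) → ℝ, ContDiff ℝ 1 w ∧ HasCompactSupport w ∧ (∀ x, 0 ≤ w x) ∧
      (∀ x, 0 < w x → f x < 0) ∧
      ∫ x, anisoNorm K (-((2 * w x) • gradient w x)) < c * ∫ x, w x ^ 2 := by
  have hfc := hf.continuous
  have hgc := gradient_continuous hf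
  have hNc := aniso_continuous hK h0
  set Z := {x | f x = 0} with hZdef
  have hZcl : IsClosed Z := isClosed_eq hfc continuous_const
  have hZ : IsCompact Z := hL.of_isClosed_subset hZcl fun x (hx : f x = 0) => hx.le
  have hZfin : μH[(m : ℝ)] Z < ⊤ := haus_boundary_finite hf hZ hg
  set μ : Measure (Euc (m + 1)) := μH[(m : ℝ)].restrict Z with hμ
  have : IsFiniteMeasure μ := ⟨by rw [hμ, Measure.restrict_apply_univ]; exact hZfin⟩
  set q : Euc (m + 1) → ℝ := fun y => anisoNorm K (‖gradient f y‖⁻¹ • gradient f y) with hq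
  have hqint : Integrable q μ := by
    obtain ⟨R, hR, hRb⟩ := aniso_bound hK h0
    refine Integrable.of_bound (C := R) ?_ (Filter.Eventually.of_forall fun y => ?_)
    · refine ContinuousOn.aestronglyMeasurable ?_ hZcl.measurableSet
      refine hNc.comp_continuousOn ?_
      exact (hgc.norm.continuousOn.inv₀ fun x hx => norm_ne_zero_iff.2 (hg x hx)).smul
        hgc.continuousOn
    · rw [Real.norm_eq_abs, abs_of_nonneg (aniso_nonneg hK h0 _)]
      refine (hRb _).trans ?_
      rw [norm_smul, norm_inv, norm_norm]
      exact mul_le_of_le_one_right hR.le inv_mul_le_one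
  set P := ∫ y, q y ∂μ with hP
  have hq0 : ∀ y, 0 ≤ q y := fun y => aniso_nonneg hK h0 _
  set S := μ.real univ with hS
  have hS0 : 0 ≤ S := measureReal_nonneg
  set V := (volume {x | f x < 0}).toReal with hV
  set gap := c * V - P with hgap
  have hgap0 : 0 < gap := sub_pos.2 hc
  set η := gap / (2 * (2 * S + 1)) with hη
  have hη0 : 0 < η := by positivity
  have hbound : (∫⁻ x in Z, ENNReal.ofReal (q x + 2 * η) ∂μH[(m : ℝ)]) + ENNReal.ofReal η =
      ENNReal.ofReal (P + gap / 2) := by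
    have hi2 : Integrable (fun x => q x + 2 * η) μ := hqint.add (integrable_const _)
    have h1 := ofReal_integral_eq_lintegral_ofReal hi2
      (Filter.Eventually.of_forall fun x => by
        have := hq0 x
        simp only [Pi.zero_apply]; positivity)
    have h2 : ∫ x, (q x + 2 * η) ∂μ = P + 2 * η * S := by
      rw [integral_add hqint (integrable_const _), integral_const, smul_eq_mul]
      ring
    have hP0 : 0 ≤ P := integral_nonneg hq0
    rw [← h1, h2, ← ENNReal.ofReal_add (by positivity) hη0.le]
    congr 1
    rw [hη]; field_simp; ring
  have hev1 := global_est hK h0 hf hL hg hη0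
  have hlim := ((cutoff_tendsto hfc hL).const_mul c).eventually
    (lt_mem_nhds (show P + gap / 2 < c * V by simp only [hgap] at hgap0 ⊢; linarith))
  obtain ⟨δ, ⟨h1, h2⟩, hδ⟩ := ((hev1.and hlim).and self_mem_nhdsWithin).exists
  have h3 := h1 _ _ (prof_cutoff hδ)
  have hb' := h3.trans hbound.le
  refine ⟨fun x => Real.smoothTransition (-f x / δ), ?_, ?_, ?_, ?_, ?_⟩
  · exact (Real.smoothTransition.contDiff (n := 1)).comp (hf.neg.div_const δ)
  · refine HasCompactSupport.intro hL fun x hx => ?_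
    rw [mem_ofPred_eq, not_le] at hx
    exact Real.smoothTransition.zero_of_nonpos
      (div_nonpos_of_nonpos_of_nonneg (by linarith) hδ.le)
  · exact fun x => Real.smoothTransition.nonneg _
  · intro x hx
    by_contra hx'
    push Not at hx'
    change 0 < Real.smoothTransition (-f x / δ) at hx
    rw [Real.smoothTransition.zero_of_nonpos
      (div_nonpos_of_nonpos_of_nonneg (by linarith) hδ.le)] at hx
    exact lt_irrefl _ hx
  · refine lt_of_le_of_lt ?_ h2
    simp_rw [cutoff_aniso hK h0 hf hδ]
    have hnn : ∀ x, 0 ≤ profK δ (f x) * anisoNorm K (gradient f x) := fun x =>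
      mul_nonneg ((prof_cutoff hδ).hk _) (aniso_nonneg hK h0 _)
    rw [integral_eq_lintegral_of_nonneg_ae (Filter.Eventually.of_forall hnn)
      (((prof_cutoff hδ).hkc.comp hfc).mul (hNc.comp hgc)).aestronglyMeasurable]
    have hP0 : 0 ≤ P := integral_nonneg hq0
    exact ENNReal.toReal_le_of_le_ofReal (by positivity) hb'

theorem main_thm {n : ℕ} (hn : 1 ≤ n)
    (K : Set (Euc n)) (hKcp : IsCompact K) (hKcv : Convex ℝ K)
    (hK0 : (0 : Euc n) ∈ interior K)
    (E : Set (Euc n)) (hEo : IsOpen E) (hEb : Bornology.IsBounded E) (hEc : IsConnected E)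
    (f : Euc n → ℝ) (hf : ContDiff ℝ (⊤ : ℕ∞) f) (hEf : E = {x | f x < 0})
    (hfr : frontier E = {x | f x = 0}) (hfd : ∀ x ∈ frontier E, gradient f x ≠ 0) :
    ∃ φ : Euc n → ℝ, ConvexOn ℝ univ φ ∧
      ContDiff ℝ 1 φ ∧ (∃ L : NNReal, LipschitzWith L (fun x => gradient φ x)) ∧
      (fun x => gradient φ x) '' univ = K ∧
      (fun x => gradient φ x) '' closure E = K ∧
      ∀ᵐ x ∂(volume : Measure (Euc n)),
        DifferentiableAt ℝ (fderiv ℝ φ) x ∧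
        lapl φ x ≤
          (∫ y in frontier E, anisoNorm K (‖gradient f y‖⁻¹ • gradient f y)
              ∂(μH[(n : ℝ) - 1])) / (volume E).toReal := by
  obtain ⟨m, rfl⟩ : ∃ m, n = m + 1 := ⟨n - 1, by omega⟩
  have h0 : (0 : Euc (m + 1)) ∈ K := interior_subset hK0
  have hf1 : ContDiff ℝ 1 f := hf.of_le (by exact_mod_cast le_top)
  have hcl : closure E = {x | f x ≤ 0} := by
    rw [closure_eq_self_union_frontier, hfr, hEf]
    ext x
    simp only [mem_union, mem_ofPred_eq]
    exact le_iff_lt_or_eq.symm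
  have hA : IsCompact (closure E) := hEb.isCompact_closure
  have hL : IsCompact {x | f x ≤ 0} := hcl ▸ hA
  have hg : ∀ x, f x = 0 → gradient f x ≠ 0 := fun x hx => hfd x (by rw [hfr]; exact hx)
  have hVpos : 0 < (volume E).toReal :=
    ENNReal.toReal_pos (hEo.measure_pos volume hEc.nonempty).ne' hEb.measure_lt_top.ne
  have hdim : ((m + 1 : ℕ) : ℝ) - 1 = m := by push_cast; ring
  rw [hdim]
  set P := ∫ y in frontier E, anisoNorm K (‖gradient f y‖⁻¹ • gradient f y) ∂(μH[(m : ℝ)]) with hP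
  set c := P / (volume E).toReal with hc
  have hstep : ∀ k : ℕ, ∃ h : ℝ, 0 < h ∧ h < 1 / ((k : ℝ) + 1) ∧ ∃ φ : Euc (m + 1) → ℝ,
      ConvexOn ℝ univ φ ∧
      (∀ x v, φ (x + v) ≤ φ x + anisoNorm K v) ∧
      (∀ p ∈ K, ∃ y ∈ closure E, ∀ x, φ y + ⟪p, x - y⟫ ≤ φ x) ∧
      ∀ x, ∑ i, (φ (x + h • EuclideanSpace.single i (1 : ℝ)) +
        φ (x - h • EuclideanSpace.single i (1 : ℝ)) - 2 * φ x) ≤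
          (c + 1 / ((k : ℝ) + 1)) * h ^ 2 := by
    intro k
    have hk : (0 : ℝ) < 1 / ((k : ℝ) + 1) := by positivity
    have hlt : (∫ y in {x | f x = 0}, anisoNorm K (‖gradient f y‖⁻¹ • gradient f y) ∂(μH[(m : ℝ)])) <
        (c + 1 / ((k : ℝ) + 1)) * (volume {x | f x < 0}).toReal := by
      rw [← hfr, ← hEf, ← hP, add_mul, hc, div_mul_cancel₀ _ hVpos.ne']
      have := mul_pos hk hVpos
      linarith
    obtain ⟨w, hw, hwc, hw0, hwE, hwI⟩ := exists_cutoff hKcp h0 hf1 hL hg hlt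
    obtain ⟨h, hh0, hh1, φ, a1, a2, a3, a4⟩ := discretize hKcp hKcv h0 hw hwc hw0 hwI hk
    refine ⟨h, hh0, hh1, φ, a1, a2, fun p hp => ?_, a4⟩
    obtain ⟨y, hy, hy2⟩ := a3 p hp
    exact ⟨y, by rw [hcl]; exact (hwE y hy).le, hy2⟩
  choose h hh0 hh1 φ a1 a2 a3 a4 using hstep
  have hlim0 : Filter.Tendsto (fun k : ℕ => 1 / ((k : ℝ) + 1)) Filter.atTop (𝓝 0) :=
    tendsto_one_div_add_atTop_nhds_zero_nat
  refine limit_theorem hn hKcp hKcv h0 hA c (fun k x => φ k x - φ k 0) h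
    (fun k => c + 1 / ((k : ℝ) + 1)) hh0 ?_ ?_ ?_ ?_ ?_ ?_ ?_
  · exact squeeze_zero (fun k => (hh0 k).le) (fun k => (hh1 k).le) hlim0
  · simpa using hlim0.const_add c
  · intro k
    have := (a1 k).add_const (-(φ k 0))
    exact this
  · intro k x v
    have := a2 k x v
    linarith
  · intro k p hp
    obtain ⟨y, hy, hy2⟩ := a3 k p hp
    refine ⟨y, hy, fun x => ?_⟩
    have := hy2 x
    linarith
  · intro k x
    refine le_trans (le_of_eq ?_) (a4 k x)
    refine Finset.sum_congr rfl fun i _ => ?_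
    ring
  · intro k; simp

/-- Existence of the "anisotropic coupling": a `C^{1,1}` convex function whose
gradient maps `ℝⁿ` (and `cl E`) onto `K` and whose Laplacian is bounded by
`Per_K(E)/|E|`. Here the bounded connected open set `E` has smooth boundary
given by a defining function `f`, whose normalized gradient on `∂E` is the
outer unit normal. -/
theorem stmt_9 {n : ℕ} (hn : 1 ≤ n)
    (K : Set (Euc n)) (hKcp : IsCompact K) (hKcv : Convex ℝ K)
    (hK0 : (0 : Euc n) ∈ interior K)
    (E : Set (Euc n)) (hEo : IsOpen E) (hEb : Bornology.IsBounded E) (hEc : IsConnected E)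
    (f : Euc n → ℝ) (hf : ContDiff ℝ (⊤ : ℕ∞) f) (hEf : E = {x | f x < 0})
    (hfr : frontier E = {x | f x = 0}) (hfd : ∀ x ∈ frontier E, gradient f x ≠ 0) :
    ∃ φ : Euc n → ℝ, ConvexOn ℝ univ φ ∧
      ContDiff ℝ 1 φ ∧ (∃ L : NNReal, LipschitzWith L (fun x => gradient φ x)) ∧
      (fun x => gradient φ x) '' univ = K ∧
      (fun x => gradient φ x) '' closure E = K ∧
      ∀ᵐ x ∂(volume : Measure (Euc n)),
        DifferentiableAt ℝ (fderiv ℝ φ) x ∧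
        lapl φ x ≤
          (∫ y in frontier E, anisoNorm K (‖gradient f y‖⁻¹ • gradient f y)
              ∂(μH[(n : ℝ) - 1])) / (volume E).toReal := by
  exact main_thm hn K hKcp hKcv hK0 E hEo hEb hEc f hf hEf hfr hfd
end
end
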